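/- Levi's Enlargement Lemma: Let Σ be an arrangement of pseudolines in ℝ² and let a, b be two distinct points of ℝ² such that no pseudoline of Σ contains both a and b. Then there exists a pseudoline σ with a ∈ σ and b ∈ σ such that Σ ∪ {σ} is again an arrangement of pseudolines. -/

import Mathlib

open Set Topology

noncomputable section

abbrev Plane : Type := EuclideanSpace ℝ (Fin 2)

abbrev SpherePt : Type := ↥(Metric.sphere (0 : EuclideanSpace ℝ (Fin 3)) 1)

/-- `γ` crosses the curve `σ` at `p`: `p` lies on both sets, and in every neighbourhood of `p`
there is a smaller neighbourhood `V` such that `V \ σ` splits into two connected "sides",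
both of which meet `γ`. -/
def CrossesAt {X : Type*} [TopologicalSpace X] (σ γ : Set X) (p : X) : Prop :=
  p ∈ σ ∧ p ∈ γ ∧ ∀ U ∈ nhds p, ∃ V ∈ nhds p, V ⊆ U ∧
    ∃ C₁ C₂ : Set X, V \ σ = C₁ ∪ C₂ ∧ Disjoint C₁ C₂ ∧
      IsPreconnected C₁ ∧ IsPreconnected C₂ ∧ (γ ∩ C₁).Nonempty ∧ (γ ∩ C₂).Nonempty

/-- `Δ` is one of the closed regions ("closed discs") bounded by the curve `C`:
it is the union of `C` with a connected component of the complement of `C`. -/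
def IsClosedSide {X : Type*} [TopologicalSpace X] (C Δ : Set X) : Prop :=
  ∃ q, q ∉ C ∧ Δ = connectedComponentIn Cᶜ q ∪ C

/-- `Δ` is one of the open regions ("open discs") bounded by the curve `C`. -/
def IsOpenSide {X : Type*} [TopologicalSpace X] (C Δ : Set X) : Prop :=
  ∃ q, q ∉ C ∧ Δ = connectedComponentIn Cᶜ q

/-- `G` is a face (a connected component of the complement) of the point set `A`. -/
def IsFaceOf {X : Type*} [TopologicalSpace X] (A G : Set X) : Prop :=
  ∃ q, q ∉ A ∧ G = connectedComponentIn Aᶜ q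

/-- A good drawing of the complete graph `K_n` in the space `X`. -/
structure GoodDrawing (n : ℕ) (X : Type*) [TopologicalSpace X] where
  vtx : Fin n → X
  arc : Fin n → Fin n → Set X
  vtx_inj : Function.Injective vtx
  arc_symm : ∀ u v, arc u v = arc v u
  isArc : ∀ u v, u ≠ v → ∃ f : ℝ → X, ContinuousOn f (Set.Icc 0 1) ∧
    Set.InjOn f (Set.Icc 0 1) ∧ f 0 = vtx u ∧ f 1 = vtx v ∧ arc u v = f '' Set.Icc 0 1
  vtx_not_mem : ∀ u v w, u ≠ v → w ≠ u → w ≠ v → vtx w ∉ arc u v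
  adj_arcs : ∀ u v w, u ≠ v → u ≠ w → v ≠ w → arc u v ∩ arc u w = {vtx u}
  indep_arcs : ∀ u v x y : Fin n, u ≠ v → x ≠ y → u ≠ x → u ≠ y → v ≠ x → v ≠ y →
    (arc u v ∩ arc x y).Subsingleton ∧
      ∀ p ∈ arc u v ∩ arc x y,
        CrossesAt (arc u v) (arc x y) p ∧ CrossesAt (arc x y) (arc u v) p
  no_triple_pt : ∀ p : X, p ∉ Set.range vtx → ∀ u v x y s t : Fin n,
    u ≠ v → x ≠ y → s ≠ t →
    ({u, v} : Finset (Fin n)) ≠ {x, y} → ({u, v} : Finset (Fin n)) ≠ {s, t} →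
    ({x, y} : Finset (Fin n)) ≠ {s, t} →
    ¬(p ∈ arc u v ∧ p ∈ arc x y ∧ p ∈ arc s t)

namespace GoodDrawing

variable {n : ℕ} {X : Type*} [TopologicalSpace X]

/-- The point set of the subdrawing induced by the set `W` of vertices. -/
def image (D : GoodDrawing n X) (W : Set (Fin n)) : Set X :=
  (D.vtx '' W) ∪ ⋃ u ∈ W, ⋃ v ∈ W, ⋃ (_ : u ≠ v), D.arc u v

/-- The simple closed curve that is the drawing of the 3-cycle on `a`, `b`, `c`. -/
def tri (D : GoodDrawing n X) (a b c : Fin n) : Set X :=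
  D.arc a b ∪ D.arc b c ∪ D.arc a c

/-- `Δ` is convex: it contains the arc between any two vertex points it contains. -/
def ConvexDisc (D : GoodDrawing n X) (Δ : Set X) : Prop :=
  ∀ x y : Fin n, x ≠ y → D.vtx x ∈ Δ → D.vtx y ∈ Δ → D.arc x y ⊆ Δ

/-- `F` is a face of the drawing `D`. -/
def IsFace (D : GoodDrawing n X) (F : Set X) : Prop :=
  IsFaceOf (D.image Set.univ) F

/-- `D` is face-convex with outer face `F`. -/
def FaceConvex (D : GoodDrawing n X) (F : Set X) : Prop :=
  D.IsFace F ∧ ∀ a b c : Fin n, a ≠ b → a ≠ c → b ≠ c →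
    ∀ Δ : Set X, IsClosedSide (D.tri a b c) Δ → ¬F ⊆ Δ → D.ConvexDisc Δ

/-- `D` is a convex drawing: every 3-cycle has at least one convex closed side. -/
def IsConvex (D : GoodDrawing n X) : Prop :=
  ∀ a b c : Fin n, a ≠ b → a ≠ c → b ≠ c →
    ∃ Δ : Set X, IsClosedSide (D.tri a b c) Δ ∧ D.ConvexDisc Δ

/-- The closed curve drawn by the cycle `c 0, c 1, …, c (m-1), c 0` of `K_n`. -/
def cycCurve (D : GoodDrawing n X) {m : ℕ} [NeZero m] (c : Fin m → Fin n) : Set X :=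
  ⋃ i : Fin m, D.arc (c i) (c (i + 1))

/-- `Δ` is the convex hull `Δ_W` of the vertex set `W` (relative to the outer face `F`):
the face of the subdrawing `D[W]` containing `F` is bounded by a cycle `C_W` on vertices
of `W`, and `Δ` is the closed disc bounded by `D[C_W]` disjoint from `F`. -/
def IsHull (D : GoodDrawing n X) (F : Set X) (W : Set (Fin n)) (Δ : Set X) : Prop :=
  ∃ (m : ℕ) (c : Fin (m + 3) → Fin n), Function.Injective c ∧ (∀ i, c i ∈ W) ∧
    (∃ G : Set X, IsFaceOf (D.image W) G ∧ F ⊆ G ∧ frontier G = D.cycCurve c) ∧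
    IsClosedSide (D.cycCurve c) Δ ∧ Disjoint F Δ

/-- The data of the two local sides `C 0`, `C 1` of the arc `D[uv]` at an interior
point `p` of the arc. -/
def LocalSides (D : GoodDrawing n X) (u v : Fin n) (p : X) (C : Fin 2 → Set X) : Prop :=
  p ∈ D.arc u v ∧ p ≠ D.vtx u ∧ p ≠ D.vtx v ∧
    ∃ V ∈ nhds p, C 0 ∪ C 1 = V \ D.arc u v ∧ Disjoint (C 0) (C 1) ∧
      IsPreconnected (C 0) ∧ IsPreconnected (C 1) ∧ (C 0).Nonempty ∧ (C 1).Nonempty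

/-- Relative to the outer face `F` and the local sides `C` of `D[uv]` at `p`, the
vertex `w` is on side `i` of `uv`: the closed disc bounded by `D[{u,v,w}]` not
containing `F` lies locally on side `i` of `D[uv]`. -/
def OnSide (D : GoodDrawing n X) (F : Set X) (u v : Fin n) (p : X) (C : Fin 2 → Set X)
    (i : Fin 2) (w : Fin n) : Prop :=
  w ≠ u ∧ w ≠ v ∧ ∃ Δ : Set X, IsClosedSide (D.tri u v w) Δ ∧ ¬F ⊆ Δ ∧
    ∃ V ∈ nhds p, C i ∩ V ⊆ Δ

/-- `Side(uv, i)`: the set consisting of `u`, `v` and all vertices on side `i` of `uv`. -/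
def SideSet (D : GoodDrawing n X) (F : Set X) (u v : Fin n) (p : X) (C : Fin 2 → Set X)
    (i : Fin 2) : Set (Fin n) :=
  {u, v} ∪ {w : Fin n | D.OnSide F u v p C i w}

/-- The edge-arcs `D[uv]` and `D[xy]` cross: they share a non-vertex point. -/
def Crosses (D : GoodDrawing n X) (u v x y : Fin n) : Prop :=
  ∃ p : X, p ∈ D.arc u v ∩ D.arc x y ∧ p ∉ Set.range D.vtx

/-- The set of empty triangles of `D`: pairs of a 3-set of vertices together with an
open disc bounded by the corresponding triangle containing no vertex point. -/
def emptyTriangles (D : GoodDrawing n X) : Set (Finset (Fin n) × Set X) :=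
  {T | ∃ a b c : Fin n, a ≠ b ∧ a ≠ c ∧ b ≠ c ∧ T.1 = {a, b, c} ∧
    IsOpenSide (D.tri a b c) T.2 ∧ ∀ i, D.vtx i ∉ T.2}

end GoodDrawing

/-- A pseudoline in the plane. -/
def IsPseudoline (σ : Set Plane) : Prop :=
  IsClosed σ ∧ Nonempty (↥σ ≃ₜ ℝ) ∧ ¬IsPreconnected σᶜ

/-- An arrangement of pseudolines: any two distinct members meet in exactly one
point, at which they cross. -/
def IsArrangement (A : Finset (Set Plane)) : Prop :=
  (∀ σ ∈ A, IsPseudoline σ) ∧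
    ∀ σ ∈ A, ∀ τ ∈ A, σ ≠ τ →
      ∃ p : Plane, σ ∩ τ = {p} ∧ CrossesAt σ τ p ∧ CrossesAt τ σ p

/-- A planar good drawing of `K_n` is pseudolinear if some arrangement of pseudolines
contains, for each edge, a distinct pseudoline containing that edge-arc. -/
def GoodDrawing.Pseudolinear {n : ℕ} (D : GoodDrawing n Plane) : Prop :=
  ∃ (A : Finset (Set Plane)) (L : Fin n → Fin n → Set Plane), IsArrangement A ∧
    (∀ u v, u ≠ v → L u v ∈ A ∧ D.arc u v ⊆ L u v) ∧
    (∀ u v, L u v = L v u) ∧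
    ∀ u v x y : Fin n, u ≠ v → x ≠ y →
      ({u, v} : Finset (Fin n)) ≠ {x, y} → L u v ≠ L x y

/-!
Adding the point `∞` turns the pseudolines into simple closed curves on the sphere, any two of
which cross at `∞` and at one further point. Such a curve has exactly two sides: `z ↦ z - γ 0`
would otherwise have a continuous logarithm around the point `γ 0` of the curve, and the same
calculus of logarithms excludes a third side.

By induction on the number of curves, an intersection of sides is connected, also locally at each of
its boundary points. Hence two boundary points of a cell are joined by an arc inside the cell, and
points in the closures of two cells are joined by an arc that crosses once every curve separating
the cells and no other curve.

Let `a` and `b` each lie on some curve. Some curve runs to `∞` through a cell `G` such that every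
curve weakly separating `a` from `b` has `a` on its `G`-side, and its other end runs to `∞` through
the opposite cell. Arcs from `∞` to `a`, from `a` to `b` and from `b` to `∞`, starting in `G` and
ending in the opposite cell, then close up to a curve that crosses every given curve exactly once.
The general case reduces to this one by first adding a curve through `a` and then one through `b`;
such a curve is moved into position by a homeomorphism supported in a single cell.
-/

namespace Levi

open Filter OnePoint

/-! ### Points joined by a connected subset -/

section ConnectedIn

variable {X Y : Type*} [TopologicalSpace X] [TopologicalSpace Y] {W W' : Set X} {x y z : X}

/-- `x` and `y` lie in a common connected subset of `W`: the analogue of `JoinedIn` for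
connectedness in place of path-connectedness. -/
def ConnectedIn (W : Set X) (x y : X) : Prop :=
  ∃ C ⊆ W, IsPreconnected C ∧ x ∈ C ∧ y ∈ C

namespace ConnectedIn

lemma symm (h : ConnectedIn W x y) : ConnectedIn W y x := by
  obtain ⟨C, hCW, hC, hx, hy⟩ := h
  exact ⟨C, hCW, hC, hy, hx⟩

lemma trans (h : ConnectedIn W x y) (h' : ConnectedIn W y z) : ConnectedIn W x z := by
  obtain ⟨C, hCW, hC, hx, hy⟩ := h
  obtain ⟨D, hDW, hD, hy', hz⟩ := h'
  exact ⟨C ∪ D, union_subset hCW hDW, hC.union y hy hy' hD, Or.inl hx, Or.inr hz⟩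

lemma mono (h : ConnectedIn W x y) (hW : W ⊆ W') : ConnectedIn W' x y := by
  obtain ⟨C, hCW, hC⟩ := h
  exact ⟨C, hCW.trans hW, hC⟩

lemma mem_left (h : ConnectedIn W x y) : x ∈ W := by
  obtain ⟨C, hCW, -, hx, -⟩ := h
  exact hCW hx

lemma mem_right (h : ConnectedIn W x y) : y ∈ W :=
  h.symm.mem_left

lemma image (h : ConnectedIn W x y) {f : X → Y} (hf : ContinuousOn f W) :
    ConnectedIn (f '' W) (f x) (f y) := by
  obtain ⟨C, hCW, hC, hx, hy⟩ := h
  exact ⟨f '' C, image_mono hCW, hC.image f (hf.mono hCW), mem_image_of_mem _ hx,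
    mem_image_of_mem _ hy⟩

end ConnectedIn

lemma connectedIn_of_isPreconnected (h : IsPreconnected W) (hx : x ∈ W) (hy : y ∈ W) :
    ConnectedIn W x y :=
  ⟨W, subset_rfl, h, hx, hy⟩

lemma isPreconnected_of_forall_connectedIn (h : ∀ x ∈ W, ∀ y ∈ W, ConnectedIn W x y) :
    IsPreconnected W :=
  isPreconnected_of_forall_pair fun x hx y hy => by
    obtain ⟨C, hCW, hC, hxC, hyC⟩ := h x hx y hy
    exact ⟨C, hCW, hxC, hyC, hC⟩

lemma connectedIn_iff_mem_connectedComponentIn (hx : x ∈ W) :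
    ConnectedIn W x y ↔ y ∈ connectedComponentIn W x := by
  constructor
  · rintro ⟨C, hCW, hC, hxC, hyC⟩
    exact hC.subset_connectedComponentIn hxC hCW hyC
  · intro h
    exact ⟨_, connectedComponentIn_subset _ _, isPreconnected_connectedComponentIn,
      mem_connectedComponentIn hx, h⟩

lemma closure_connectedComponentIn_inter_subset :
    closure (connectedComponentIn W x) ∩ W ⊆ connectedComponentIn W x := by
  rintro z ⟨hz, hzW⟩
  by_cases hx : x ∈ W
  · have hpre : IsPreconnected (insert z (connectedComponentIn W x)) :=
      isPreconnected_connectedComponentIn.subset_closure (subset_insert _ _)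
        (insert_subset hz subset_closure)
    exact hpre.subset_connectedComponentIn (mem_insert_of_mem _ (mem_connectedComponentIn hx))
      (insert_subset hzW (connectedComponentIn_subset _ _)) (mem_insert _ _)
  · simp [connectedComponentIn_eq_empty hx] at hz

end ConnectedIn

/-! ### The topology of the sphere -/

/-- The one-point compactification of the plane as the round sphere. -/
def sphereHomeomorph : OnePoint ℂ ≃ₜ Metric.sphere (0 : EuclideanSpace ℝ (Fin 3)) 1 :=
  onePointEquivSphereOfFinrankEq (V := ℂ) (ι := Fin 3) (by simp [Complex.finrank_real_complex])

instance : TopologicalSpace.MetrizableSpace (OnePoint ℂ) :=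
  sphereHomeomorph.isEmbedding.metrizableSpace

instance : LocallyPathConnectedSpace (OnePoint ℂ) := by
  have : Fact (Module.finrank ℝ (EuclideanSpace ℝ (Fin 3)) = 2 + 1) := ⟨by simp⟩
  have : LocallyPathConnectedSpace (Metric.sphere (0 : EuclideanSpace ℝ (Fin 3)) 1) :=
    ChartedSpace.locallyPathConnectedSpace (EuclideanSpace ℝ (Fin 2)) _
  exact sphereHomeomorph.isOpenEmbedding.locallyPathConnectedSpace

lemma exists_homeomorph_apply_eq_infty (p : OnePoint ℂ) :
    ∃ T : OnePoint ℂ ≃ₜ OnePoint ℂ, T p = ∞ := by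
  set v := sphereHomeomorph p with hv
  set w := sphereHomeomorph ∞ with hw
  have hnorm : ‖(v : EuclideanSpace ℝ (Fin 3))‖ = ‖(w : EuclideanSpace ℝ (Fin 3))‖ := by
    rw [mem_sphere_zero_iff_norm.1 v.2, mem_sphere_zero_iff_norm.1 w.2]
  let ρ := (Submodule.span ℝ {(v : EuclideanSpace ℝ (Fin 3)) - w})ᗮ.reflection
  let R := ρ.toHomeomorph.subtype (p := (· ∈ Metric.sphere 0 1)) (q := (· ∈ Metric.sphere 0 1))
    (by intro x; simp [mem_sphere_iff_norm])
  have hR : R v = w := Subtype.ext (Submodule.reflection_sub hnorm)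
  refine ⟨(sphereHomeomorph.trans R).trans sphereHomeomorph.symm, ?_⟩
  change sphereHomeomorph.symm (R (sphereHomeomorph p)) = ∞
  rw [← hv, hR, hw, Homeomorph.symm_apply_apply]

lemma exists_le_dist_of_isClosed {X : Type*} [PseudoMetricSpace X] {K : Set (OnePoint X)}
    (hK : IsClosed K) {x : X} (hx : (x : OnePoint X) ∉ K) :
    ∃ r > 0, ∀ z : X, (z : OnePoint X) ∈ K → r ≤ dist z x := by
  obtain ⟨r, hr, hball⟩ :=
    Metric.isOpen_iff.1 (hK.isOpen_compl.preimage continuous_coe) x hx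
  exact ⟨r, hr, fun z hz => not_lt.1 fun hlt => hball (Metric.mem_ball.2 hlt) hz⟩

/-! ### Continuous logarithms -/

section HasLogOn

variable {X : Type*} [TopologicalSpace X] {K : Set X} {f g : X → ℂ}

/-- `f` has a continuous logarithm on `K`. -/
def HasLogOn (f : X → ℂ) (K : Set X) : Prop :=
  ∃ l : X → ℂ, ContinuousOn l K ∧ ∀ z ∈ K, Complex.exp (l z) = f z

lemma HasLogOn.mul (hf : HasLogOn f K) (hg : HasLogOn g K) :
    HasLogOn (fun z => f z * g z) K := by
  obtain ⟨u, hu, hu'⟩ := hf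
  obtain ⟨v, hv, hv'⟩ := hg
  exact ⟨fun z => u z + v z, hu.add hv, fun z hz => by rw [Complex.exp_add, hu' z hz, hv' z hz]⟩

lemma HasLogOn.inv (hf : HasLogOn f K) : HasLogOn (fun z => (f z)⁻¹) K := by
  obtain ⟨u, hu, hu'⟩ := hf
  exact ⟨fun z => -u z, hu.neg, fun z hz => by rw [Complex.exp_neg, hu' z hz]⟩

lemma HasLogOn.congr (hf : HasLogOn f K) (h : ∀ z ∈ K, f z = g z) : HasLogOn g K := by
  obtain ⟨u, hu, hu'⟩ := hf
  exact ⟨u, hu, fun z hz => by rw [hu' z hz, h z hz]⟩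

lemma apply_eq_of_exp_eq_const {S : Set X} (hS : IsPreconnected S) (hf : ContinuousOn f S) {c : ℂ}
    (hc : ∀ z ∈ S, Complex.exp (f z) = c) {x y : X} (hx : x ∈ S) (hy : y ∈ S) : f x = f y := by
  have hcount : (f '' S).Countable := by
    refine (countable_range fun n : ℤ => f x + n * (2 * Real.pi * Complex.I)).mono ?_
    rintro _ ⟨z, hz, rfl⟩
    obtain ⟨n, hn⟩ := Complex.exp_eq_exp_iff_exists_int.1 ((hc z hz).trans (hc x hx).symm)
    exact ⟨n, hn.symm⟩
  exact hcount.isTotallyDisconnected (f '' S) subset_rfl (hS.image f hf) (mem_image_of_mem f hx)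
    (mem_image_of_mem f hy)

/-- Logarithms on two sets differ by a constant on the connected intersection, hence can be patched
together. -/
lemma HasLogOn.union_of_forall_continuousOn {K₁ K₂ : Set X}
    (hglue : ∀ l : X → ℂ, ContinuousOn l K₁ → ContinuousOn l K₂ → ContinuousOn l (K₁ ∪ K₂))
    (hpre : IsPreconnected (K₁ ∩ K₂)) (h₁ : HasLogOn f K₁) (h₂ : HasLogOn f K₂) :
    HasLogOn f (K₁ ∪ K₂) := by
  classical
  obtain ⟨l₁, hl₁, he₁⟩ := h₁
  obtain ⟨l₂, hl₂, he₂⟩ := h₂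
  have hexp : ∀ z ∈ K₁ ∩ K₂, Complex.exp (l₁ z - l₂ z) = 1 := fun z hz => by
    rw [Complex.exp_sub, he₁ z hz.1, ← he₂ z hz.2, div_self (Complex.exp_ne_zero _)]
  obtain ⟨c, hc, hcz⟩ : ∃ c, Complex.exp c = 1 ∧ ∀ z ∈ K₁ ∩ K₂, l₁ z = l₂ z + c := by
    rcases (K₁ ∩ K₂).eq_empty_or_nonempty with hempty | ⟨p, hp⟩
    · exact ⟨0, Complex.exp_zero, by simp [hempty]⟩
    · refine ⟨l₁ p - l₂ p, hexp p hp, fun z hz => ?_⟩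
      have hconst := apply_eq_of_exp_eq_const hpre
        ((hl₁.mono inter_subset_left).sub (hl₂.mono inter_subset_right)) hexp hz hp
      simp only [Pi.sub_apply] at hconst
      rw [← hconst, add_sub_cancel]
  refine ⟨fun z => if z ∈ K₁ then l₁ z else l₂ z + c, ?_, fun z hz => ?_⟩
  · refine hglue _ (hl₁.congr fun z hz => by simp [hz])
      ((hl₂.add (continuousOn_const (c := c))).congr fun z hz => ?_)
    by_cases hz₁ : z ∈ K₁
    · simp [hz₁, hcz z ⟨hz₁, hz⟩]
    · simp [hz₁]
  · by_cases hz₁ : z ∈ K₁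
    · simp [hz₁, he₁ z hz₁]
    · simp [hz₁, Complex.exp_add, hc, he₂ z (hz.resolve_left hz₁)]

lemma HasLogOn.union_of_isClosed {K₁ K₂ : Set X} (hK₁ : IsClosed K₁) (hK₂ : IsClosed K₂)
    (hpre : IsPreconnected (K₁ ∩ K₂)) (h₁ : HasLogOn f K₁) (h₂ : HasLogOn f K₂) :
    HasLogOn f (K₁ ∪ K₂) :=
  HasLogOn.union_of_forall_continuousOn
    (fun _ hl₁ hl₂ => hl₁.union_of_isClosed hl₂ hK₁ hK₂) hpre h₁ h₂

lemma HasLogOn.union_of_isOpen {K₁ K₂ : Set X} (hK₁ : IsOpen K₁) (hK₂ : IsOpen K₂)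
    (hpre : IsPreconnected (K₁ ∩ K₂)) (h₁ : HasLogOn f K₁) (h₂ : HasLogOn f K₂) :
    HasLogOn f (K₁ ∪ K₂) :=
  HasLogOn.union_of_forall_continuousOn
    (fun _ hl₁ hl₂ => hl₁.union_of_isOpen hl₂ hK₁ hK₂) hpre h₁ h₂

lemma hasLogOn_of_exists_subtype (h : ∃ l : K → ℂ, Continuous l ∧ ∀ z, Complex.exp (l z) = f z) :
    HasLogOn f K := by
  classical
  obtain ⟨l, hl, hexp⟩ := h
  refine ⟨fun z => if hz : z ∈ K then l ⟨z, hz⟩ else 0, ?_, fun z hz => ?_⟩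
  · rw [continuousOn_iff_continuous_domRestrict]
    exact hl.congr fun z => by simp [z.2]
  · simp [hz, hexp]

lemma exists_log_jump {K₁ K₂ : Set X} {u v : X} (hu : u ∈ K₁ ∩ K₂) (hv : v ∈ K₁ ∩ K₂)
    (h₁ : HasLogOn f K₁) (h₂ : HasLogOn f K₂) :
    ∃ (l₁ l₂ : X → ℂ) (p : ℤ), ContinuousOn l₁ K₁ ∧ ContinuousOn l₂ K₂ ∧
      (∀ z ∈ K₁, Complex.exp (l₁ z) = f z) ∧ (∀ z ∈ K₂, Complex.exp (l₂ z) = f z) ∧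
      l₁ u = l₂ u ∧ l₁ v = l₂ v + p * (2 * Real.pi * Complex.I) := by
  obtain ⟨l₁, hl₁, he₁⟩ := h₁
  obtain ⟨l₂, hl₂, he₂⟩ := h₂
  have hexp : ∀ z ∈ K₂, Complex.exp (l₂ z + (l₁ u - l₂ u)) = f z := fun z hz => by
    rw [Complex.exp_add, Complex.exp_sub, he₁ u hu.1, ← he₂ u hu.2,
      div_self (Complex.exp_ne_zero _), mul_one, he₂ z hz]
  obtain ⟨p, hp⟩ := Complex.exp_eq_exp_iff_exists_int.1 ((he₁ v hv.1).trans (hexp v hv.2).symm)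
  exact ⟨l₁, fun z => l₂ z + (l₁ u - l₂ u), p, hl₁, hl₂.add continuousOn_const, he₁, hexp,
    (add_sub_cancel _ _).symm, hp⟩

/-- Two arcs with common endpoints `u` and `v` carry one integer-valued obstruction for each
function; two such integers satisfy a linear relation. -/
lemma exists_hasLogOn_zpow_mul_zpow {K₁ K₂ : Set X} (hK₁ : IsClosed K₁) (hK₂ : IsClosed K₂)
    {u v : X} (hu : u ∈ K₁ ∩ K₂) (hv : v ∈ K₁ ∩ K₂) (huv : K₁ ∩ K₂ ⊆ {u, v})
    (hf₁ : HasLogOn f K₁) (hf₂ : HasLogOn f K₂) (hg₁ : HasLogOn g K₁) (hg₂ : HasLogOn g K₂) :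
    ∃ m n : ℤ, (m ≠ 0 ∨ n ≠ 0) ∧ HasLogOn (fun z => f z ^ m * g z ^ n) (K₁ ∪ K₂) := by
  classical
  obtain ⟨a₁, a₂, p, ha₁, ha₂, hea₁, hea₂, hau, hav⟩ := exists_log_jump hu hv hf₁ hf₂
  obtain ⟨b₁, b₂, q, hb₁, hb₂, heb₁, heb₂, hbu, hbv⟩ := exists_log_jump hu hv hg₁ hg₂
  obtain ⟨m, n, hmn, hrel⟩ : ∃ m n : ℤ, (m ≠ 0 ∨ n ≠ 0) ∧ (m : ℂ) * p + n * q = 0 := by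
    by_cases hp : p = 0
    · exact ⟨1, 0, Or.inl one_ne_zero, by simp [hp]⟩
    · exact ⟨q, -p, Or.inr (neg_ne_zero.2 hp), by push_cast; ring⟩
  refine ⟨m, n, hmn, fun z => if z ∈ K₁ then m * a₁ z + n * b₁ z else m * a₂ z + n * b₂ z,
    ContinuousOn.union_of_isClosed ?_ ?_ hK₁ hK₂, fun z hz => ?_⟩
  · exact (show ContinuousOn (fun z => m * a₁ z + n * b₁ z) K₁ by fun_prop).congr
      fun z hz => by simp [hz]
  · refine (show ContinuousOn (fun z => m * a₂ z + n * b₂ z) K₂ by fun_prop).congr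
      fun z hz => ?_
    by_cases hz₁ : z ∈ K₁
    · rcases huv ⟨hz₁, hz⟩ with rfl | rfl
      · simp only [hz₁, if_true, hau, hbu]
      · simp only [hz₁, if_true, hav, hbv]
        linear_combination (2 * Real.pi * Complex.I) * hrel
    · simp [hz₁]
  · by_cases hz₁ : z ∈ K₁
    · simp only [hz₁, if_true, Complex.exp_add, Complex.exp_int_mul, hea₁ z hz₁, heb₁ z hz₁]
    · have hz₂ := hz.resolve_left hz₁
      simp only [hz₁, if_false, Complex.exp_add, Complex.exp_int_mul, hea₂ z hz₂, heb₂ z hz₂]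

lemma exists_continuous_exp_eq [SimplyConnectedSpace X] [LocallyPathConnectedSpace X]
    (hf : Continuous f) (h0 : ∀ x, f x ≠ 0) :
    ∃ l : X → ℂ, Continuous l ∧ ∀ x, Complex.exp (l x) = f x := by
  obtain ⟨x₀⟩ : Nonempty X := inferInstance
  obtain ⟨l, ⟨-, hl⟩, -⟩ := Complex.isCoveringMapOn_exp.existsUnique_continuousMap_lifts
    (f := ⟨f, hf⟩) (a₀ := x₀) (e₀ := Complex.log (f x₀)) (Complex.exp_log (h0 x₀)) h0
  exact ⟨l, l.continuous, fun x => congrFun hl x⟩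

lemma exists_continuous_exp_eq_of_homotopy {H : unitInterval × X → ℂ} (hH : Continuous H)
    (h0 : ∀ q, H q ≠ 0) (hstart : ∀ x, H (0, x) = 1) :
    ∃ l : X → ℂ, Continuous l ∧ ∀ x, Complex.exp (l x) = H (1, x) := by
  let H' : C(unitInterval × X, {z : ℂ // z ≠ 0}) := ⟨fun q => ⟨H q, h0 q⟩, by fun_prop⟩
  have hH' : ∀ x, H' (0, x) = (⟨_, Complex.exp_ne_zero (ContinuousMap.const X (0 : ℂ) x)⟩ :
      {z : ℂ // z ≠ 0}) := fun x => by
    ext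
    simp [H', hstart]
  have hlift := Complex.isCoveringMap_exp.liftHomotopy_lifts H' (ContinuousMap.const X 0) hH'
  exact ⟨fun x => Complex.isCoveringMap_exp.liftHomotopy H' (ContinuousMap.const X 0) hH' (1, x),
    by fun_prop, fun x => congrArg Subtype.val (congrFun hlift (1, x))⟩

lemma hasLogOn_range_of_isClosedEmbedding {T : Type*} [TopologicalSpace T] [SimplyConnectedSpace T]
    [LocallyPathConnectedSpace T] {p : T → X} (hp : IsClosedEmbedding p)
    (hf : ContinuousOn f (range p)) (h0 : ∀ z ∈ range p, f z ≠ 0) : HasLogOn f (range p) := by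
  obtain ⟨g, hg, hexp⟩ := exists_continuous_exp_eq (f := fun t => f (p t))
    (hf.comp_continuous hp.continuous mem_range_self) fun t => h0 _ (mem_range_self t)
  let e := hp.isEmbedding.toHomeomorph
  refine hasLogOn_of_exists_subtype ⟨g ∘ e.symm, hg.comp e.symm.continuous, fun z => ?_⟩
  obtain ⟨t, rfl⟩ := e.surjective z
  rw [Function.comp_apply, Homeomorph.symm_apply_apply, hexp]
  rfl

end HasLogOn

/-! ### The functions `(z - y) / (z - x)` -/

/-- The rational function `(z - y) / (z - x)` on the sphere, with value `1` at `∞`. At its pole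
`x` it has the junk value `0`. -/
def ratio (x y : ℂ) (z : OnePoint ℂ) : ℂ :=
  z.elim 1 fun z => (z - y) / (z - x)

@[simp]
lemma ratio_infty (x y : ℂ) : ratio x y ∞ = 1 :=
  rfl

@[simp]
lemma ratio_coe (x y z : ℂ) : ratio x y (z : OnePoint ℂ) = (z - y) / (z - x) :=
  rfl

lemma tendsto_sub_div_sub_cocompact (x y : ℂ) :
    Tendsto (fun z : ℂ => (z - y) / (z - x)) (cocompact ℂ) (𝓝 1) := by
  have hinv : Tendsto (fun z : ℂ => (z - x)⁻¹) (cocompact ℂ) (𝓝 0) := by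
    have hsub : Tendsto (fun z : ℂ => z - x) (cocompact ℂ) (cocompact ℂ) :=
      (Homeomorph.subRight x).isClosedEmbedding.tendsto_cocompact
    rw [← Metric.cobounded_eq_cocompact] at hsub ⊢
    exact tendsto_inv₀_cobounded.comp hsub
  have hlim : Tendsto (fun z : ℂ => 1 + (x - y) * (z - x)⁻¹) (cocompact ℂ) (𝓝 1) := by
    simpa using (hinv.const_mul (x - y)).const_add 1
  refine hlim.congr' ?_
  filter_upwards [(isCompact_singleton (x := x)).compl_mem_cocompact] with z hz
  have : z - x ≠ 0 := sub_ne_zero.2 hz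
  field_simp
  ring

lemma continuousAt_ratio (x y : ℂ) {z : OnePoint ℂ} (hz : z ≠ x) : ContinuousAt (ratio x y) z := by
  induction z using OnePoint.rec with
  | infty =>
    rw [OnePoint.continuousAt_infty', coclosedCompact_eq_cocompact]
    exact tendsto_sub_div_sub_cocompact x y
  | coe z =>
    rw [OnePoint.continuousAt_coe]
    have : z - x ≠ 0 := sub_ne_zero.2 fun h => hz (by rw [h])
    change ContinuousAt (fun z : ℂ => (z - y) / (z - x)) z
    fun_prop (disch := assumption)

lemma ratio_ne_zero {x y : ℂ} {z : OnePoint ℂ} (hx : z ≠ x) (hy : z ≠ y) : ratio x y z ≠ 0 := by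
  induction z using OnePoint.rec with
  | infty => simp
  | coe z =>
    have hzx : z - x ≠ 0 := sub_ne_zero.2 fun h => hx (by rw [h])
    have hzy : z - y ≠ 0 := sub_ne_zero.2 fun h => hy (by rw [h])
    simp [hzx, hzy]

lemma ratio_mul_ratio (x y w : ℂ) {z : OnePoint ℂ} (hz : z ≠ y) :
    ratio x y z * ratio y w z = ratio x w z := by
  induction z using OnePoint.rec with
  | infty => simp
  | coe z =>
    have : z - y ≠ 0 := sub_ne_zero.2 fun h => hz (by rw [h])
    simp only [ratio_coe]
    field_simp

lemma inv_ratio (x y : ℂ) (z : OnePoint ℂ) : (ratio x y z)⁻¹ = ratio y x z := by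
  induction z using OnePoint.rec with
  | infty => simp
  | coe z => simp

section LogRatio

variable {K : Set (OnePoint ℂ)} {x y : ℂ}

lemma hasLogOn_ratio_of_dist_lt {r : ℝ} (hK : ∀ z : ℂ, (z : OnePoint ℂ) ∈ K → r ≤ dist z x)
    (hy : dist y x < r) : HasLogOn (ratio x y) K := by
  have hne : ∀ z : ℂ, (z : OnePoint ℂ) ∈ K → z - x ≠ 0 := fun z hz h => by
    have := hK z hz
    rw [sub_eq_zero.1 h, dist_self] at this
    linarith [dist_nonneg (x := y) (y := x)]
  have hslit : ∀ z ∈ K, ratio x y z ∈ Complex.slitPlane := by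
    intro z hz
    induction z using OnePoint.rec with
    | infty => simp
    | coe z =>
      have hzx := hne z hz
      have hlt : ‖(x - y) / (z - x)‖ < 1 := by
        rw [norm_div, div_lt_one (norm_pos_iff.2 hzx), ← dist_eq_norm, ← dist_eq_norm, dist_comm]
        exact hy.trans_le (hK z hz)
      have heq : ratio x y z = 1 + (x - y) / (z - x) := by
        rw [ratio_coe]
        field_simp
        ring
      exact heq ▸ Complex.mem_slitPlane_of_norm_lt_one hlt
  refine ⟨fun z => Complex.log (ratio x y z), fun z hz => ?_, fun z hz =>
    Complex.exp_log (Complex.slitPlane_ne_zero (hslit z hz))⟩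
  refine ((continuousAt_ratio x y ?_).clog (hslit z hz)).continuousWithinAt
  rintro rfl
  exact hne x hz (sub_self x)

lemma hasLogOn_ratio_of_connectedIn (hK : IsClosed K) (hinf : ∞ ∈ K)
    (h : ConnectedIn Kᶜ (x : OnePoint ℂ) y) : HasLogOn (ratio x y) K := by
  obtain ⟨C, hCK, hC, hx, hy⟩ := h
  have hrange : C ⊆ range ((↑) : ℂ → OnePoint ℂ) := fun z hz =>
    ne_infty_iff_exists.1 fun h => hCK hz (h ▸ hinf)
  have hpre : IsPreconnected ((↑) ⁻¹' C : Set ℂ) := by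
    rw [← isOpenEmbedding_coe.isInducing.isPreconnected_image, image_preimage_eq_of_subset hrange]
    exact hC
  refine hpre.induction₂ (fun x y => HasLogOn (ratio x y) K) (fun x hx => ?_)
    (fun x y z _ hy _ hxy hyz => (hxy.mul hyz).congr fun w hw => ratio_mul_ratio x y z ?_)
    (fun x y _ _ hxy => hxy.inv.congr fun w _ => inv_ratio x y w) hx hy
  · obtain ⟨r, hr, hdist⟩ := exists_le_dist_of_isClosed hK (hCK hx)
    exact mem_nhdsWithin_of_mem_nhds
      (mem_of_superset (Metric.ball_mem_nhds x hr) fun y hy => hasLogOn_ratio_of_dist_lt hdist hy)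
  · rintro rfl
    exact hCK hy hw

end LogRatio

/-! ### Eilenberg's criterion and Janiszewski's theorem -/

lemma eq_zero_of_exp_eq_zpow_on_sphere {R : ℝ} (hR : 0 < R) {m : ℤ} {l : ℂ → ℂ}
    (hl : ContinuousOn l (Metric.sphere 0 R))
    (hexp : ∀ z ∈ Metric.sphere (0 : ℂ) R, Complex.exp (l z) = z ^ m) : m = 0 := by
  have hmem : ∀ θ : ℝ, (R : ℂ) * Complex.exp (θ * Complex.I) ∈ Metric.sphere (0 : ℂ) R := by
    intro θ
    rw [mem_sphere_iff_norm, sub_zero, norm_mul, Complex.norm_exp_ofReal_mul_I]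
    simp [abs_of_pos hR]
  have hcont : ContinuousOn (fun θ : ℝ => l ((R : ℂ) * Complex.exp (θ * Complex.I)) -
      m * (θ * Complex.I)) univ :=
    (hl.comp (Continuous.continuousOn (by fun_prop)) fun θ _ => hmem θ).sub
      (Continuous.continuousOn (by fun_prop))
  have hperiod := apply_eq_of_exp_eq_const isPreconnected_univ hcont (c := (R : ℂ) ^ m)
    (fun θ _ => by
      rw [Complex.exp_sub, hexp _ (hmem θ), mul_zpow, Complex.exp_int_mul]
      field_simp [Complex.exp_ne_zero]) (mem_univ 0) (mem_univ (2 * Real.pi))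
  simp only [Complex.ofReal_mul, Complex.ofReal_ofNat, Complex.exp_two_pi_mul_I,
    Complex.ofReal_zero, zero_mul, Complex.exp_zero, mul_zero, sub_zero] at hperiod
  have hzero : (m : ℂ) * (2 * Real.pi * Complex.I) = 0 := by linear_combination hperiod
  exact_mod_cast (mul_eq_zero.1 hzero).resolve_right Complex.two_pi_I_ne_zero

/-- A nonvanishing function on the plane has a logarithm, so it cannot wind around `0` at `∞`. -/
lemma eq_zero_of_tendsto_div_zpow {φ : ℂ → ℂ} (hφ : Continuous φ) (h0 : ∀ z, φ z ≠ 0) {m : ℤ}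
    (hlim : Tendsto (fun z => φ z / z ^ m) (cocompact ℂ) (𝓝 1)) : m = 0 := by
  obtain ⟨l, hl, hexp⟩ := exists_continuous_exp_eq hφ h0
  have hslit : ∀ᶠ z in cocompact ℂ, φ z / z ^ m ∈ Complex.slitPlane :=
    hlim.eventually (Complex.isOpen_slitPlane.mem_nhds (by simp))
  rw [← Metric.cobounded_eq_cocompact] at hslit
  obtain ⟨R, -, hR⟩ := (hasBasis_cobounded_norm (E := ℂ)).eventually_iff.1 hslit
  have hpos : 0 < max R 1 := lt_max_of_lt_right one_pos
  have hnorm : ∀ z ∈ Metric.sphere (0 : ℂ) (max R 1), ‖z‖ = max R 1 := fun z hz => by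
    simpa using hz
  have hne : ∀ z ∈ Metric.sphere (0 : ℂ) (max R 1), z ≠ 0 := fun z hz =>
    norm_pos_iff.1 (hnorm z hz ▸ hpos)
  have hsphere : ∀ z ∈ Metric.sphere (0 : ℂ) (max R 1), φ z / z ^ m ∈ Complex.slitPlane :=
    fun z hz => hR ((le_max_left R 1).trans_eq (hnorm z hz).symm)
  refine eq_zero_of_exp_eq_zpow_on_sphere hpos (l := fun z => l z - Complex.log (φ z / z ^ m))
    (hl.continuousOn.sub (ContinuousOn.clog (hφ.continuousOn.div (ContinuousOn.zpow₀
      continuousOn_id _ fun z hz => Or.inl (hne z hz)) fun z hz => zpow_ne_zero _ (hne z hz))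
      hsphere)) fun z hz => ?_
  rw [Complex.exp_sub, hexp, Complex.exp_log (Complex.slitPlane_ne_zero (hsphere z hz))]
  have := h0 z
  field_simp

lemma eq_zero_of_piecewise_tendsto_div_zpow {U : Set ℂ} (hU : IsOpen U) {φ ψ : ℂ → ℂ} {m : ℤ}
    (hφ : ContinuousOn φ (closure U)) (hψ : ContinuousOn ψ Uᶜ)
    (hφ0 : ∀ z ∈ closure U, φ z ≠ 0) (hψ0 : ∀ z ∉ U, ψ z ≠ 0)
    (hφψ : ∀ z ∈ frontier U, φ z = ψ z)
    (hφlim : Tendsto (fun z => φ z / z ^ m) (cocompact ℂ) (𝓝 1))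
    (hψlim : Tendsto (fun z => ψ z / z ^ m) (cocompact ℂ) (𝓝 1)) : m = 0 := by
  classical
  refine eq_zero_of_tendsto_div_zpow (φ := U.piecewise φ ψ) ?_ (fun z => ?_) ?_
  · exact continuous_piecewise hφψ hφ (hU.isClosed_compl.closure_eq.symm ▸ hψ)
  · by_cases hz : z ∈ U
    · simpa [hz] using hφ0 z (subset_closure hz)
    · simpa [hz] using hψ0 z hz
  · refine (Tendsto.if' (p := fun z => z ∈ U) hφlim hψlim).congr fun z => ?_
    by_cases hz : z ∈ U <;> simp [hz]

lemma tendsto_mul_zpow_div_zpow {g : ℂ → ℂ} (hg : Tendsto g (cocompact ℂ) (𝓝 1)) (x w : ℂ)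
    (m n : ℤ) :
    Tendsto (fun z => g z * (z - x) ^ (m + n) * (z - w) ^ (-n) / z ^ m) (cocompact ℂ) (𝓝 1) := by
  have hlim : ∀ (a : ℂ) (k : ℤ), Tendsto (fun z : ℂ => ((z - a) / z) ^ k) (cocompact ℂ) (𝓝 1) :=
    fun a k => by
      simpa using (tendsto_sub_div_sub_cocompact 0 a).zpow₀ k (Or.inl one_ne_zero)
  have hprod := (hg.mul (hlim x (m + n))).mul (hlim w (-n))
  simp only [mul_one] at hprod
  refine hprod.congr' ?_
  filter_upwards [(isCompact_singleton (x := (0 : ℂ))).compl_mem_cocompact] with z (hz : z ≠ 0)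
  rw [div_zpow, div_zpow, zpow_neg z, zpow_add₀ hz]
  have := zpow_ne_zero m hz
  have := zpow_ne_zero n hz
  field_simp

section Component

variable {X : Type*} [TopologicalSpace X] {K : Set (OnePoint X)} {y : OnePoint X}

lemma coe_mem_closure_of_mem_closure_preimage {V : Set (OnePoint X)} {z : X}
    (hz : z ∈ closure ((↑) ⁻¹' V : Set X)) : (z : OnePoint X) ∈ closure V :=
  map_mem_closure continuous_coe hz fun _ h => h

lemma ne_of_mem_closure_preimage_component {a z : X} (ha : (a : OnePoint X) ∉ K) (hy : y ∉ K)
    (hya : ¬ ConnectedIn Kᶜ y a)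
    (hz : z ∈ closure ((↑) ⁻¹' connectedComponentIn Kᶜ y : Set X)) : z ≠ a := by
  rintro rfl
  rw [connectedIn_iff_mem_connectedComponentIn hy] at hya
  exact hya (closure_connectedComponentIn_inter_subset
    ⟨coe_mem_closure_of_mem_closure_preimage hz, ha⟩)

lemma coe_mem_of_mem_frontier_preimage_component [LocallyConnectedSpace (OnePoint X)]
    (hK : IsClosed K) {z : X}
    (hz : z ∈ frontier ((↑) ⁻¹' connectedComponentIn Kᶜ y : Set X)) : (z : OnePoint X) ∈ K := by
  rw [(hK.isOpen_compl.connectedComponentIn.preimage continuous_coe).frontier_eq] at hz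
  by_contra hzK
  exact hz.2 (closure_connectedComponentIn_inter_subset
    ⟨coe_mem_closure_of_mem_closure_preimage hz.1, hzK⟩)

end Component

/-- Eilenberg's criterion. Extend the logarithm on `K` to all of the sphere: on the component `V`
of `y` this gives a function without zeros that agrees on `∂V` with `(z - y) ^ m`, so that
gluing it to `(z - y) ^ m` produces a nonvanishing function on the plane that behaves as `z ^ m`
at infinity. -/
lemma eq_zero_of_hasLogOn_zpow_ratio {K : Set (OnePoint ℂ)} (hK : IsClosed K) (hinf : ∞ ∈ K)
    {x y w : ℂ} {m n : ℤ} (hx : (x : OnePoint ℂ) ∉ K) (hy : (y : OnePoint ℂ) ∉ K)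
    (hw : (w : OnePoint ℂ) ∉ K) (hlog : HasLogOn (fun z => ratio x y z ^ m * ratio x w z ^ n) K)
    (hyx : ¬ ConnectedIn Kᶜ (y : OnePoint ℂ) x) (hyw : ¬ ConnectedIn Kᶜ (y : OnePoint ℂ) w) :
    m = 0 := by
  obtain ⟨l, hl, hexp⟩ := hlog
  obtain ⟨L, hL⟩ := ContinuousMap.exists_restrict_eq hK ⟨K.domRestrict l, hl.domRestrict⟩
  have hexpL : ∀ z ∈ K, Complex.exp (L z) = ratio x y z ^ m * ratio x w z ^ n := fun z hz =>
    (congrArg Complex.exp (congrArg (fun f => f ⟨z, hz⟩) hL)).trans (hexp z hz)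
  have hexpc : Continuous fun z : ℂ => Complex.exp (L z) :=
    Complex.continuous_exp.comp (L.continuous.comp continuous_coe)
  have hlimL : Tendsto (fun z : ℂ => Complex.exp (L z)) (cocompact ℂ) (𝓝 1) := by
    have hcont : ContinuousAt (fun z : OnePoint ℂ => Complex.exp (L z)) ∞ := by fun_prop
    rw [OnePoint.continuousAt_infty', coclosedCompact_eq_cocompact, hexpL ∞ hinf] at hcont
    simpa [Function.comp_def] using hcont
  set U : Set ℂ := (↑) ⁻¹' connectedComponentIn Kᶜ (y : OnePoint ℂ)
  have hU : IsOpen U := hK.isOpen_compl.connectedComponentIn.preimage continuous_coe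
  have hzx : ∀ z ∈ closure U, z - x ≠ 0 := fun z hz =>
    sub_ne_zero.2 (ne_of_mem_closure_preimage_component hx hy hyx hz)
  have hzw : ∀ z ∈ closure U, z - w ≠ 0 := fun z hz =>
    sub_ne_zero.2 (ne_of_mem_closure_preimage_component hw hy hyw hz)
  have hzy : ∀ z ∉ U, z - y ≠ 0 := fun z hz h =>
    hz (sub_eq_zero.1 h ▸ mem_connectedComponentIn hy)
  refine eq_zero_of_piecewise_tendsto_div_zpow hU (ψ := fun z => (z - y) ^ m)
    (φ := fun z => Complex.exp (L z) * (z - x) ^ (m + n) * (z - w) ^ (-n))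
    ((hexpc.continuousOn.mul (ContinuousOn.zpow₀ (by fun_prop) _ fun z hz =>
      Or.inl (hzx z hz))).mul (ContinuousOn.zpow₀ (by fun_prop) _ fun z hz => Or.inl (hzw z hz)))
    (ContinuousOn.zpow₀ (by fun_prop) _ fun z hz => Or.inl (hzy z hz))
    (fun z hz => mul_ne_zero (mul_ne_zero (Complex.exp_ne_zero _) (zpow_ne_zero _ (hzx z hz)))
      (zpow_ne_zero _ (hzw z hz))) (fun z hz => zpow_ne_zero _ (hzy z hz)) (fun z hz => ?_)
    (tendsto_mul_zpow_div_zpow hlimL x w m n) ?_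
  · have hzx := hzx z (frontier_subset_closure hz)
    have := zpow_ne_zero n (hzw z (frontier_subset_closure hz))
    simp only [hexpL _ (coe_mem_of_mem_frontier_preimage_component hK hz), ratio_coe, div_zpow,
      zpow_add₀ hzx, zpow_neg]
    have := zpow_ne_zero m hzx
    have := zpow_ne_zero n hzx
    field_simp
  · simpa using tendsto_mul_zpow_div_zpow tendsto_const_nhds y 0 m 0

lemma connectedIn_compl_of_hasLogOn_ratio {K : Set (OnePoint ℂ)} (hK : IsClosed K) (hinf : ∞ ∈ K)
    {x y : ℂ} (hx : (x : OnePoint ℂ) ∉ K) (hy : (y : OnePoint ℂ) ∉ K)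
    (hlog : HasLogOn (ratio x y) K) : ConnectedIn Kᶜ (x : OnePoint ℂ) y := by
  by_contra hxy
  have := eq_zero_of_hasLogOn_zpow_ratio hK hinf (m := 1) (n := 0) hx hy hx
    (by simpa using hlog) (fun h => hxy h.symm) (fun h => hxy h.symm)
  exact one_ne_zero this

lemma janiszewski_of_infty_mem {K₁ K₂ : Set (OnePoint ℂ)} (hK₁ : IsClosed K₁) (hK₂ : IsClosed K₂)
    (hinf₁ : ∞ ∈ K₁) (hinf₂ : ∞ ∈ K₂) (hpre : IsPreconnected (K₁ ∩ K₂)) {x y : OnePoint ℂ}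
    (h₁ : ConnectedIn K₁ᶜ x y) (h₂ : ConnectedIn K₂ᶜ x y) : ConnectedIn (K₁ ∪ K₂)ᶜ x y := by
  have hne : ∀ {z}, z ∉ K₁ → z ≠ ∞ := fun hz h => hz (h ▸ hinf₁)
  lift x to ℂ using hne h₁.mem_left
  lift y to ℂ using hne h₁.mem_right
  exact connectedIn_compl_of_hasLogOn_ratio (hK₁.union hK₂) (Or.inl hinf₁)
    (fun h => h.elim h₁.mem_left h₂.mem_left) (fun h => h.elim h₁.mem_right h₂.mem_right)
    ((hasLogOn_ratio_of_connectedIn hK₁ hinf₁ h₁).union_of_isClosed hK₁ hK₂ hpre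
      (hasLogOn_ratio_of_connectedIn hK₂ hinf₂ h₂))

theorem janiszewski {K₁ K₂ : Set (OnePoint ℂ)} (hK₁ : IsClosed K₁) (hK₂ : IsClosed K₂)
    (hne : (K₁ ∩ K₂).Nonempty) (hpre : IsPreconnected (K₁ ∩ K₂)) {x y : OnePoint ℂ}
    (h₁ : ConnectedIn K₁ᶜ x y) (h₂ : ConnectedIn K₂ᶜ x y) : ConnectedIn (K₁ ∪ K₂)ᶜ x y := by
  obtain ⟨p, hp₁, hp₂⟩ := hne
  obtain ⟨T, hT⟩ := exists_homeomorph_apply_eq_infty p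
  have hcompl : ∀ K : Set (OnePoint ℂ), T '' Kᶜ = (T '' K)ᶜ := fun K =>
    image_compl_eq T.bijective
  have hpre' : IsPreconnected (T '' K₁ ∩ T '' K₂) := by
    rw [← image_inter T.injective]
    exact hpre.image _ T.continuous.continuousOn
  have himage := janiszewski_of_infty_mem (T.isClosedMap _ hK₁) (T.isClosedMap _ hK₂)
    ⟨p, hp₁, hT⟩ ⟨p, hp₂, hT⟩ hpre' (hcompl K₁ ▸ h₁.image T.continuous.continuousOn)
    (hcompl K₂ ▸ h₂.image T.continuous.continuousOn)
  rw [← image_union, ← hcompl] at himage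
  simpa [image_image] using himage.image T.symm.continuous.continuousOn

/-! ### Curves through infinity -/

/-- A simple closed curve through `∞`, parametrised off `∞` by the real line. -/
structure IsCurve (γ : ℝ → OnePoint ℂ) : Prop where
  continuous : Continuous γ
  injective : Function.Injective γ
  ne_infty : ∀ t, γ t ≠ ∞
  tendsto_atTop : Tendsto γ atTop (𝓝 ∞)
  tendsto_atBot : Tendsto γ atBot (𝓝 ∞)

/-- The part of the curve `γ` over the parameter set `s`, together with the point `∞`. -/
def curveImage (γ : ℝ → OnePoint ℂ) (s : Set ℝ) : Set (OnePoint ℂ) :=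
  insert ∞ (γ '' s)

/-- The parametrisation of the ray `curveImage γ (Ici c)` by the unit interval. -/
def rayParam (γ : ℝ → OnePoint ℂ) (c : ℝ) (s : unitInterval) : OnePoint ℂ :=
  if (s : ℝ) = 1 then ∞ else γ (c + s / (1 - s))

lemma infty_mem_curveImage (γ : ℝ → OnePoint ℂ) (s : Set ℝ) : ∞ ∈ curveImage γ s :=
  mem_insert _ _

lemma ne_infty_of_notMem_curveImage {γ : ℝ → OnePoint ℂ} {s : Set ℝ} {x : OnePoint ℂ}
    (hx : x ∉ curveImage γ s) : x ≠ ∞ := fun h => hx (h ▸ infty_mem_curveImage γ s)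

lemma curveImage_union (γ : ℝ → OnePoint ℂ) (s t : Set ℝ) :
    curveImage γ s ∪ curveImage γ t = curveImage γ (s ∪ t) := by
  rw [curveImage, curveImage, curveImage, insert_union, union_insert, insert_idem, image_union]

lemma tendsto_div_one_sub : Tendsto (fun s : ℝ => s / (1 - s)) (𝓝[<] 1) atTop := by
  have hsub : Tendsto (fun s : ℝ => 1 - s) (𝓝[<] 1) (𝓝[>] 0) := by
    refine tendsto_nhdsWithin_iff.2 ⟨?_, ?_⟩
    · have : ContinuousAt (fun s : ℝ => 1 - s) 1 := by fun_prop
      simpa [ContinuousAt] using this.mono_left (nhdsWithin_le_nhds (s := Iio (1 : ℝ)))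
    · filter_upwards [self_mem_nhdsWithin] with s hs using sub_pos.2 (mem_Iio.1 hs)
  exact (tendsto_id.mono_left nhdsWithin_le_nhds).pos_mul_atTop one_pos
    (tendsto_inv_nhdsGT_zero.comp hsub)

lemma continuousOn_ite_div_one_sub {X : Type*} [TopologicalSpace X] {F : ℝ → X} {u : X}
    (hF : Continuous F) (hu : Tendsto F atTop (𝓝 u)) :
    ContinuousOn (fun s : ℝ => if s = 1 then u else F (s / (1 - s))) (Iic 1) := by
  intro s hs
  rcases eq_or_lt_of_le (mem_Iic.1 hs) with rfl | hlt
  · rw [← Iio_insert, continuousWithinAt_insert_self, ContinuousWithinAt, if_pos rfl]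
    refine (hu.comp tendsto_div_one_sub).congr' ?_
    filter_upwards [self_mem_nhdsWithin] with s hs
    rw [if_neg (ne_of_lt hs), Function.comp_apply]
  · have hne : 1 - s ≠ 0 := (sub_pos.2 hlt).ne'
    have hcont : ContinuousAt (fun s : ℝ => F (s / (1 - s))) s :=
      hF.continuousAt.comp' (by fun_prop (disch := assumption))
    refine (hcont.congr ?_).continuousWithinAt
    filter_upwards [Iio_mem_nhds hlt] with x hx
    rw [if_neg (ne_of_lt hx)]

namespace IsCurve

variable {γ : ℝ → OnePoint ℂ}

lemma neg (h : IsCurve γ) : IsCurve (fun t => γ (-t)) where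
  continuous := h.continuous.comp continuous_neg
  injective := h.injective.comp neg_injective
  ne_infty _ := h.ne_infty _
  tendsto_atTop := h.tendsto_atBot.comp tendsto_neg_atTop_atBot
  tendsto_atBot := h.tendsto_atTop.comp tendsto_neg_atBot_atTop

lemma mem_curveImage (h : IsCurve γ) {t : ℝ} {s : Set ℝ} : γ t ∈ curveImage γ s ↔ t ∈ s := by
  simp [curveImage, h.ne_infty, h.injective.eq_iff]

lemma curveImage_inter (h : IsCurve γ) (s t : Set ℝ) :
    curveImage γ s ∩ curveImage γ t = curveImage γ (s ∩ t) := by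
  rw [curveImage, curveImage, curveImage, ← insert_inter_distrib, image_inter h.injective]

lemma continuous_rayParam (h : IsCurve γ) (c : ℝ) : Continuous (rayParam γ c) :=
  (continuousOn_ite_div_one_sub (h.continuous.comp (continuous_const_add c))
    (h.tendsto_atTop.comp (tendsto_atTop_add_const_left _ c tendsto_id))).comp_continuous
    continuous_subtype_val fun s => s.2.2

lemma injective_rayParam (h : IsCurve γ) (c : ℝ) : Function.Injective (rayParam γ c) := by
  intro s t hst
  ext
  simp only [rayParam] at hst
  split_ifs at hst with hs ht ht
  · rw [hs, ht]
  · exact absurd hst.symm (h.ne_infty _)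
  · exact absurd hst (h.ne_infty _)
  · have hdiv := add_left_cancel (h.injective hst)
    rw [div_eq_div_iff (sub_ne_zero.2 (Ne.symm hs)) (sub_ne_zero.2 (Ne.symm ht))] at hdiv
    linarith

lemma range_rayParam (γ : ℝ → OnePoint ℂ) (c : ℝ) :
    range (rayParam γ c) = curveImage γ (Ici c) := by
  apply Subset.antisymm
  · rintro _ ⟨⟨s, hs₀, hs₁⟩, rfl⟩
    simp only [rayParam]
    split_ifs with hs
    · exact infty_mem_curveImage _ _
    · have : 0 < 1 - s := sub_pos.2 (lt_of_le_of_ne hs₁ hs)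
      exact Or.inr ⟨c + s / (1 - s), le_add_of_nonneg_right (div_nonneg hs₀ this.le), rfl⟩
  · rintro _ (rfl | ⟨t, ht, rfl⟩)
    · exact ⟨1, if_pos rfl⟩
    · have ht : 0 ≤ t - c := sub_nonneg.2 ht
      have hpos : 0 < 1 + (t - c) := by linarith
      have hlt : (t - c) / (1 + (t - c)) < 1 := by rw [div_lt_one hpos]; linarith
      refine ⟨⟨(t - c) / (1 + (t - c)), by positivity, hlt.le⟩, (if_neg hlt.ne).trans ?_⟩
      congr 1
      field_simp
      ring

lemma exists_ray (h : IsCurve γ) (c : ℝ) :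
    ∃ p : unitInterval → OnePoint ℂ, Continuous p ∧ Function.Injective p ∧
      range p = curveImage γ (Ici c) ∧ p 0 = γ c ∧ p 1 = ∞ :=
  ⟨rayParam γ c, h.continuous_rayParam c, h.injective_rayParam c, range_rayParam γ c,
    by simp [rayParam], by simp [rayParam]⟩

lemma exists_ray_neg (h : IsCurve γ) (c : ℝ) :
    ∃ p : unitInterval → OnePoint ℂ, Continuous p ∧ Function.Injective p ∧
      range p = curveImage γ (Iic c) ∧ p 0 = γ c ∧ p 1 = ∞ := by
  obtain ⟨p, hp, hinj, hrange, h0, h1⟩ := h.neg.exists_ray (-c)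
  refine ⟨p, hp, hinj, ?_, by simpa using h0, h1⟩
  rw [hrange, curveImage, curveImage, ← image_image γ Neg.neg, image_neg_Ici, neg_neg]

lemma isClosed_curveImage_Ici (h : IsCurve γ) (c : ℝ) : IsClosed (curveImage γ (Ici c)) := by
  obtain ⟨p, hp, -, hrange, -⟩ := h.exists_ray c
  exact hrange ▸ (isCompact_range hp).isClosed

lemma isClosed_curveImage_Iic (h : IsCurve γ) (c : ℝ) : IsClosed (curveImage γ (Iic c)) := by
  obtain ⟨p, hp, -, hrange, -⟩ := h.exists_ray_neg c
  exact hrange ▸ (isCompact_range hp).isClosed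

lemma curveImage_Iic_union_Ici (γ : ℝ → OnePoint ℂ) (c : ℝ) :
    curveImage γ (Iic c) ∪ curveImage γ (Ici c) = curveImage γ univ := by
  rw [curveImage_union, Iic_union_Ici]

lemma isClosed_curveImage_univ (h : IsCurve γ) : IsClosed (curveImage γ univ) :=
  curveImage_Iic_union_Ici γ 0 ▸ (h.isClosed_curveImage_Iic 0).union (h.isClosed_curveImage_Ici 0)

end IsCurve

lemma hasLogOn_ratio_range {p : unitInterval → OnePoint ℂ} (hp : Continuous p)
    (hinj : Function.Injective p) {x y : ℂ} (hx : (x : OnePoint ℂ) ∉ range p)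
    (hy : (y : OnePoint ℂ) ∉ range p) : HasLogOn (ratio x y) (range p) := by
  have : ContractibleSpace unitInterval :=
    (convex_Icc (0 : ℝ) 1).contractibleSpace ⟨0, by simp⟩
  have : LocallyPathConnectedSpace unitInterval := (convex_Icc (0 : ℝ) 1).locallyPathConnectedSpace
  have hne : ∀ z ∈ range p, z ≠ x ∧ z ≠ y := fun z hz =>
    ⟨ne_of_mem_of_not_mem hz hx, ne_of_mem_of_not_mem hz hy⟩
  exact hasLogOn_range_of_isClosedEmbedding (hp.isClosedEmbedding hinj)
    (fun z hz => (continuousAt_ratio x y (hne z hz).1).continuousWithinAt)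
    fun z hz => ratio_ne_zero (hne z hz).1 (hne z hz).2

namespace IsCurve

variable {γ : ℝ → OnePoint ℂ} {c d : ℝ}

lemma hasLogOn_ratio_Ici (h : IsCurve γ) {x y : ℂ}
    (hx : (x : OnePoint ℂ) ∉ curveImage γ (Ici c)) (hy : (y : OnePoint ℂ) ∉ curveImage γ (Ici c)) :
    HasLogOn (ratio x y) (curveImage γ (Ici c)) := by
  obtain ⟨p, hp, hinj, hrange, -⟩ := h.exists_ray c
  rw [← hrange] at hx hy ⊢
  exact hasLogOn_ratio_range hp hinj hx hy

lemma hasLogOn_ratio_Iic (h : IsCurve γ) {x y : ℂ}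
    (hx : (x : OnePoint ℂ) ∉ curveImage γ (Iic c)) (hy : (y : OnePoint ℂ) ∉ curveImage γ (Iic c)) :
    HasLogOn (ratio x y) (curveImage γ (Iic c)) := by
  obtain ⟨p, hp, hinj, hrange, -⟩ := h.exists_ray_neg c
  rw [← hrange] at hx hy ⊢
  exact hasLogOn_ratio_range hp hinj hx hy

lemma isPreconnected_compl_curveImage_gap (h : IsCurve γ) (hcd : c < d) :
    IsPreconnected (curveImage γ (Iic c) ∪ curveImage γ (Ici d))ᶜ := by
  refine isPreconnected_of_forall_connectedIn fun x hx y hy => ?_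
  rw [mem_compl_iff, mem_union, not_or] at hx hy
  lift x to ℂ using ne_infty_of_notMem_curveImage hx.1
  lift y to ℂ using ne_infty_of_notMem_curveImage hy.1
  refine janiszewski_of_infty_mem (h.isClosed_curveImage_Iic c) (h.isClosed_curveImage_Ici d)
    (infty_mem_curveImage _ _) (infty_mem_curveImage _ _) ?_ ?_ ?_
  · rw [h.curveImage_inter, Iic_inter_Ici, Icc_eq_empty hcd.not_ge]
    simp [curveImage, isPreconnected_singleton]
  · exact connectedIn_compl_of_hasLogOn_ratio (h.isClosed_curveImage_Iic c)
      (infty_mem_curveImage _ _) hx.1 hy.1 (h.hasLogOn_ratio_Iic hx.1 hy.1)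
  · exact connectedIn_compl_of_hasLogOn_ratio (h.isClosed_curveImage_Ici d)
      (infty_mem_curveImage _ _) hx.2 hy.2 (h.hasLogOn_ratio_Ici hx.2 hy.2)

/-- If the component stayed away from `γ t`, then it would be separated from `γ t` in the
connected complement of the curve with a short gap around `γ t`. -/
lemma apply_mem_closure_connectedComponentIn (h : IsCurve γ) {x : OnePoint ℂ}
    (hx : x ∉ curveImage γ univ) (t : ℝ) :
    γ t ∈ closure (connectedComponentIn (curveImage γ univ)ᶜ x) := by
  set S := connectedComponentIn (curveImage γ univ)ᶜ x
  by_contra hn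
  have hnhds : γ ⁻¹' (closure S)ᶜ ∈ 𝓝 t :=
    h.continuous.continuousAt.preimage_mem_nhds (isClosed_closure.isOpen_compl.mem_nhds hn)
  obtain ⟨c, d, ⟨hc, hd⟩, hcd⟩ := mem_nhds_iff_exists_Ioo_subset.1 hnhds
  have hpre := h.isPreconnected_compl_curveImage_gap (hc.trans hd)
  rw [curveImage_union] at hpre
  have hcover : (curveImage γ (Iic c ∪ Ici d))ᶜ ⊆ S ∪ (closure S)ᶜ := by
    refine fun z hz => or_iff_not_imp_right.2 fun hzS => ?_
    refine closure_connectedComponentIn_inter_subset ⟨not_not.1 hzS, ?_⟩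
    rintro (rfl | ⟨s, -, rfl⟩)
    · exact hz (infty_mem_curveImage _ _)
    · rw [mem_compl_iff, h.mem_curveImage, mem_union, not_or, mem_Iic, mem_Ici, not_le,
        not_le] at hz
      exact hzS (hcd hz)
  obtain ⟨z, -, hzS, hzS'⟩ := hpre S (closure S)ᶜ
    h.isClosed_curveImage_univ.isOpen_compl.connectedComponentIn isClosed_closure.isOpen_compl
    hcover ⟨x, fun hx' => hx (insert_subset_insert (image_mono (subset_univ _)) hx'),
      mem_connectedComponentIn hx⟩
    ⟨γ t, by simp [h.mem_curveImage, hc, hd], hn⟩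
  exact hzS' (subset_closure hzS)

/-- If three points lay in different components, a logarithm on the curve of a nontrivial monomial
in two ratios would contradict Eilenberg's criterion. -/
lemma connectedIn_compl_of_not_connectedIn (h : IsCurve γ) {x y w : OnePoint ℂ}
    (hx : x ∉ curveImage γ univ) (hy : y ∉ curveImage γ univ) (hw : w ∉ curveImage γ univ)
    (hxy : ¬ ConnectedIn (curveImage γ univ)ᶜ x y)
    (hxw : ¬ ConnectedIn (curveImage γ univ)ᶜ x w) :
    ConnectedIn (curveImage γ univ)ᶜ y w := by
  by_contra hyw
  lift x to ℂ using ne_infty_of_notMem_curveImage hx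
  lift y to ℂ using ne_infty_of_notMem_curveImage hy
  lift w to ℂ using ne_infty_of_notMem_curveImage hw
  have hIic : curveImage γ (Iic 0) ⊆ curveImage γ univ :=
    insert_subset_insert (image_mono (subset_univ _))
  have hIci : curveImage γ (Ici 0) ⊆ curveImage γ univ :=
    insert_subset_insert (image_mono (subset_univ _))
  have hinter : curveImage γ (Iic 0) ∩ curveImage γ (Ici 0) = {∞, γ 0} := by
    rw [h.curveImage_inter, Iic_inter_Ici, Icc_self, curveImage, image_singleton]
  obtain ⟨m, n, hmn, hlog⟩ := exists_hasLogOn_zpow_mul_zpow (h.isClosed_curveImage_Iic 0)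
    (h.isClosed_curveImage_Ici 0) (hinter ▸ Or.inl rfl) (hinter ▸ Or.inr rfl) hinter.subset
    (h.hasLogOn_ratio_Iic (fun hx' => hx (hIic hx')) fun hy' => hy (hIic hy'))
    (h.hasLogOn_ratio_Ici (fun hx' => hx (hIci hx')) fun hy' => hy (hIci hy'))
    (h.hasLogOn_ratio_Iic (fun hx' => hx (hIic hx')) fun hw' => hw (hIic hw'))
    (h.hasLogOn_ratio_Ici (fun hx' => hx (hIci hx')) fun hw' => hw (hIci hw'))
  rw [curveImage_Iic_union_Ici] at hlog
  have hinf := infty_mem_curveImage γ univ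
  have hm : m = 0 := eq_zero_of_hasLogOn_zpow_ratio h.isClosed_curveImage_univ hinf hx hy hw hlog
    (fun h => hxy h.symm) hyw
  have hn : n = 0 := eq_zero_of_hasLogOn_zpow_ratio h.isClosed_curveImage_univ hinf hx hw hy
    (hlog.congr fun z _ => mul_comm _ _) (fun h => hxw h.symm) fun h => hyw h.symm
  exact hmn.elim (· hm) (· hn)

end IsCurve

/-! ### The Jordan curve theorem for curves through infinity -/

lemma one_add_mul_ratio_sub_one (z : ℂ) {w z₀ : ℂ} (hw : w ≠ z₀) :
    1 + (z₀ - z) * (ratio z₀ (z₀ - 1) w - 1) = (w - z) / (w - z₀) := by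
  have : w - z₀ ≠ 0 := sub_ne_zero.2 hw
  rw [ratio_coe]
  field_simp
  ring

lemma one_add_mul_ratio_sub_one_ne_zero {z z₀ : ℂ} {w : OnePoint ℂ} (hz : w ≠ z) (hz₀ : w ≠ z₀) :
    1 + (z₀ - z) * (ratio z₀ (z₀ - 1) w - 1) ≠ 0 := by
  rcases eq_or_ne w ∞ with rfl | hw
  · simp
  · lift w to ℂ using hw
    rw [Ne, OnePoint.coe_eq_coe] at hz hz₀
    rw [one_add_mul_ratio_sub_one z hz₀]
    exact div_ne_zero (sub_ne_zero.2 hz) (sub_ne_zero.2 hz₀)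

/-- Moving the endpoint `P` along the arc to `∞` contracts `(z - P) / (z₀ - P)` to the
constant `1`. -/
lemma hasLogOn_sub_compl_arc {p : unitInterval → OnePoint ℂ} (hp : Continuous p) {P : ℂ}
    (h0 : p 0 = P) (h1 : p 1 = ∞) {z₀ : ℂ} (hz₀ : (z₀ : OnePoint ℂ) ∉ range p) :
    HasLogOn (fun z : ℂ => z - P) {z | (z : OnePoint ℂ) ∉ range p} := by
  set W : Set ℂ := {z | (z : OnePoint ℂ) ∉ range p}
  let H : unitInterval × W → ℂ := fun q =>
    1 + (z₀ - q.2) * (ratio z₀ (z₀ - 1) (p (unitInterval.symm q.1)) - 1)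
  have hcont : Continuous H := by
    have hon : ContinuousOn (ratio z₀ (z₀ - 1)) (range p) := fun z hz =>
      (continuousAt_ratio _ _ (ne_of_mem_of_not_mem hz hz₀)).continuousWithinAt
    have hcomp : Continuous fun q : unitInterval × W =>
        ratio z₀ (z₀ - 1) (p (unitInterval.symm q.1)) :=
      hon.comp_continuous (by fun_prop) fun q => mem_range_self _
    have : Continuous fun q : unitInterval × W => (q.2 : ℂ) :=
      continuous_subtype_val.comp continuous_snd
    fun_prop
  have hne : ∀ q, H q ≠ 0 := fun ⟨t, z, hz⟩ =>
    one_add_mul_ratio_sub_one_ne_zero (ne_of_mem_of_not_mem (mem_range_self _) hz)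
      (ne_of_mem_of_not_mem (mem_range_self _) hz₀)
  obtain ⟨l, hl, hexp⟩ := exists_continuous_exp_eq_of_homotopy hcont hne
    fun z => by simp [H, h1]
  have hP : P ≠ z₀ := fun h => hz₀ ⟨0, h ▸ h0⟩
  refine hasLogOn_of_exists_subtype ⟨fun z => l z + Complex.log (z₀ - P), by fun_prop, fun z => ?_⟩
  have hP₀ : P - z₀ ≠ 0 := sub_ne_zero.2 hP
  have hP₁ : z₀ - P ≠ 0 := sub_ne_zero.2 hP.symm
  rw [Complex.exp_add, hexp, Complex.exp_log hP₁]
  simp only [H, unitInterval.symm_one, h0, one_add_mul_ratio_sub_one _ hP]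
  field_simp
  ring

lemma not_hasLogOn_sub_compl_singleton (P : ℂ) : ¬ HasLogOn (fun z : ℂ => z - P) {P}ᶜ := by
  rintro ⟨l, hl, hexp⟩
  have hmaps : ∀ z ∈ Metric.sphere (0 : ℂ) 1, z + P ∈ ({P}ᶜ : Set ℂ) := fun z hz h => by
    have : z = 0 := by simpa using h
    simp [this] at hz
  have := eq_zero_of_exp_eq_zpow_on_sphere one_pos (m := 1) (l := fun z => l (z + P))
    (hl.comp (by fun_prop) hmaps) fun z hz => by rw [hexp _ (hmaps z hz)]; simp
  exact one_ne_zero this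

namespace IsCurve

variable {γ : ℝ → OnePoint ℂ}

/-- The function `z - γ 0` has a logarithm off either half of the curve; were the complement
connected, the two logarithms would patch to one off `γ 0`. -/
theorem not_isPreconnected_compl (h : IsCurve γ) : ¬ IsPreconnected (curveImage γ univ)ᶜ := by
  intro hpre
  have hcoe : ∀ t, ∃ z : ℂ, (z : OnePoint ℂ) = γ t := fun t => ne_infty_iff_exists.1 (h.ne_infty t)
  obtain ⟨P, hP⟩ := hcoe 0
  obtain ⟨z₁, hz₁⟩ := hcoe 1
  obtain ⟨z₂, hz₂⟩ := hcoe (-1)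
  obtain ⟨p₁, hp₁, -, hr₁, hs₁, ht₁⟩ := h.exists_ray_neg 0
  obtain ⟨p₂, hp₂, -, hr₂, hs₂, ht₂⟩ := h.exists_ray 0
  have hlog₁ := hasLogOn_sub_compl_arc hp₁ (hs₁.trans hP.symm) ht₁ (z₀ := z₁)
    (by rw [hr₁, hz₁, h.mem_curveImage]; norm_num)
  have hlog₂ := hasLogOn_sub_compl_arc hp₂ (hs₂.trans hP.symm) ht₂ (z₀ := z₂)
    (by rw [hr₂, hz₂, h.mem_curveImage]; norm_num)
  rw [hr₁] at hlog₁
  rw [hr₂] at hlog₂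
  set W₁ : Set ℂ := {z | (z : OnePoint ℂ) ∉ curveImage γ (Iic 0)}
  set W₂ : Set ℂ := {z | (z : OnePoint ℂ) ∉ curveImage γ (Ici 0)}
  have hinter : (↑) '' (W₁ ∩ W₂) = (curveImage γ univ)ᶜ := by
    rw [← curveImage_Iic_union_Ici γ 0, compl_union]
    refine Subset.antisymm (image_subset_iff.2 fun z hz => hz) fun z hz => ?_
    lift z to ℂ using ne_infty_of_notMem_curveImage hz.1
    exact mem_image_of_mem _ hz
  have hunion : W₁ ∪ W₂ = {P}ᶜ := by
    ext z
    have hmem : (z : OnePoint ℂ) ∈ curveImage γ (Iic 0) ∩ curveImage γ (Ici 0) ↔ z = P := by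
      rw [h.curveImage_inter, Iic_inter_Ici, Icc_self, curveImage, image_singleton, ← hP]
      simp
    rw [mem_compl_singleton_iff, Ne, ← hmem, mem_inter_iff, not_and_or]
    rfl
  have hpre' : IsPreconnected (W₁ ∩ W₂) :=
    OnePoint.isOpenEmbedding_coe.isInducing.isPreconnected_image.1 (hinter ▸ hpre)
  refine not_hasLogOn_sub_compl_singleton P (hunion ▸ hlog₁.union_of_isOpen ?_ ?_ hpre' hlog₂)
  · exact (h.isClosed_curveImage_Iic 0).isOpen_compl.preimage continuous_coe
  · exact (h.isClosed_curveImage_Ici 0).isOpen_compl.preimage continuous_coe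

end IsCurve

/-! ### Pseudolines on the sphere -/

/-- A pseudoline on the sphere: a curve through `∞` together with a labelling of its two sides. -/
structure Pseudoline where
  γ : ℝ → OnePoint ℂ
  isCurve : IsCurve γ
  side : Bool → Set (OnePoint ℂ)
  isOpen_side : ∀ b, IsOpen (side b)
  isPreconnected_side : ∀ b, IsPreconnected (side b)
  disjoint_side : Disjoint (side true) (side false)
  side_union_side : side true ∪ side false = (curveImage γ univ)ᶜ
  apply_mem_closure_side : ∀ b t, γ t ∈ closure (side b)

namespace Pseudoline

variable (P : Pseudoline) {b c : Bool} {z : OnePoint ℂ}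

/-- The curve of a pseudoline, including `∞`. -/
def carrier : Set (OnePoint ℂ) := curveImage P.γ univ

lemma infty_mem_carrier : ∞ ∈ P.carrier := infty_mem_curveImage _ _

lemma range_subset_carrier : range P.γ ⊆ P.carrier :=
  image_univ (f := P.γ) ▸ subset_insert _ _

lemma apply_mem_carrier (t : ℝ) : P.γ t ∈ P.carrier := Or.inr ⟨t, mem_univ t, rfl⟩

lemma isClosed_carrier : IsClosed P.carrier := P.isCurve.isClosed_curveImage_univ

variable {P}

lemma notMem_side_not (h : z ∈ P.side b) : z ∉ P.side (!b) := by
  cases b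
  · exact fun h' => disjoint_left.1 P.disjoint_side h' h
  · exact disjoint_left.1 P.disjoint_side h

lemma eq_of_mem_side (hb : z ∈ P.side b) (hc : z ∈ P.side c) : b = c := by
  by_contra hne
  exact notMem_side_not hb (Bool.eq_not.2 (Ne.symm hne) ▸ hc)

lemma notMem_carrier_of_mem_side (h : z ∈ P.side b) : z ∉ P.carrier := by
  have : z ∈ P.side true ∪ P.side false := by cases b <;> simp [h]
  rwa [P.side_union_side] at this

lemma mem_side_or_mem_side_not (h : z ∉ P.carrier) (b : Bool) :
    z ∈ P.side b ∨ z ∈ P.side (!b) := by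
  have : z ∈ P.side true ∪ P.side false := by rwa [P.side_union_side]
  cases b
  · exact this.symm
  · exact this

lemma exists_mem_side (h : z ∉ P.carrier) : ∃ b, z ∈ P.side b :=
  (mem_side_or_mem_side_not h true).elim (⟨_, ·⟩) (⟨_, ·⟩)

lemma mem_side_not (h : z ∉ P.carrier) (h' : z ∉ P.side b) : z ∈ P.side (!b) :=
  (mem_side_or_mem_side_not h b).resolve_left h'

lemma carrier_subset_closure_side (b : Bool) : P.carrier ⊆ closure (P.side b) := by
  rintro _ (rfl | ⟨t, -, rfl⟩)
  · exact isClosed_closure.mem_of_tendsto P.isCurve.tendsto_atTop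
      (Eventually.of_forall (P.apply_mem_closure_side b))
  · exact P.apply_mem_closure_side b t

variable (P) in
lemma nonempty_side (b : Bool) : (P.side b).Nonempty :=
  closure_nonempty_iff.1 ⟨_, P.apply_mem_closure_side b 0⟩

lemma notMem_side_not_of_mem_closure (hz : z ∈ closure (P.side b)) : z ∉ P.side (!b) := fun h =>
  have ⟨_, hw, hw'⟩ := mem_closure_iff.1 hz _ (P.isOpen_side (!b)) h
  notMem_side_not hw' hw

lemma subset_side_of_isPreconnected {C : Set (OnePoint ℂ)} (hC : IsPreconnected C)
    (hdisj : Disjoint C P.carrier) (hz : z ∈ C) (hb : z ∈ P.side b) : C ⊆ P.side b := by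
  refine hC.subset_left_of_subset_union (P.isOpen_side b) (P.isOpen_side (!b)) ?_ ?_ ⟨z, hz, hb⟩
  · exact disjoint_left.2 fun w => notMem_side_not
  · exact fun w hw => mem_side_or_mem_side_not (disjoint_left.1 hdisj hw) b

lemma connectedIn_inter_side {W : Set (OnePoint ℂ)} {x y : OnePoint ℂ}
    (h : ConnectedIn (W ∩ P.carrierᶜ) x y) (hb : x ∈ P.side b) :
    ConnectedIn (W ∩ P.side b) x y := by
  obtain ⟨C, hCW, hC, hx, hy⟩ := h
  have hside := subset_side_of_isPreconnected hC (disjoint_left.2 fun z hz => (hCW hz).2) hx hb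
  exact ⟨C, fun z hz => ⟨(hCW hz).1, hside hz⟩, hC, hx, hy⟩

end Pseudoline

lemma IsCurve.exists_pseudoline {γ : ℝ → OnePoint ℂ} (h : IsCurve γ) :
    ∃ P : Pseudoline, P.γ = γ := by
  set W := (curveImage γ univ)ᶜ
  obtain ⟨x, hx, y, hy, hxy⟩ : ∃ x ∈ W, ∃ y ∈ W, ¬ ConnectedIn W x y := by
    by_contra! hn
    exact h.not_isPreconnected_compl (isPreconnected_of_forall_connectedIn hn)
  refine ⟨{ γ := γ
            isCurve := h
            side := fun b => connectedComponentIn W (if b then x else y)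
            isOpen_side := fun b => h.isClosed_curveImage_univ.isOpen_compl.connectedComponentIn
            isPreconnected_side := fun b => isPreconnected_connectedComponentIn
            disjoint_side := disjoint_left.2 fun z hzx hzy => ?_
            side_union_side := Subset.antisymm
              (union_subset (connectedComponentIn_subset _ _) (connectedComponentIn_subset _ _))
              fun z hz => ?_
            apply_mem_closure_side := fun b t =>
              h.apply_mem_closure_connectedComponentIn (by cases b <;> assumption) t }, rfl⟩
  · exact hxy (((connectedIn_iff_mem_connectedComponentIn hx).2 hzx).trans
      ((connectedIn_iff_mem_connectedComponentIn hy).2 hzy).symm)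
  · refine or_iff_not_imp_left.2 fun hzx => ?_
    exact (connectedIn_iff_mem_connectedComponentIn hy).1
      (h.connectedIn_compl_of_not_connectedIn hx hy hz hxy fun hxz =>
        hzx ((connectedIn_iff_mem_connectedComponentIn hx).1 hxz))

/-- `P` passes exactly once through `Q`, from one side to the other. -/
def Pseudoline.Crosses (P Q : Pseudoline) : Prop :=
  ∃ (t : ℝ) (b : Bool), (∀ s < t, P.γ s ∈ Q.side b) ∧ P.γ t ∈ Q.carrier ∧
    ∀ s > t, P.γ s ∈ Q.side (!b)

/-- The analogue of `IsArrangement` for indexed families of curves on the sphere. -/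
def IsArranged {ι : Type*} (L : ι → Pseudoline) : Prop :=
  Pairwise fun i j => (L i).Crosses (L j)

/-- The cell of the subarrangement `I` lying on the prescribed side `s i` of each `L i`. -/
def cell {ι : Type*} (L : ι → Pseudoline) (I : Finset ι) (s : ι → Bool) : Set (OnePoint ℂ) :=
  {z | ∀ i ∈ I, z ∈ (L i).side (s i)}

/-- Connectedness of `W` im kleinen at a point `u`, which need not belong to `W`. -/
def ConnectedImKleinenAt {X : Type*} [TopologicalSpace X] (W : Set X) (u : X) : Prop :=
  ∀ U ∈ 𝓝 u, ∃ V ∈ 𝓝 u, V ⊆ U ∧ ∀ x ∈ V ∩ W, ∀ y ∈ V ∩ W, ConnectedIn (U ∩ W) x y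

namespace Pseudoline

variable {P Q : Pseudoline} {W N : Set (OnePoint ℂ)} {u : OnePoint ℂ}

lemma Crosses.exists_mem_iff (h : P.Crosses Q) : ∃ (t : ℝ) (b : Bool), ∀ s,
    (P.γ s ∈ Q.side b ↔ s < t) ∧ (P.γ s ∈ Q.carrier ↔ s = t) ∧
      (P.γ s ∈ Q.side (!b) ↔ t < s) := by
  obtain ⟨t, b, hlt, heq, hgt⟩ := h
  refine ⟨t, b, fun s => ?_⟩
  rcases lt_trichotomy s t with h | rfl | h
  · have hs := hlt s h
    simp [hs, notMem_carrier_of_mem_side hs, notMem_side_not hs, h, h.ne, h.le]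
  · have hs : ∀ c, P.γ s ∉ Q.side c := fun c h => notMem_carrier_of_mem_side h heq
    simp [hs, heq]
  · have hs := hgt s h
    have hs' : P.γ s ∉ Q.side b := fun h' => notMem_side_not h' hs
    simp [hs, notMem_carrier_of_mem_side hs, hs', h, h.ne', h.le]

lemma Crosses.preimage_side (h : P.Crosses Q) (c : Bool) :
    ∃ t, P.γ ⁻¹' Q.side c = Iio t ∨ P.γ ⁻¹' Q.side c = Ioi t := by
  obtain ⟨t, b, ht⟩ := h.exists_mem_iff
  refine ⟨t, ?_⟩
  rcases Bool.eq_or_eq_not c b with rfl | rfl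
  · exact Or.inl (ext fun s => (ht s).1)
  · exact Or.inr (ext fun s => (ht s).2.2)

end Pseudoline

section Cell

variable {ι : Type*} {L : ι → Pseudoline} {I : Finset ι}

lemma cell_eq_biInter (L : ι → Pseudoline) (I : Finset ι) (s : ι → Bool) :
    cell L I s = ⋂ i ∈ I, (L i).side (s i) := by
  ext
  simp [cell]

lemma isOpen_cell (I : Finset ι) (s : ι → Bool) : IsOpen (cell L I s) := by
  rw [cell_eq_biInter]
  exact isOpen_biInter_finset fun i _ => (L i).isOpen_side _

lemma cell_empty (s : ι → Bool) : cell L ∅ s = univ := by simp [cell]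

lemma cell_insert [DecidableEq ι] (I : Finset ι) (i : ι) (s : ι → Bool) :
    cell L (insert i I) s = cell L I s ∩ (L i).side (s i) := by
  ext
  simp [cell, and_comm]

lemma cell_anti {I' : Finset ι} (h : I ⊆ I') (s : ι → Bool) : cell L I' s ⊆ cell L I s :=
  fun _ hz i hi => hz i (h hi)

lemma cell_congr {s s' : ι → Bool} (h : ∀ i ∈ I, s i = s' i) : cell L I s = cell L I s' :=
  ext fun _ => forall₂_congr fun i hi => by rw [h i hi]

lemma infty_notMem_cell (hI : I.Nonempty) (s : ι → Bool) : ∞ ∉ cell L I s := fun h =>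
  have ⟨i, hi⟩ := hI
  Pseudoline.notMem_carrier_of_mem_side (h i hi) (L i).infty_mem_carrier

lemma IsArranged.ordConnected_preimage_cell (hL : IsArranged L) {i : ι} (hi : i ∉ I)
    (s : ι → Bool) : OrdConnected ((L i).γ ⁻¹' cell L I s) := by
  rw [cell_eq_biInter, preimage_iInter₂]
  refine ordConnected_biInter fun j hj => ?_
  obtain ⟨t, ht | ht⟩ := (hL (ne_of_mem_of_not_mem hj hi).symm).preimage_side (s j)
  · exact ht ▸ ordConnected_Iio
  · exact ht ▸ ordConnected_Ioi

lemma IsArranged.bddAbove_or_bddBelow_preimage_cell (hL : IsArranged L) {i : ι} (hi : i ∉ I)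
    (hI : I.Nonempty) (s : ι → Bool) :
    BddAbove ((L i).γ ⁻¹' cell L I s) ∨ BddBelow ((L i).γ ⁻¹' cell L I s) := by
  obtain ⟨j, hj⟩ := hI
  have hsub : (L i).γ ⁻¹' cell L I s ⊆ (L i).γ ⁻¹' (L j).side (s j) := fun _ h => h j hj
  obtain ⟨t, ht | ht⟩ := (hL (ne_of_mem_of_not_mem hj hi).symm).preimage_side (s j)
  · exact Or.inl (bddAbove_Iio.mono (hsub.trans ht.subset))
  · exact Or.inr (bddBelow_Ioi.mono (hsub.trans ht.subset))

end Cell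

lemma IsCurve.isPreconnected_curveImage_compl {γ : ℝ → OnePoint ℂ} (h : IsCurve γ) {J : Set ℝ}
    (hJ : OrdConnected J) : IsPreconnected (curveImage γ Jᶜ) := by
  refine isPreconnected_of_forall ∞ ?_
  rintro z (rfl | ⟨t, ht, rfl⟩)
  · exact ⟨{∞}, by simp [infty_mem_curveImage], rfl, rfl, isPreconnected_singleton⟩
  by_cases hd : ∀ s ≤ t, s ∉ J
  · obtain ⟨p, hp, -, hrange, -⟩ := h.exists_ray_neg t
    refine ⟨curveImage γ (Iic t), insert_subset_insert (image_mono hd), infty_mem_curveImage _ _,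
      h.mem_curveImage.2 self_mem_Iic, ?_⟩
    exact hrange ▸ isPreconnected_range hp
  · push Not at hd
    obtain ⟨r, hrt, hr⟩ := hd
    obtain ⟨p, hp, -, hrange, -⟩ := h.exists_ray t
    refine ⟨curveImage γ (Ici t), insert_subset_insert (image_mono fun s hs hsJ => ?_),
      infty_mem_curveImage _ _, h.mem_curveImage.2 self_mem_Ici, ?_⟩
    · exact ht (hJ.out hr hsJ ⟨hrt, hs⟩)
    · exact hrange ▸ isPreconnected_range hp

lemma IsCurve.eventually_compl_Icc_subset_preimage {γ : ℝ → OnePoint ℂ} (h : IsCurve γ)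
    {U : Set (OnePoint ℂ)} (hU : U ∈ 𝓝 ∞) :
    ∀ᶠ R in atTop, (Icc (-R) R)ᶜ ⊆ γ ⁻¹' U := by
  have htop := eventually_forall_ge_atTop.2 (h.tendsto_atTop hU)
  have hbot := tendsto_neg_atTop_atBot.eventually
    (eventually_forall_le_atBot.2 (h.tendsto_atBot hU))
  filter_upwards [htop, hbot] with R htop hbot t ht
  rcases le_or_gt (-R) t with hle | hlt
  · exact htop t (not_le.1 fun hle' => ht ⟨hle, hle'⟩).le
  · exact hbot t hlt.le

lemma eventually_ordConnected_compl_Icc_inter {S : Set ℝ} (hS : OrdConnected S)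
    (hb : BddAbove S ∨ BddBelow S) : ∀ᶠ R in atTop, OrdConnected ((Icc (-R) R)ᶜ ∩ S) := by
  rcases hb with ⟨M, hM⟩ | ⟨M, hM⟩
  · filter_upwards [eventually_ge_atTop M] with R hR
    have : (Icc (-R) R)ᶜ ∩ S = Iio (-R) ∩ S := by
      ext t
      simp only [mem_inter_iff, mem_compl_iff, mem_Icc, mem_Iio, not_and, not_le]
      exact and_congr_left fun ht => ⟨fun h => not_le.1 fun h' =>
        (h h').not_ge ((hM ht).trans hR), fun h h' => absurd h' h.not_ge⟩
    exact this ▸ ordConnected_Iio.inter hS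
  · filter_upwards [eventually_ge_atTop (-M)] with R hR
    have : (Icc (-R) R)ᶜ ∩ S = Ioi R ∩ S := by
      ext t
      simp only [mem_inter_iff, mem_compl_iff, mem_Icc, mem_Ioi, not_and, not_le]
      exact and_congr_left fun ht => ⟨fun h => h ((neg_le.1 hR).trans (hM ht)), fun h _ => h⟩
    exact this ▸ ordConnected_Ioi.inter hS

namespace Pseudoline

variable {P : Pseudoline} {W N : Set (OnePoint ℂ)} {u : OnePoint ℂ}

lemma compl_inter_carrier (hN : ∞ ∉ N) :
    Nᶜ ∩ P.carrier = curveImage P.γ (P.γ ⁻¹' N)ᶜ := by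
  ext z
  constructor
  · rintro ⟨hz, rfl | ⟨t, -, rfl⟩⟩
    exacts [infty_mem_curveImage _ _, Or.inr ⟨t, hz, rfl⟩]
  · rintro (rfl | ⟨t, ht, rfl⟩)
    exacts [⟨hN, P.infty_mem_carrier⟩, ⟨ht, P.apply_mem_carrier t⟩]

lemma isConnected_compl_inter_carrier (hN : ∞ ∉ N) (hord : OrdConnected (P.γ ⁻¹' N)) :
    IsConnected (Nᶜ ∩ P.carrier) :=
  ⟨⟨∞, hN, P.infty_mem_carrier⟩,
    compl_inter_carrier hN ▸ P.isCurve.isPreconnected_curveImage_compl hord⟩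

lemma connectedIn_compl_carrier {x y : OnePoint ℂ} {b : Bool} (hx : x ∈ P.side b)
    (hy : y ∈ P.side b) : ConnectedIn P.carrierᶜ x y :=
  (connectedIn_of_isPreconnected (P.isPreconnected_side b) hx hy).mono
    fun _ => notMem_carrier_of_mem_side

lemma connectedIn_inter_side_of_isConnected {x y : OnePoint ℂ} {b : Bool} (hN : IsOpen N)
    (hconn : IsConnected (Nᶜ ∩ P.carrier)) (h : ConnectedIn N x y) (hx : x ∈ P.side b)
    (hy : y ∈ P.side b) : ConnectedIn (N ∩ P.side b) x y := by
  refine connectedIn_inter_side ?_ hx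
  have hjan := janiszewski hN.isClosed_compl P.isClosed_carrier hconn.nonempty
    hconn.isPreconnected (by rwa [compl_compl]) (connectedIn_compl_carrier hx hy)
  rwa [compl_union, compl_compl] at hjan

/-- The inductive step for local connectedness of cells: it suffices to shrink neighbourhoods of
`u` so that Janiszewski's theorem applies. -/
lemma connectedImKleinenAt_inter_side (hW : IsOpen W) (h : ConnectedImKleinenAt W u)
    (hU : ∀ U, IsOpen U → u ∈ U → ∃ O ⊆ U, IsOpen O ∧ u ∈ O ∧ IsConnected ((O ∩ W)ᶜ ∩ P.carrier))
    (b : Bool) : ConnectedImKleinenAt (W ∩ P.side b) u := by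
  intro U hUu
  obtain ⟨O, hOU, hO, huO, hconn⟩ := hU _ isOpen_interior (mem_interior_iff_mem_nhds.2 hUu)
  obtain ⟨V, hV, hVO, hVconn⟩ := h O (hO.mem_nhds huO)
  have hOU := hOU.trans interior_subset
  refine ⟨V, hV, hVO.trans hOU, fun x hx y hy => ?_⟩
  rw [← inter_assoc]
  refine (connectedIn_inter_side_of_isConnected (hO.inter hW) hconn
    (hVconn x ⟨hx.1, hx.2.1⟩ y ⟨hy.1, hy.2.1⟩) hx.2.2 hy.2.2).mono ?_
  exact inter_subset_inter_left _ (inter_subset_inter_left _ hOU)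

lemma connectedImKleinenAt_inter_side_of_notMem (hu : u ∉ P.carrier) (hW : IsOpen W)
    (h : ConnectedImKleinenAt W u) (b : Bool) : ConnectedImKleinenAt (W ∩ P.side b) u := by
  refine connectedImKleinenAt_inter_side hW h (fun U hU huU => ⟨U ∩ P.carrierᶜ,
    inter_subset_left, hU.inter P.isClosed_carrier.isOpen_compl, ⟨huU, hu⟩,
    isConnected_compl_inter_carrier (fun h => h.1.2 P.infty_mem_carrier) ?_⟩) b
  have : P.γ ⁻¹' (U ∩ P.carrierᶜ ∩ W) = ∅ :=
    eq_empty_of_forall_notMem fun t ht => ht.1.2 (P.apply_mem_carrier t)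
  exact this ▸ ordConnected_empty

lemma connectedImKleinenAt_inter_side_apply (t : ℝ) (hord : OrdConnected (P.γ ⁻¹' W))
    (hW : IsOpen W) (h : ConnectedImKleinenAt W (P.γ t)) (b : Bool) :
    ConnectedImKleinenAt (W ∩ P.side b) (P.γ t) := by
  refine connectedImKleinenAt_inter_side hW h (fun U hU huU => ?_) b
  obtain ⟨c, d, ht, hcd⟩ := mem_nhds_iff_exists_Ioo_subset.1
    ((hU.preimage P.isCurve.continuous).mem_nhds huU)
  have hclosed : IsClosed (curveImage P.γ (Ioo c d)ᶜ) := by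
    rw [← Ioi_inter_Iio, compl_inter, compl_Ioi, compl_Iio, ← curveImage_union]
    exact (P.isCurve.isClosed_curveImage_Iic c).union (P.isCurve.isClosed_curveImage_Ici d)
  have hpre : P.γ ⁻¹' (U ∩ (curveImage P.γ (Ioo c d)ᶜ)ᶜ ∩ W) = Ioo c d ∩ P.γ ⁻¹' W := by
    ext r
    simp only [mem_preimage, mem_inter_iff, mem_compl_iff, P.isCurve.mem_curveImage, not_not]
    exact and_congr_left fun _ => ⟨And.right, fun hr => ⟨hcd hr, hr⟩⟩
  refine ⟨U ∩ (curveImage P.γ (Ioo c d)ᶜ)ᶜ, inter_subset_left, hU.inter hclosed.isOpen_compl,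
    ⟨huU, fun h => P.isCurve.mem_curveImage.1 h ht⟩, isConnected_compl_inter_carrier ?_ ?_⟩
  · exact fun h => h.1.2 (infty_mem_curveImage _ _)
  · exact hpre ▸ ordConnected_Ioo.inter hord

lemma isClosed_image_Icc (c d : ℝ) : IsClosed (P.γ '' Icc c d) :=
  (isCompact_Icc.image P.isCurve.continuous).isClosed

lemma infty_notMem_image (S : Set ℝ) : ∞ ∉ P.γ '' S := by
  rintro ⟨t, -, ht⟩
  exact P.isCurve.ne_infty t ht

lemma connectedImKleinenAt_inter_side_infty (hinf : ∞ ∉ W) (hord : OrdConnected (P.γ ⁻¹' W))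
    (hbdd : BddAbove (P.γ ⁻¹' W) ∨ BddBelow (P.γ ⁻¹' W)) (hW : IsOpen W)
    (h : ConnectedImKleinenAt W ∞) (b : Bool) : ConnectedImKleinenAt (W ∩ P.side b) ∞ := by
  refine connectedImKleinenAt_inter_side hW h (fun U hU huU => ?_) b
  obtain ⟨R, hRU, hR⟩ := ((P.isCurve.eventually_compl_Icc_subset_preimage (hU.mem_nhds huU)).and
    (eventually_ordConnected_compl_Icc_inter hord hbdd)).exists
  have hpre : P.γ ⁻¹' (U ∩ (P.γ '' Icc (-R) R)ᶜ ∩ W) = (Icc (-R) R)ᶜ ∩ P.γ ⁻¹' W := by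
    ext r
    simp only [mem_preimage, mem_inter_iff, mem_compl_iff, P.isCurve.injective.mem_set_image]
    exact and_congr_left fun _ => ⟨And.right, fun hr => ⟨hRU hr, hr⟩⟩
  exact ⟨U ∩ (P.γ '' Icc (-R) R)ᶜ, inter_subset_left,
    hU.inter (isClosed_image_Icc _ _).isOpen_compl, ⟨huU, infty_notMem_image _⟩,
    isConnected_compl_inter_carrier (fun h => hinf h.2) (hpre ▸ hR)⟩

lemma connectedImKleinenAt_side_infty (h : ConnectedImKleinenAt univ (∞ : OnePoint ℂ)) (b : Bool) :
    ConnectedImKleinenAt (univ ∩ P.side b) ∞ := by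
  refine connectedImKleinenAt_inter_side isOpen_univ h (fun U hU huU => ?_) b
  obtain ⟨R, hRU, hR⟩ := ((P.isCurve.eventually_compl_Icc_subset_preimage (hU.mem_nhds huU)).and
    (eventually_ge_atTop 0)).exists
  have hinter : (U ∩ (P.γ '' Icc (-R) R)ᶜ ∩ univ)ᶜ ∩ P.carrier = P.γ '' Icc (-R) R := by
    rw [inter_univ]
    refine Subset.antisymm ?_ fun z hz => ⟨fun h => h.2 hz, ?_⟩
    · rintro z ⟨hz, rfl | ⟨t, -, rfl⟩⟩
      · exact absurd ⟨huU, infty_notMem_image _⟩ hz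
      · by_contra ht
        exact hz ⟨hRU fun h => ht ⟨t, h, rfl⟩, ht⟩
    · obtain ⟨t, -, rfl⟩ := hz
      exact P.apply_mem_carrier t
  refine ⟨U ∩ (P.γ '' Icc (-R) R)ᶜ, inter_subset_left,
    hU.inter (isClosed_image_Icc _ _).isOpen_compl, ⟨huU, infty_notMem_image _⟩, ?_⟩
  rw [hinter]
  exact (isConnected_Icc (by linarith)).image _ P.isCurve.continuous.continuousOn

end Pseudoline

lemma connectedImKleinenAt_univ {X : Type*} [TopologicalSpace X] [LocallyConnectedSpace X]
    (u : X) : ConnectedImKleinenAt univ u := by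
  intro U hU
  obtain ⟨V, hV, hconn, hVU⟩ :=
    locallyConnectedSpace_iff_connected_subsets.1 inferInstance u U hU
  refine ⟨V, hV, hVU, fun x hx y hy => ⟨V, ?_, hconn, hx.1, hy.1⟩⟩
  rwa [inter_univ]

namespace IsArranged

variable {ι : Type*} {L : ι → Pseudoline}

lemma isPreconnected_cell (hL : IsArranged L) (I : Finset ι) (hI : I.Nonempty) (s : ι → Bool) :
    IsPreconnected (cell L I s) := by
  classical
  induction hI using Finset.Nonempty.cons_induction with
  | singleton i =>
    simpa [cell] using (L i).isPreconnected_side (s i)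
  | cons i I hi hI ih =>
    rw [Finset.cons_eq_insert, cell_insert]
    refine isPreconnected_of_forall_connectedIn fun x hx y hy => ?_
    exact Pseudoline.connectedIn_inter_side_of_isConnected (isOpen_cell I s)
      (Pseudoline.isConnected_compl_inter_carrier (infty_notMem_cell hI s)
        (hL.ordConnected_preimage_cell hi s))
      (connectedIn_of_isPreconnected ih hx.1 hy.1) hx.2 hy.2

lemma connectedImKleinenAt_cell (hL : IsArranged L) (I : Finset ι) (s : ι → Bool)
    (u : OnePoint ℂ) : ConnectedImKleinenAt (cell L I s) u := by
  classical
  induction I using Finset.induction_on generalizing u with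
  | empty => exact cell_empty (L := L) s ▸ connectedImKleinenAt_univ u
  | insert i I hi ih =>
    rw [cell_insert]
    have hopen := isOpen_cell (L := L) I s
    have hord := hL.ordConnected_preimage_cell hi s
    by_cases hu : u ∈ (L i).carrier
    · rcases hu with rfl | ⟨t, -, rfl⟩
      · rcases I.eq_empty_or_nonempty with rfl | hI
        · rw [cell_empty] at ih ⊢
          exact Pseudoline.connectedImKleinenAt_side_infty (ih _) (s i)
        · exact Pseudoline.connectedImKleinenAt_inter_side_infty (infty_notMem_cell hI s) hord
            (hL.bddAbove_or_bddBelow_preimage_cell hi hI s) hopen (ih _) (s i)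
      · exact Pseudoline.connectedImKleinenAt_inter_side_apply t hord hopen (ih _) (s i)
    · exact Pseudoline.connectedImKleinenAt_inter_side_of_notMem hu hopen (ih u) (s i)

end IsArranged

/-! ### Paths contain arcs -/

section Arc

variable {X : Type*}

section LoopErasure

variable {f : ℝ → X} {K : Set ℝ} {a b s t : ℝ}

/-- `K` is what remains of the parameter interval `[0, 1]` of the path `f` after some open
intervals on whose endpoints `f` takes equal values (the loops of `f`) have been removed. -/
structure IsLoopErasure (f : ℝ → X) (K : Set ℝ) : Prop where
  isClosed : IsClosed K
  subset_Icc : K ⊆ Icc 0 1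
  zero_mem : (0 : ℝ) ∈ K
  one_mem : (1 : ℝ) ∈ K
  apply_eq_of_gap : ∀ a ∈ K, ∀ b ∈ K, a < b → Disjoint (Ioo a b) K → f a = f b

lemma isLoopErasure_Icc (f : ℝ → X) : IsLoopErasure f (Icc 0 1) where
  isClosed := isClosed_Icc
  subset_Icc := subset_rfl
  zero_mem := by simp
  one_mem := by simp
  apply_eq_of_gap a ha b hb hab hdisj := by
    obtain ⟨c, hac, hcb⟩ := exists_between hab
    exact absurd ⟨ha.1.trans hac.le, hcb.le.trans hb.2⟩ (disjoint_left.1 hdisj ⟨hac, hcb⟩)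

lemma exists_isGreatest_inter_Iic (hK : IsClosed K) (ha : a ∈ K) (hat : a ≤ t) :
    ∃ r, IsGreatest (K ∩ Iic t) r :=
  ⟨_, (hK.inter isClosed_Iic).isGreatest_csSup ⟨a, ha, hat⟩ (bddAbove_Iic.mono inter_subset_right)⟩

lemma exists_isLeast_inter_Ici (hK : IsClosed K) (hb : b ∈ K) (htb : t ≤ b) :
    ∃ q, IsLeast (K ∩ Ici t) q :=
  ⟨_, (hK.inter isClosed_Ici).isLeast_csInf ⟨b, hb, htb⟩ (bddBelow_Ici.mono inter_subset_right)⟩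

namespace IsLoopErasure

lemma apply_eq_of_isGreatest_of_isLeast (hK : IsLoopErasure f K) (hst : s ≤ t)
    (hdisj : Disjoint (Ioo s t) K) (ha : IsGreatest (K ∩ Iic s) a)
    (hb : IsLeast (K ∩ Ici t) b) : f a = f b := by
  rcases (ha.1.2.trans (hst.trans hb.1.2)).eq_or_lt with rfl | hab
  · rfl
  refine hK.apply_eq_of_gap a ha.1.1 b hb.1.1 hab (disjoint_left.2 fun x hx hxK => ?_)
  have hsx : s < x := lt_of_not_ge fun h => hx.1.not_ge (ha.2 ⟨hxK, h⟩)
  have hxt : x < t := lt_of_not_ge fun h => hx.2.not_ge (hb.2 ⟨hxK, h⟩)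
  exact disjoint_left.1 hdisj ⟨hsx, hxt⟩ hxK

lemma diff_Ioo (hK : IsLoopErasure f K) (hs : s ∈ K) (ht : t ∈ K) (hst : f s = f t) :
    IsLoopErasure f (K \ Ioo s t) where
  isClosed := hK.isClosed.sdiff isOpen_Ioo
  subset_Icc := sdiff_subset.trans hK.subset_Icc
  zero_mem := ⟨hK.zero_mem, fun h => h.1.not_ge (hK.subset_Icc hs).1⟩
  one_mem := ⟨hK.one_mem, fun h => h.2.not_ge (hK.subset_Icc ht).2⟩
  apply_eq_of_gap a ha b hb hab hdisj := by
    by_cases hgap : Disjoint (Ioo a b) K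
    · exact hK.apply_eq_of_gap a ha.1 b hb.1 hab hgap
    obtain ⟨k, hk, hkK⟩ := not_disjoint_iff.1 hgap
    have hkst : k ∈ Ioo s t := by_contra fun h => disjoint_left.1 hdisj hk ⟨hkK, h⟩
    have hs' : s ∉ Ioo a b := fun h => disjoint_left.1 hdisj h ⟨hs, fun h => h.1.false⟩
    have ht' : t ∉ Ioo a b := fun h => disjoint_left.1 hdisj h ⟨ht, fun h => h.2.false⟩
    have has : a = s := by grind
    have hbt : b = t := by grind
    rw [has, hbt, hst]

lemma sInter [TopologicalSpace X] [T2Space X] (hf : Continuous f) {c : Set (Set ℝ)}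
    (hc : ∀ K ∈ c, IsLoopErasure f K) (hchain : IsChain (· ⊆ ·) c) (hne : c.Nonempty) :
    IsLoopErasure f (⋂₀ c) where
  isClosed := isClosed_sInter fun K hK => (hc K hK).isClosed
  subset_Icc := (sInter_subset_of_mem hne.some_mem).trans (hc _ hne.some_mem).subset_Icc
  zero_mem K hK := (hc K hK).zero_mem
  one_mem K hK := (hc K hK).one_mem
  apply_eq_of_gap a ha b hb hab hdisj := by
    by_contra hfab
    obtain ⟨U, V, hU, hV, haU, hbV, hUV⟩ := t2_separation hfab
    obtain ⟨c', hac', hcb'⟩ := exists_between hab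
    obtain ⟨u, ⟨hau, huc⟩, hu⟩ := (mem_nhdsGE_iff_exists_mem_Ioc_Ico_subset hac').1
      (mem_nhdsWithin_of_mem_nhds (hf.continuousAt (hU.mem_nhds haU)))
    obtain ⟨v, ⟨hcv, hvb⟩, hv⟩ := (mem_nhdsLE_iff_exists_mem_Ico_Ioc_subset hcb').1
      (mem_nhdsWithin_of_mem_nhds (hf.continuousAt (hV.mem_nhds hbV)))
    obtain ⟨s, has, hsu⟩ := exists_between hau
    obtain ⟨t, hvt, htb⟩ := exists_between hvb
    have hempty : Icc s t ∩ ⋂ K : c, (K : Set ℝ) = ∅ := by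
      rw [← sInter_eq_iInter]
      exact disjoint_iff_inter_eq_empty.1 (hdisj.mono_left (Icc_subset_Ioo has htb))
    have : Nonempty c := hne.to_subtype
    have hdir : Directed (· ⊇ ·) fun K : c => (K : Set ℝ) := fun A B =>
      (hchain.total A.2 B.2).elim (fun h => ⟨A, subset_rfl, h⟩) fun h => ⟨B, h, subset_rfl⟩
    obtain ⟨⟨K, hKc⟩, hKst⟩ := isCompact_Icc.elim_directed_family_closed (fun K : c => (K : Set ℝ))
      (fun K => (hc K K.2).isClosed) hempty hdir
    obtain ⟨r, hr⟩ := exists_isGreatest_inter_Iic (hc K hKc).isClosed (ha K hKc) has.le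
    obtain ⟨q, hq⟩ := exists_isLeast_inter_Ici (hc K hKc).isClosed (hb K hKc) htb.le
    have hrq : f r = f q := (hc K hKc).apply_eq_of_isGreatest_of_isLeast
      ((hsu.le.trans huc).trans (hcv.trans hvt.le))
      ((disjoint_iff_inter_eq_empty.2 hKst).mono_left Ioo_subset_Icc_self) hr hq
    have hrU : f r ∈ U := hu ⟨hr.2 ⟨ha K hKc, has.le⟩, hr.1.2.trans_lt hsu⟩
    have hqV : f q ∈ V := hv ⟨hvt.trans_le hq.1.2, hq.2 ⟨hb K hKc, htb.le⟩⟩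
    exact disjoint_left.1 hUV hrU (hrq ▸ hqV)

lemma exists_minimal [TopologicalSpace X] [T2Space X] (hf : Continuous f) :
    ∃ K, IsLoopErasure f K ∧ ∀ s ∈ K, ∀ t ∈ K, f s = f t → Disjoint (Ioo s t) K := by
  obtain ⟨K, -, hK, hmin⟩ := zorn_superset_nonempty {K | IsLoopErasure f K}
    (fun c hc hchain hne =>
      ⟨⋂₀ c, sInter hf hc hchain hne, fun _ => sInter_subset_of_mem⟩) _ (isLoopErasure_Icc f)
  refine ⟨K, hK, fun s hs t ht hst => disjoint_right.2 fun x hx => ?_⟩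
  exact (hmin (hK.diff_Ioo hs ht hst) sdiff_subset hx).2

lemma isGreatest_sSup (hK : IsLoopErasure f K) (ht : 0 ≤ t) :
    IsGreatest (K ∩ Iic t) (sSup (K ∩ Iic t)) :=
  (hK.isClosed.inter isClosed_Iic).isGreatest_csSup ⟨0, hK.zero_mem, ht⟩
    (bddAbove_Iic.mono inter_subset_right)

lemma sSup_inter_Iic_of_mem (ht : t ∈ K) : sSup (K ∩ Iic t) = t :=
  IsGreatest.csSup_eq ⟨⟨ht, self_mem_Iic⟩, fun _ hx => hx.2⟩

lemma exists_mem_uIcc_apply_sSup_eq (hK : IsLoopErasure f K) (hs : 0 ≤ s) (ht : t ∈ K) :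
    ∃ x ∈ uIcc t s, f (sSup (K ∩ Iic s)) = f x := by
  have hr := hK.isGreatest_sSup hs
  rcases le_or_gt t s with hts | hst
  · exact ⟨_, mem_uIcc.2 (.inl ⟨hr.2 ⟨ht, hts⟩, hr.1.2⟩), rfl⟩
  · obtain ⟨q, hq⟩ := exists_isLeast_inter_Ici hK.isClosed ht hst.le
    exact ⟨q, mem_uIcc.2 (.inr ⟨hq.1.2, hq.2 ⟨ht, hst.le⟩⟩),
      hK.apply_eq_of_isGreatest_of_isLeast le_rfl (by simp) hr hq⟩

lemma continuousOn_apply_sSup [TopologicalSpace X] (hK : IsLoopErasure f K) (hf : Continuous f) :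
    ContinuousOn (fun t => f (sSup (K ∩ Iic t))) (Ici 0) := by
  intro t _
  by_cases htK : t ∈ K
  · intro U (hU : U ∈ 𝓝 (f (sSup (K ∩ Iic t))))
    rw [sSup_inter_Iic_of_mem htK] at hU
    rw [mem_map]
    obtain ⟨ε, hε, hball⟩ := Metric.mem_nhds_iff.1 (hf.continuousAt.preimage_mem_nhds hU)
    filter_upwards [self_mem_nhdsWithin, mem_nhdsWithin_of_mem_nhds (Metric.ball_mem_nhds t hε)]
      with s hs hst
    obtain ⟨x, hx, hfx⟩ := hK.exists_mem_uIcc_apply_sSup_eq hs htK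
    rw [mem_preimage, hfx]
    exact hball ((convex_ball t ε).ordConnected.uIcc_subset (Metric.mem_ball_self hε) hst hx)
  · obtain ⟨ε, hε, hball⟩ := Metric.isOpen_iff.1 hK.isClosed.isOpen_compl t htK
    have hconst : ∀ s ∈ Metric.ball t ε, K ∩ Iic s = K ∩ Iic t := by
      intro s hs
      ext x
      refine and_congr_right fun hx => not_iff_not.1 ?_
      have hxst : x ∉ uIcc t s := fun h => hball
        ((convex_ball t ε).ordConnected.uIcc_subset (Metric.mem_ball_self hε) hs h) hx
      grind [mem_uIcc]
    refine ContinuousAt.continuousWithinAt <|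
      (continuousAt_const (y := f (sSup (K ∩ Iic t)))).congr ?_
    filter_upwards [Metric.ball_mem_nhds t hε] with s hs
    rw [hconst s hs]

end IsLoopErasure

lemma exists_continuous_ordConnected_fibers [TopologicalSpace X] [T2Space X] (hf : Continuous f) :
    ∃ g : ℝ → X, Continuous g ∧ g 0 = f 0 ∧ g 1 = f 1 ∧ g '' Icc 0 1 ⊆ f '' Icc 0 1 ∧
      ∀ x, (Icc 0 1 ∩ g ⁻¹' {x}).OrdConnected := by
  obtain ⟨K, hK, hmin⟩ := IsLoopErasure.exists_minimal hf
  set r : ℝ → ℝ := fun t => sSup (K ∩ Iic t)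
  have hr : ∀ t ∈ Icc (0 : ℝ) 1, IsGreatest (K ∩ Iic t) (r t) := fun t ht =>
    hK.isGreatest_sSup ht.1
  have hmono : ∀ s ∈ Icc (0 : ℝ) 1, ∀ t ∈ Icc (0 : ℝ) 1, s ≤ t → r s ≤ r t := fun s hs t ht hst =>
    (hr t ht).2 ⟨(hr s hs).1.1, (hr s hs).1.2.trans hst⟩
  have hproj : ∀ t ∈ Icc (0 : ℝ) 1, max 0 t = t := fun t ht => max_eq_right ht.1
  refine ⟨fun t => f (r (max 0 t)), ?_, ?_, ?_, ?_, fun x => ⟨?_⟩⟩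
  · exact (hK.continuousOn_apply_sSup hf).comp_continuous (by fun_prop) fun t => le_max_left 0 t
  · simpa only [hproj 0 (by simp)] using
      congrArg f (IsLoopErasure.sSup_inter_Iic_of_mem hK.zero_mem)
  · simpa only [hproj 1 (by simp)] using
      congrArg f (IsLoopErasure.sSup_inter_Iic_of_mem hK.one_mem)
  · rintro _ ⟨t, ht, rfl⟩
    exact ⟨r t, hK.subset_Icc (hr t ht).1.1, by simp only [hproj t ht]⟩
  · rintro s ⟨hs, hsx⟩ t ⟨ht, htx⟩ y hy
    have hy' : y ∈ Icc (0 : ℝ) 1 := ⟨hs.1.trans hy.1, hy.2.trans ht.2⟩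
    simp only [mem_preimage, mem_singleton_iff, hproj s hs, hproj t ht] at hsx htx
    refine ⟨hy', ?_⟩
    simp only [mem_preimage, mem_singleton_iff, hproj y hy']
    rcases (hmono s hs y hy' hy.1).eq_or_lt with h | hsy
    · rw [← h, hsx]
    rcases (hmono y hy' t ht hy.2).eq_or_lt with h | hyt
    · rw [h, htx]
    exact absurd (hr y hy').1.1 (disjoint_left.1
      (hmin _ (hr s hs).1.1 _ (hr t ht).1.1 (hsx.trans htx.symm)) ⟨hsy, hyt⟩)

end LoopErasure

section Weight

variable [MetricSpace X] {g : ℝ → X}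

lemma continuous_infDist_image_uIcc (hg : Continuous g) (x : X) (a : ℝ) :
    Continuous fun t => Metric.infDist x (g '' uIcc a t) := by
  have heq : ∀ t, Metric.infDist x (g '' uIcc a t) =
      sInf ((fun θ => dist x (g ((1 - θ) • a + θ • t))) '' Icc (0 : ℝ) 1) := by
    intro t
    rw [Metric.infDist_eq_iInf, ← segment_eq_uIcc, segment_eq_image, image_image,
      ← sInf_image' (f := dist x), image_image]
  simp only [heq]
  refine isCompact_Icc.continuous_sInf (f := fun t θ => dist x (g ((1 - θ) • a + θ • t))) ?_
  change Continuous fun q : ℝ × ℝ => dist x (g ((1 - q.2) • a + q.2 • q.1))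
  fun_prop

lemma infDist_image_uIcc_anti {s t : ℝ} (x : X) (hs : 0 ≤ s) (hst : s ≤ t) :
    Metric.infDist x (g '' uIcc 0 t) ≤ Metric.infDist x (g '' uIcc 0 s) :=
  Metric.infDist_le_infDist_of_subset
    (image_mono (uIcc_subset_uIcc_left (mem_uIcc.2 (.inl ⟨hs, hst⟩)))) (nonempty_uIcc.image g)

/-- Dense choices of `x` among the points of the path make the distance from `x` to the initial
segment of the path drop strictly as soon as the segment acquires a new endpoint. -/
lemma exists_infDist_lt_min_infDist (hg : Continuous g) {s t : ℝ} (hs : 0 ≤ s) (hst : s ≤ t)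
    (ht : t ≤ 1) (hne : g s ≠ g t) (hfib : ∀ x, (Icc 0 1 ∩ g ⁻¹' {x}).OrdConnected) :
    ∃ n, Metric.infDist (g (TopologicalSpace.denseSeq ℝ n)) (g '' uIcc 0 t) <
      min 1 (Metric.infDist (g (TopologicalSpace.denseSeq ℝ n)) (g '' uIcc 0 s)) := by
  have hnew : g t ∉ g '' uIcc 0 s := by
    rw [uIcc_of_le hs]
    rintro ⟨r, hr, hrt⟩
    exact hne ((hfib (g t)).out ⟨⟨hr.1, hr.2.trans (hst.trans ht)⟩, hrt⟩
      ⟨⟨hs.trans hst, ht⟩, rfl⟩ ⟨hr.2, hst⟩).2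
  have hclosed : IsClosed (g '' uIcc 0 s) := (isCompact_uIcc.image hg).isClosed
  set δ := Metric.infDist (g t) (g '' uIcc 0 s)
  have hδ : 0 < δ := (hclosed.notMem_iff_infDist_pos (nonempty_uIcc.image g)).1 hnew
  obtain ⟨n, hn⟩ := (TopologicalSpace.denseRange_denseSeq ℝ).exists_mem_open
    (Metric.isOpen_ball.preimage hg)
    (show (g ⁻¹' Metric.ball (g t) (min 1 (δ / 2))).Nonempty from
      ⟨t, Metric.mem_ball_self (by positivity)⟩)
  rw [mem_preimage, Metric.mem_ball] at hn
  refine ⟨n, lt_min ?_ ?_⟩ <;>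
    have hle := Metric.infDist_le_dist_of_mem (x := g (TopologicalSpace.denseSeq ℝ n))
      (mem_image_of_mem g (right_mem_uIcc (a := (0 : ℝ)) (b := t)))
  · exact hle.trans_lt (hn.trans_le (min_le_left _ _))
  · have htri := Metric.infDist_le_infDist_add_dist (s := g '' uIcc 0 s)
      (x := g t) (y := g (TopologicalSpace.denseSeq ℝ n))
    rw [dist_comm (g t)] at htri
    linarith [hn.trans_le (min_le_right _ _)]

lemma exists_continuous_monotoneOn_eq_iff (hg : Continuous g)
    (hfib : ∀ x, (Icc 0 1 ∩ g ⁻¹' {x}).OrdConnected) :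
    ∃ w : ℝ → ℝ, Continuous w ∧ MonotoneOn w (Icc 0 1) ∧
      ∀ s ∈ Icc (0 : ℝ) 1, ∀ t ∈ Icc (0 : ℝ) 1, w s = w t ↔ g s = g t := by
  set m : ℕ → ℝ → ℝ := fun n t =>
    Metric.infDist (g (TopologicalSpace.denseSeq ℝ n)) (g '' uIcc 0 t)
  set F : ℕ → ℝ → ℝ := fun n t => (1 / 2) ^ n * min 1 (m n t)
  have hbound : ∀ n t, ‖F n t‖ ≤ (1 / 2) ^ n := by
    intro n t
    have hmin : 0 ≤ min 1 (m n t) := le_min zero_le_one Metric.infDist_nonneg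
    rw [Real.norm_of_nonneg (by positivity)]
    exact mul_le_of_le_one_right (by positivity) (min_le_left _ _)
  have hsum : ∀ t, Summable fun n => F n t := fun t =>
    summable_geometric_two.of_norm_bounded fun n => hbound n t
  have hanti : ∀ n, ∀ s ∈ Icc (0 : ℝ) 1, ∀ t ∈ Icc (0 : ℝ) 1, s ≤ t → F n t ≤ F n s := by
    intro n s hs t _ hst
    exact mul_le_mul_of_nonneg_left
      (min_le_min_left 1 (infDist_image_uIcc_anti _ hs.1 hst)) (by positivity)
  have hcont : Continuous fun t => ∑' n, F n t := continuous_tsum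
    (fun n => continuous_const.mul (continuous_const.min (continuous_infDist_image_uIcc hg _ 0)))
    summable_geometric_two hbound
  refine ⟨fun t => -∑' n, F n t, hcont.neg, fun s hs t ht hst => neg_le_neg <|
    (hsum t).tsum_le_tsum (fun n => hanti n s hs t ht hst) (hsum s), fun s hs t ht => ?_⟩
  wlog hst : s ≤ t generalizing s t
  · rw [eq_comm, this t ht s hs (le_of_not_ge hst), eq_comm]
  refine ⟨fun heq => by_contra fun hne => ?_, fun heq => ?_⟩
  · obtain ⟨n, hn⟩ := exists_infDist_lt_min_infDist hg hs.1 hst ht.2 hne hfib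
    have hlt : F n t < F n s :=
      mul_lt_mul_of_pos_left ((min_le_right _ _).trans_lt hn) (by positivity)
    exact ((hsum t).tsum_lt_tsum (fun k => hanti k s hs t ht hst) hlt (hsum s)).ne
      (neg_injective heq).symm
  · have himage : g '' uIcc 0 t = g '' uIcc 0 s := by
      rw [uIcc_of_le hs.1, uIcc_of_le ht.1, ← Icc_union_Icc_eq_Icc hs.1 hst, image_union]
      refine union_eq_left.2 (image_subset_iff.2 fun r hr => ⟨s, ⟨hs.1, le_rfl⟩, ?_⟩)
      exact ((hfib (g s)).out ⟨hs, rfl⟩ ⟨ht, heq.symm⟩ hr).2.symm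
    simp only [F, m, himage]

lemma exists_continuous_bijective_weight (hg : Continuous g) (h01 : g 0 ≠ g 1)
    (hfib : ∀ x, (Icc 0 1 ∩ g ⁻¹' {x}).OrdConnected) :
    ∃ φ : C(Icc (0 : ℝ) 1, Icc (0 : ℝ) 1), φ 0 = 0 ∧ φ 1 = 1 ∧ Function.Surjective φ ∧
      ∀ s t, φ s = φ t ↔ g s = g t := by
  obtain ⟨w, hw, hmono, heq⟩ := exists_continuous_monotoneOn_eq_iff hg hfib
  have hw01 : 0 < w 1 - w 0 := sub_pos.2 <|
    (hmono (by simp) (by simp) zero_le_one).lt_of_ne (mt (heq 0 (by simp) 1 (by simp)).1 h01)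
  have hmem : ∀ t : Icc (0 : ℝ) 1, (w t - w 0) / (w 1 - w 0) ∈ Icc (0 : ℝ) 1 := fun t =>
    ⟨div_nonneg (sub_nonneg.2 (hmono (by simp) t.2 t.2.1)) hw01.le,
      (div_le_one hw01).2 (sub_le_sub_right (hmono t.2 (by simp) t.2.2) _)⟩
  set φ : C(Icc (0 : ℝ) 1, Icc (0 : ℝ) 1) :=
    ⟨fun t => ⟨_, hmem t⟩, Continuous.subtype_mk (by fun_prop) _⟩
  have hφ₀ : φ 0 = 0 := Subtype.ext (by simp [φ])
  have hφ₁ : φ 1 = 1 := Subtype.ext (by simp [φ, hw01.ne'])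
  refine ⟨φ, hφ₀, hφ₁, fun y => ?_, fun s t => ?_⟩
  · exact mem_range_of_exists_le_of_exists_ge φ.continuous
      ⟨0, hφ₀.trans_le y.2.1⟩ ⟨1, y.2.2.trans hφ₁.ge⟩
  · rw [← heq s s.2 t t.2, Subtype.ext_iff]
    exact (div_left_inj' hw01.ne').trans sub_left_inj

end Weight

lemma exists_injective_path [MetricSpace X] {x y : X} (p : Path x y) (hxy : x ≠ y) :
    ∃ q : Path x y, Function.Injective q ∧ range q ⊆ range p := by
  obtain ⟨g, hg, hg₀, hg₁, hsub, hfib⟩ := exists_continuous_ordConnected_fibers p.continuous_extend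
  rw [p.extend_zero] at hg₀
  rw [p.extend_one] at hg₁
  obtain ⟨φ, hφ₀, hφ₁, hsurj, hφ⟩ :=
    exists_continuous_bijective_weight hg (by rwa [hg₀, hg₁]) hfib
  have hquot : IsQuotientMap φ := φ.continuous.isClosedMap.isQuotientMap φ.continuous hsurj
  let gI : C(Icc (0 : ℝ) 1, X) := ⟨fun t => g t, by fun_prop⟩
  let q := hquot.lift gI fun s t h => (hφ s t).1 h
  have hq : ∀ t, q (φ t) = g t := fun t =>
    congrArg (fun r : C(Icc (0 : ℝ) 1, X) => r t) (hquot.lift_comp gI fun s t h => (hφ s t).1 h)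
  refine ⟨⟨q, ?_, ?_⟩, ?_, ?_⟩
  · exact (congrArg q hφ₀).symm.trans ((hq 0).trans hg₀)
  · exact (congrArg q hφ₁).symm.trans ((hq 1).trans hg₁)
  · refine hsurj.forall₂.2 fun s t hst => (hφ s t).2 ?_
    rw [← hq, ← hq]
    exact hst
  · refine range_subset_iff.2 (hsurj.forall.2 fun t => ?_)
    change q (φ t) ∈ range p
    rw [hq, ← p.extend_range]
    exact image_subset_range _ _ (hsub ⟨t, t.2, rfl⟩)

end Arc

/-! ### Accessibility -/

section Accessibility

variable {X : Type*} [TopologicalSpace X]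

/-- The infinite concatenation of composable paths, the `n`-th one being traversed on
`[n, n + 1]`. -/
def concatPaths {x : ℕ → X} (p : ∀ n, Path (x n) (x (n + 1))) (t : ℝ) : X :=
  (p ⌊t⌋₊).extend (t - ⌊t⌋₊)

lemma concatPaths_of_floor_eq {x : ℕ → X} (p : ∀ n, Path (x n) (x (n + 1))) {t : ℝ} {n : ℕ}
    (h : ⌊t⌋₊ = n) : concatPaths p t = (p n).extend (t - n) := by
  subst h
  rfl

lemma continuous_concatPaths {x : ℕ → X} (p : ∀ n, Path (x n) (x (n + 1))) :
    Continuous (concatPaths p) := by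
  have hcont : ∀ n : ℕ, ContinuousOn (concatPaths p) (Iic (n : ℝ)) := by
    intro n
    induction n with
    | zero =>
      refine (continuousOn_const (c := x 0)).congr fun t ht => ?_
      have ht₀ : t ≤ 0 := by simpa using ht
      rw [concatPaths_of_floor_eq p (Nat.floor_of_nonpos ht₀), Nat.cast_zero, sub_zero,
        (p 0).extend_of_le_zero ht₀]
    | succ n ih =>
      have hle : (n : ℝ) ≤ (n + 1 : ℕ) := by simp
      rw [← Iic_union_Icc_eq_Iic hle]
      refine ih.union_of_isClosed ?_ isClosed_Iic isClosed_Icc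
      refine ((p n).continuous_extend.comp (continuous_sub_right (n : ℝ))).continuousOn.congr ?_
      rintro t ⟨hnt, htn⟩
      rcases htn.eq_or_lt with rfl | hlt
      · rw [concatPaths_of_floor_eq p (Nat.floor_natCast (n + 1))]
        simp
      · rw [Nat.cast_succ] at hlt
        exact concatPaths_of_floor_eq p
          ((Nat.floor_eq_iff (n.cast_nonneg.trans hnt)).2 ⟨hnt, hlt⟩)
  refine continuous_iff_continuousAt.2 fun t => ?_
  obtain ⟨n, hn⟩ := exists_nat_gt t
  exact (hcont n).continuousAt (Iic_mem_nhds hn)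

lemma ConnectedIn.joinedIn [LocallyPathConnectedSpace X] {W : Set X} {x y : X}
    (h : ConnectedIn W x y) (hW : IsOpen W) : JoinedIn W x y := by
  have hx : x ∈ W := h.mem_left
  have hpath : IsPathConnected (connectedComponentIn W x) :=
    hW.connectedComponentIn.isConnected_iff_isPathConnected.1
      (isConnected_connectedComponentIn_iff.2 hx)
  exact (hpath.joinedIn x (mem_connectedComponentIn hx) y
    ((connectedIn_iff_mem_connectedComponentIn hx).1 h)).mono (connectedComponentIn_subset W x)

lemma ConnectedImKleinenAt.exists_path_sequence [LocallyPathConnectedSpace X] {W : Set X}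
    {x u : X} (h : ConnectedImKleinenAt W u) (hW : IsOpen W) (hpre : IsPreconnected W)
    (hx : x ∈ W) (hu : u ∈ closure W) {U : ℕ → Set X} (hU : ∀ n, U n ∈ 𝓝 u)
    (hUo : ∀ n, IsOpen (U n)) :
    ∃ (z : ℕ → X) (p : ∀ n, Path (z n) (z (n + 1))), z 0 = x ∧ (∀ n t, p n t ∈ W) ∧
      ∀ n t, p (n + 1) t ∈ U n := by
  choose V hV _ hVW using fun n => h (U n) (hU n)
  have hz : ∀ n, ∃ z ∈ W, ∀ k ≤ n, z ∈ V k := fun n => by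
    obtain ⟨z, hzV, hzW⟩ := mem_closure_iff_nhds.1 hu _
      ((biInter_mem (finite_Iic n)).2 fun k _ => hV k)
    exact ⟨z, hzW, fun k hk => mem_iInter₂.1 hzV k hk⟩
  choose z hzW hzV using hz
  have hfirst : JoinedIn W x (z 0) :=
    (connectedIn_of_isPreconnected hpre hx (hzW 0)).joinedIn hW
  have hnext : ∀ n, JoinedIn (U n ∩ W) (z n) (z (n + 1)) := fun n =>
    (hVW n _ ⟨hzV n n le_rfl, hzW n⟩ _ ⟨hzV (n + 1) n n.le_succ, hzW (n + 1)⟩).joinedIn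
      ((hUo n).inter hW)
  let y : ℕ → X := fun n => Nat.casesOn n x z
  let p : ∀ n, Path (y n) (y (n + 1)) := fun n =>
    match n with
    | 0 => hfirst.somePath
    | n + 1 => (hnext n).somePath
  refine ⟨y, p, rfl, ?_, fun n t => ((hnext n).somePath_mem t).1⟩
  rintro (_ | n) t
  · exact hfirst.somePath_mem t
  · exact ((hnext n).somePath_mem t).2

lemma ConnectedImKleinenAt.exists_path [FirstCountableTopology X] [LocallyPathConnectedSpace X]
    {W : Set X} {x u : X} (h : ConnectedImKleinenAt W u) (hW : IsOpen W)
    (hpre : IsPreconnected W) (hx : x ∈ W) (hu : u ∈ closure W) :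
    ∃ p : Path x u, ∀ t, t ≠ 1 → p t ∈ W := by
  obtain ⟨U, hUo, hU⟩ := (nhds_basis_opens u).exists_antitone_subbasis
  obtain ⟨z, p, rfl, hpW, hpU⟩ :=
    h.exists_path_sequence hW hpre hx hu hU.mem fun n => (hUo n).2
  have hlim : Tendsto (concatPaths p) atTop (𝓝 u) := by
    refine hU.tendsto_right_iff.2 fun n _ => ?_
    filter_upwards [eventually_ge_atTop ((n + 1 : ℕ) : ℝ)] with t ht
    obtain ⟨k, hk⟩ := Nat.exists_eq_add_of_le' (n.succ_pos.trans_le (Nat.le_floor ht))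
    have hnk : n ≤ k := by
      have := Nat.le_floor ht
      omega
    rw [concatPaths, hk]
    exact hU.antitone hnk (hpU k _)
  have hcont := continuousOn_ite_div_one_sub (continuous_concatPaths p) hlim
  refine ⟨⟨⟨_, hcont.comp_continuous continuous_subtype_val fun t => t.2.2⟩, ?_, ?_⟩, ?_⟩
  · simp [concatPaths]
  · simp
  · intro t ht
    have hne : (t : ℝ) ≠ 1 := fun h => ht (Subtype.ext h)
    change (if (t : ℝ) = 1 then u else concatPaths p (t / (1 - t))) ∈ W
    rw [if_neg hne]
    exact hpW _ _

end Accessibility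

section OpenArc

variable {X : Type*} [TopologicalSpace X] {u v w : X} {O O₁ O₂ : Set X}

/-- `O` is an open arc with endpoints `u` and `v`, the endpoints being excluded from `O`. -/
def IsOpenArc (u v : X) (O : Set X) : Prop :=
  ∃ p : Path u v, Function.Injective p ∧ O = p '' Ioo 0 1

lemma eq_or_mem_of_trans_apply_eq {p : Path u v} {q : Path v w} (hp : Function.Injective p)
    (hq : Function.Injective q) {s t : unitInterval} (hst : p.trans q s = p.trans q t) :
    s = t ∨ p.trans q s ∈ (range p ∩ range q) \ {v} := by
  wlog hle : s ≤ t generalizing s t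
  · exact (this hst.symm (le_of_not_ge hle)).imp Eq.symm (hst ▸ ·)
  rw [or_iff_not_imp_right]
  intro hmem
  rw [Path.trans_apply, Path.trans_apply] at hst
  rw [Path.trans_apply] at hmem
  refine Subtype.ext ?_
  split_ifs at hst hmem with hs ht ht
  · have := congrArg Subtype.val (hp hst)
    linarith
  · have hsv : p ⟨2 * s, _⟩ = v := by_contra fun h => hmem ⟨⟨⟨_, rfl⟩, hst ▸ ⟨_, rfl⟩⟩, h⟩
    have hs1 := congrArg Subtype.val (hp (hsv.trans p.target.symm))
    have ht0 := congrArg Subtype.val (hq ((hst.symm.trans hsv).trans q.source.symm))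
    simp only [Icc.coe_one, Icc.coe_zero] at hs1 ht0
    linarith
  · exact absurd ((Subtype.coe_le_coe.2 hle).trans ht) hs
  · have := congrArg Subtype.val (hq hst)
    linarith

lemma injective_trans_of_inter_range_subset {p : Path u v} {q : Path v w}
    (hp : Function.Injective p) (hq : Function.Injective q)
    (hpq : range p ∩ range q ⊆ {v}) : Function.Injective (p.trans q) := fun _ _ hst =>
  (eq_or_mem_of_trans_apply_eq hp hq hst).resolve_right fun h => h.2 (hpq h.1)

lemma image_Ioo_eq_range_diff {p : Path u v} (hp : Function.Injective p) :
    p '' Ioo 0 1 = range p \ {u, v} := by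
  have hIoo : Ioo (0 : unitInterval) 1 = {0, 1}ᶜ := by
    ext t
    simp [unitInterval.pos_iff_ne_zero, unitInterval.lt_one_iff_ne_one]
  rw [hIoo, image_compl_eq_range_sdiff_image hp, image_pair, p.source, p.target]

namespace IsOpenArc

lemma symm (h : IsOpenArc u v O) : IsOpenArc v u O := by
  obtain ⟨p, hp, rfl⟩ := h
  have hp' : Function.Injective p.symm := hp.comp unitInterval.symm_involutive.injective
  refine ⟨p.symm, hp', ?_⟩
  rw [image_Ioo_eq_range_diff hp, image_Ioo_eq_range_diff hp', p.symm_range, pair_comm]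

lemma left_mem_closure (h : IsOpenArc u v O) : u ∈ closure O := by
  obtain ⟨p, -, rfl⟩ := h
  refine image_closure_subset_closure_image p.continuous ⟨0, ?_, p.source⟩
  rw [closure_Ioo zero_ne_one]
  simp

lemma right_mem_closure (h : IsOpenArc u v O) : v ∈ closure O := h.symm.left_mem_closure

lemma union (h₁ : IsOpenArc u v O₁) (h₂ : IsOpenArc v w O₂) (hdisj : Disjoint O₁ O₂)
    (hu : u ∉ O₂) (hw : w ∉ O₁) (huw : u ≠ w) : IsOpenArc u w (O₁ ∪ {v} ∪ O₂) := by
  obtain ⟨p, hp, rfl⟩ := h₁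
  obtain ⟨q, hq, rfl⟩ := h₂
  have huv : u ≠ v := fun h => zero_ne_one (hp (p.source.trans (h.trans p.target.symm)))
  have hvw : v ≠ w := fun h => zero_ne_one (hq (q.source.trans (h.trans q.target.symm)))
  rw [image_Ioo_eq_range_diff hp] at *
  rw [image_Ioo_eq_range_diff hq] at *
  have hpq : range p ∩ range q ⊆ {v} := by
    rintro x ⟨hxp, hxq⟩
    have hx : ¬(x ∈ range p \ {u, v} ∧ x ∈ range q \ {v, w}) := fun h =>
      disjoint_left.1 hdisj h.1 h.2
    simp only [Set.mem_sdiff, mem_singleton_iff] at *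
    grind
  have htrans := injective_trans_of_inter_range_subset hp hq hpq
  refine ⟨p.trans q, htrans, ?_⟩
  rw [image_Ioo_eq_range_diff htrans, Path.trans_range]
  have hup : u ∈ range p := ⟨0, p.source⟩
  have hvp : v ∈ range p := ⟨1, p.target⟩
  have hwq : w ∈ range q := ⟨1, q.target⟩
  ext x
  grind

end IsOpenArc

end OpenArc

variable {ι : Type*} {L : ι → Pseudoline} in
lemma IsArranged.exists_isOpenArc_subset_cell (hL : IsArranged L) {I : Finset ι}
    (hI : I.Nonempty) {s : ι → Bool} {u v : OnePoint ℂ} (hu : u ∈ closure (cell L I s))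
    (hv : v ∈ closure (cell L I s)) (huv : u ≠ v) : ∃ O, IsOpenArc u v O ∧ O ⊆ cell L I s := by
  let _ : MetricSpace (OnePoint ℂ) := TopologicalSpace.metrizableSpaceMetric (OnePoint ℂ)
  obtain ⟨x, hx⟩ := closure_nonempty_iff.1 ⟨u, hu⟩
  have haccess : ∀ z ∈ closure (cell L I s), ∃ p : Path x z, ∀ t, t ≠ 1 → p t ∈ cell L I s :=
    fun z hz => (hL.connectedImKleinenAt_cell I s z).exists_path (isOpen_cell I s)
      (hL.isPreconnected_cell I hI s) hx hz
  obtain ⟨p, hp⟩ := haccess u hu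
  obtain ⟨q, hq⟩ := haccess v hv
  obtain ⟨r, hr, hrpq⟩ := exists_injective_path (p.symm.trans q) huv
  refine ⟨_, ⟨r, hr, rfl⟩, ?_⟩
  rw [image_Ioo_eq_range_diff hr]
  rintro y ⟨hy, hyuv⟩
  rcases (Path.trans_range _ _).subset (hrpq hy) with hy | ⟨t, rfl⟩
  · rw [Path.symm_range] at hy
    obtain ⟨t, rfl⟩ := hy
    exact hp t fun h => hyuv (.inl (by rw [h, p.target]))
  · exact hq t fun h => hyuv (.inr (by rw [h, q.target]; rfl))

/-! ### Removing finitely many points -/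

lemma inter_frontier_nonempty {X : Type*} [TopologicalSpace X] {M F : Set X}
    (hM : IsPreconnected M) (h : (M ∩ F).Nonempty) (h' : (M \ F).Nonempty) :
    (M ∩ frontier F).Nonempty := by
  by_contra hno
  have hfr : ∀ x ∈ M, x ∉ frontier F := fun x hx hx' => hno ⟨x, hx, hx'⟩
  have hint : ∀ x ∈ M, x ∈ closure F → x ∈ interior F := fun x hx hcl =>
    by_contra fun hx' => hfr x hx ⟨hcl, hx'⟩
  obtain ⟨x, hx, hxF⟩ := h
  obtain ⟨y, hy, hyF⟩ := h'
  obtain ⟨z, -, hz, hz'⟩ := hM (interior F) (closure F)ᶜ isOpen_interior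
    isClosed_closure.isOpen_compl (fun z hz => (em (z ∈ closure F)).imp (hint z hz) id)
    ⟨x, hx, hint x hx (subset_closure hxF)⟩ ⟨y, hy, fun h => hyF (interior_subset (hint y hy h))⟩
  exact hz' (subset_closure (interior_subset hz))

lemma isPreconnected_sdiff_singleton_of_nhd {X : Type*} [TopologicalSpace X] [T1Space X]
    {W N : Set X} {c : X} (hW : IsOpen W) (hpre : IsPreconnected W) (hN : IsOpen N) (hc : c ∈ N)
    (hNW : N ⊆ W) (hNpre : IsPreconnected (N \ {c})) : IsPreconnected (W \ {c}) := by
  have key : ∀ U V : Set X, IsOpen U → IsOpen V → W \ {c} ⊆ U ∪ V → W \ {c} ∩ (U ∩ V) = ∅ →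
      N \ {c} ⊆ U → W \ {c} ⊆ U := by
    intro U V hU hV hUV hdisj hNU
    have hWc : IsOpen (W \ {c}) := hW.sdiff isClosed_singleton
    have hcover : W ⊆ W \ {c} ∩ U ∪ N ∪ W \ {c} ∩ V := fun x hx => by
      rcases eq_or_ne x c with rfl | hxc
      · exact Or.inl (Or.inr hc)
      · exact (hUV ⟨hx, hxc⟩).imp (fun h => Or.inl ⟨⟨hx, hxc⟩, h⟩) fun h => ⟨⟨hx, hxc⟩, h⟩
    have hempty : W ∩ ((W \ {c} ∩ U ∪ N) ∩ (W \ {c} ∩ V)) = ∅ := by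
      refine eq_empty_of_forall_notMem ?_
      rintro x ⟨-, hxUN, hx, hxV⟩
      have hxU : x ∈ U := hxUN.elim (fun h => h.2) fun h => hNU ⟨h, hx.2⟩
      exact hdisj.subset ⟨hx, hxU, hxV⟩
    rcases isPreconnected_iff_subset_of_disjoint.1 hpre _ _ ((hWc.inter hU).union hN)
      (hWc.inter hV) hcover hempty with h | h
    · exact fun x hx => (h hx.1).elim (fun h => h.2) fun h => hNU ⟨h, hx.2⟩
    · exact absurd rfl (h (hNW hc)).1.2
  refine isPreconnected_iff_subset_of_disjoint.2 fun U V hU hV hUV hdisj => ?_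
  have hNWc : N \ {c} ⊆ W \ {c} := sdiff_subset_sdiff_left hNW
  rcases isPreconnected_iff_subset_of_disjoint.1 hNpre U V hU hV (hNWc.trans hUV)
    (subset_empty_iff.1 (hdisj ▸ inter_subset_inter_left _ hNWc)) with h | h
  · exact Or.inl (key U V hU hV hUV hdisj h)
  · exact Or.inr (key V U hV hU (union_comm U V ▸ hUV) (inter_comm U V ▸ hdisj) h)

lemma isPreconnected_ball_sdiff_singleton {E : Type*} [NormedAddCommGroup E]
    [InnerProductSpace ℝ E] (hE : 1 < Module.rank ℝ E) (c : E) {r : ℝ} (hr : 0 < r) :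
    IsPreconnected (Metric.ball c r \ {c}) := by
  set T := OpenPartialHomeomorph.univBall c r
  have hsource : T.source = univ := OpenPartialHomeomorph.univBall_source c r
  have htarget : T.target = Metric.ball c r := OpenPartialHomeomorph.univBall_target c hr
  have hcont : ContinuousOn T {0}ᶜ :=
    (OpenPartialHomeomorph.continuous_univBall c r).continuousOn
  have himage : T '' {0}ᶜ = Metric.ball c r \ {c} := by
    have hinj : InjOn T univ := hsource ▸ T.injOn
    rw [compl_eq_univ_sdiff, (hinj.mono (subset_univ _)).image_sdiff, univ_inter, image_singleton,
      OpenPartialHomeomorph.univBall_apply_zero, ← hsource, T.image_source_eq_target, htarget]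
  exact himage ▸ (isConnected_compl_singleton_of_one_lt_rank hE 0).isPreconnected.image T hcont

lemma isPreconnected_sdiff_singleton {W : Set (OnePoint ℂ)} (hW : IsOpen W)
    (hpre : IsPreconnected W) (hinf : ∞ ∉ W) (z : OnePoint ℂ) : IsPreconnected (W \ {z}) := by
  by_cases hz : z ∈ W
  swap
  · rwa [sdiff_singleton_eq_self hz]
  obtain ⟨c, rfl⟩ := ne_infty_iff_exists.1 (ne_of_mem_of_not_mem hz hinf)
  obtain ⟨r, hr, hball⟩ := Metric.isOpen_iff.1 (hW.preimage continuous_coe) c hz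
  refine isPreconnected_sdiff_singleton_of_nhd hW hpre
    (isOpenEmbedding_coe.isOpenMap _ Metric.isOpen_ball) ⟨c, Metric.mem_ball_self hr, rfl⟩
    (image_subset_iff.2 hball) ?_
  rw [← image_singleton, ← image_sdiff OnePoint.coe_injective]
  exact (isPreconnected_ball_sdiff_singleton (by simp [Complex.rank_real_complex]) c hr).image _
    continuous_coe.continuousOn

lemma isPreconnected_sdiff_of_finite {W Z : Set (OnePoint ℂ)} (hW : IsOpen W)
    (hpre : IsPreconnected W) (hinf : ∞ ∉ W) (hZ : Z.Finite) : IsPreconnected (W \ Z) := by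
  induction Z, hZ using Set.Finite.induction_on with
  | empty => simpa
  | @insert z Z _ hZ ih =>
    rw [insert_eq, union_comm, ← sdiff_sdiff]
    exact isPreconnected_sdiff_singleton (hW.sdiff hZ.isClosed) ih (fun h => hinf h.1) z

lemma nonempty_sdiff_of_finite {X : Type*} [TopologicalSpace X] [T1Space X]
    [∀ x : X, (𝓝[≠] x).NeBot] {W Z : Set X} (hW : IsOpen W) (hne : W.Nonempty) (hZ : Z.Finite) :
    (W \ Z).Nonempty := by
  rw [sdiff_eq, compl_eq_univ_sdiff]
  exact (dense_univ.sdiff_finite hZ).inter_open_nonempty W hW hne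

instance (x : OnePoint ℂ) : (𝓝[≠] x).NeBot := by
  induction x using OnePoint.rec <;> infer_instance

lemma isPreconnected_compl_infty : IsPreconnected ({∞}ᶜ : Set (OnePoint ℂ)) :=
  compl_infty (X := ℂ) ▸ isPreconnected_range continuous_coe

/-! ### Points in closures of cells -/

/-- The filter of neighbourhoods of an end of the real line: `+∞` for `true`, `-∞` for `false`. -/
def endFilter (e : Bool) : Filter ℝ := bif e then atTop else atBot

instance (e : Bool) : (endFilter e).NeBot := by
  cases e
  exacts [inferInstanceAs (atBot : Filter ℝ).NeBot, inferInstanceAs (atTop : Filter ℝ).NeBot]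

lemma IsCurve.tendsto_endFilter {γ : ℝ → OnePoint ℂ} (h : IsCurve γ) :
    ∀ e, Tendsto γ (endFilter e) (𝓝 ∞)
  | true => h.tendsto_atTop
  | false => h.tendsto_atBot

namespace Pseudoline.Crosses

variable {P Q : Pseudoline} {b e : Bool}

lemma exists_eventually_mem_side (h : P.Crosses Q) (e : Bool) :
    ∃ b, (∀ᶠ t in endFilter e, P.γ t ∈ Q.side b) ∧
      ∀ᶠ t in endFilter (!e), P.γ t ∈ Q.side (!b) := by
  obtain ⟨t, b, hlt, -, hgt⟩ := h
  have hbot : ∀ᶠ r in endFilter false, P.γ r ∈ Q.side b := (eventually_lt_atBot t).mono hlt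
  have htop : ∀ᶠ r in endFilter true, P.γ r ∈ Q.side (!b) := (eventually_gt_atTop t).mono hgt
  cases e
  · exact ⟨b, hbot, htop⟩
  · exact ⟨!b, htop, b.not_not.symm ▸ hbot⟩

lemma eventually_mem_side_not (h : P.Crosses Q)
    (hev : ∀ᶠ t in endFilter e, P.γ t ∈ Q.side b) :
    ∀ᶠ t in endFilter (!e), P.γ t ∈ Q.side (!b) := by
  obtain ⟨c, hc, hc'⟩ := h.exists_eventually_mem_side e
  obtain ⟨t, htb, htc⟩ := (hev.and hc).exists
  rwa [eq_of_mem_side htb htc]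

lemma eventually_mem_side_of_closure {C : Set (OnePoint ℂ)} (h : P.Crosses Q)
    (hC : C ⊆ Q.side b) (hev : ∀ᶠ t in endFilter e, P.γ t ∈ closure C) :
    ∀ᶠ t in endFilter e, P.γ t ∈ Q.side b := by
  obtain ⟨c, hc, -⟩ := h.exists_eventually_mem_side e
  obtain ⟨t, htC, htc⟩ := (hev.and hc).exists
  have hcb : c = b := by
    by_contra hne
    rw [Bool.eq_not.2 hne] at htc
    exact notMem_side_not_of_mem_closure (closure_mono hC htC) htc
  rwa [← hcb]

lemma eventually_mem_side {t₁ t₂ : ℝ} (h : P.Crosses Q) (h₁ : P.γ t₁ ∈ Q.side b)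
    (h₂ : P.γ t₂ ∈ Q.side (!b)) :
    ∀ᶠ t in endFilter (decide (t₂ < t₁)), P.γ t ∈ Q.side b := by
  obtain ⟨t, c, ht⟩ := h.exists_mem_iff
  rcases Bool.eq_or_eq_not b c with rfl | rfl
  · have hlt : t₁ < t₂ := ((ht t₁).1.1 h₁).trans ((ht t₂).2.2.1 h₂)
    rw [decide_eq_false hlt.not_gt]
    exact (eventually_lt_atBot t).mono fun r hr => (ht r).1.2 hr
  · have hlt : t₂ < t₁ := ((ht t₂).1.1 (c.not_not ▸ h₂)).trans ((ht t₁).2.2.1 h₁)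
    rw [decide_eq_true hlt]
    exact (eventually_gt_atTop t).mono fun r hr => (ht r).2.2.2 hr

lemma apply_mem_side_of_pos_of_neg {t₀ t : ℝ} (h : P.Crosses Q) (h₀ : P.γ t₀ ∈ Q.carrier)
    (ht : P.γ t ∈ Q.side b) (x : ℝ) :
    (0 < x → P.γ (t₀ + x * (t - t₀)) ∈ Q.side b) ∧
      (x < 0 → P.γ (t₀ + x * (t - t₀)) ∈ Q.side (!b)) := by
  obtain ⟨r, c, hr⟩ := h.exists_mem_iff
  obtain rfl : t₀ = r := (hr t₀).2.1.1 h₀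
  rcases Bool.eq_or_eq_not b c with rfl | rfl
  · have hlt := (hr t).1.1 ht
    exact ⟨fun hx => (hr _).1.2 (by nlinarith), fun hx => (hr _).2.2.2 (by nlinarith)⟩
  · have hlt := (hr t).2.2.1 ht
    rw [Bool.not_not]
    exact ⟨fun hx => (hr _).2.2.2 (by nlinarith), fun hx => (hr _).1.2 (by nlinarith)⟩

lemma eq_of_mem_carrier {p q : OnePoint ℂ} (h : P.Crosses Q) (hp : p ≠ ∞) (hq : q ≠ ∞)
    (hpP : p ∈ P.carrier) (hpQ : p ∈ Q.carrier) (hqP : q ∈ P.carrier) (hqQ : q ∈ Q.carrier) :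
    p = q := by
  obtain ⟨t, b, ht⟩ := h.exists_mem_iff
  obtain ⟨s, -, rfl⟩ := hpP.resolve_left hp
  obtain ⟨r, -, rfl⟩ := hqP.resolve_left hq
  rw [(ht s).2.1.1 hpQ, (ht r).2.1.1 hqQ]

end Pseudoline.Crosses

section CellClosure

variable {ι : Type*} {L : ι → Pseudoline} {I J : Finset ι} {s : ι → Bool} {q : OnePoint ℂ} {i : ι}

lemma closure_cell_subset (hi : i ∈ I) : closure (cell L I s) ⊆ closure ((L i).side (s i)) :=
  closure_mono fun _ hz => hz i hi

lemma mem_side_of_mem_closure_cell (hq : q ∈ closure (cell L I s)) (hi : i ∈ I)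
    (h : q ∉ (L i).carrier) : q ∈ (L i).side (s i) :=
  by_contra fun h' => Pseudoline.notMem_side_not_of_mem_closure (closure_cell_subset hi hq)
    (Pseudoline.mem_side_not h h')

lemma exists_mem_carrier_of_mem_frontier_cell (hq : q ∈ frontier (cell L I s)) :
    ∃ i ∈ I, q ∈ (L i).carrier := by
  by_contra! h
  rw [(isOpen_cell I s).frontier_eq] at hq
  exact hq.2 fun i hi => mem_side_of_mem_closure_cell hq.1 hi (h i hi)

lemma exists_mem_frontier_cell_of_finite (hI : I.Nonempty) (hne : (cell L I s).Nonempty)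
    {Z : Set (OnePoint ℂ)} (hZ : Z.Finite) : ∃ q ∈ frontier (cell L I s), q ≠ ∞ ∧ q ∉ Z := by
  have hmem : ∀ x ∉ insert ∞ Z, x ∈ ({∞}ᶜ \ Z : Set (OnePoint ℂ)) :=
    fun x hx => ⟨fun h => hx (Or.inl h), fun h => hx (Or.inr h)⟩
  obtain ⟨i, hi⟩ := hI
  obtain ⟨x, hx, hxZ⟩ := nonempty_sdiff_of_finite (isOpen_cell I s) hne (hZ.insert ∞)
  obtain ⟨y, hy, hyZ⟩ :=
    nonempty_sdiff_of_finite ((L i).isOpen_side _) ((L i).nonempty_side (!s i)) (hZ.insert ∞)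
  obtain ⟨q, ⟨hqi, hqZ⟩, hq⟩ := inter_frontier_nonempty
    (isPreconnected_sdiff_of_finite isOpen_compl_singleton isPreconnected_compl_infty (by simp) hZ)
    ⟨x, hmem x hxZ, hx⟩ ⟨y, hmem y hyZ, fun h => Pseudoline.notMem_side_not (h i hi) hy⟩
  exact ⟨q, hq, hqi, hqZ⟩

lemma mem_closure_cell_of_forall_mem_side (hq : q ∈ closure (cell L J s))
    (h : ∀ j ∈ I, j ∉ J → q ∈ (L j).side (s j)) : q ∈ closure (cell L I s) := by
  classical
  refine closure_mono (fun z hz j hj => ?_) ((isOpen_cell {j ∈ I | j ∉ J} s).inter_closure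
    ⟨fun j hj => h j (Finset.mem_filter.1 hj).1 (Finset.mem_filter.1 hj).2, hq⟩)
  by_cases hJ : j ∈ J
  exacts [hz.2 j hJ, hz.1 j (Finset.mem_filter.2 ⟨hj, hJ⟩)]

lemma mem_closure_cell_of_mem_carrier (hq : q ∈ (L i).carrier)
    (h : ∀ j ∈ I, j ≠ i → q ∈ (L j).side (s j)) : q ∈ closure (cell L I s) := by
  refine mem_closure_cell_of_forall_mem_side (J := {i}) ?_
    fun j hj hji => h j hj (Finset.mem_singleton.not.1 hji)
  have : cell L {i} s = (L i).side (s i) := by simp [cell]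
  exact this ▸ (L i).carrier_subset_closure_side _ hq

lemma eventually_mem_closure_cell {e : Bool}
    (h : ∀ j ∈ I, j ≠ i → ∀ᶠ t in endFilter e, (L i).γ t ∈ (L j).side (s j)) :
    ∀ᶠ t in endFilter e, (L i).γ t ∈ closure (cell L I s) := by
  have hall : ∀ᶠ t in endFilter e, ∀ j ∈ I, j ≠ i → (L i).γ t ∈ (L j).side (s j) :=
    (eventually_all_finset I).2 fun j hj => eventually_imp_distrib_left.2 (h j hj)
  exact hall.mono fun t ht => mem_closure_cell_of_mem_carrier ((L i).apply_mem_carrier t) ht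

lemma infty_mem_closure_cell {e : Bool}
    (h : ∀ j ∈ I, j ≠ i → ∀ᶠ t in endFilter e, (L i).γ t ∈ (L j).side (s j)) :
    ∞ ∈ closure (cell L I s) :=
  isClosed_closure.mem_of_tendsto ((L i).isCurve.tendsto_endFilter e)
    (eventually_mem_closure_cell h)

end CellClosure

namespace IsArranged

variable {ι : Type*} {L : ι → Pseudoline} {I : Finset ι} {s : ι → Bool}

lemma finite_setOf_mem_carrier [Finite ι] (hL : IsArranged L) :
    {z | ∃ i j, i ≠ j ∧ z ∈ (L i).carrier ∧ z ∈ (L j).carrier}.Finite := by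
  have hsub : {z | ∃ i j, i ≠ j ∧ z ∈ (L i).carrier ∧ z ∈ (L j).carrier} ⊆
      insert ∞ (⋃ i, ⋃ j, {z | z ≠ ∞ ∧ i ≠ j ∧ z ∈ (L i).carrier ∧ z ∈ (L j).carrier}) := by
    rintro z ⟨i, j, h⟩
    exact (eq_or_ne z ∞).imp id fun hz => mem_iUnion₂.2 ⟨i, j, hz, h⟩
  refine (Set.Finite.insert _ (finite_iUnion fun i => finite_iUnion fun j => ?_)).subset hsub
  refine Set.Subsingleton.finite ?_
  rintro p ⟨hp, hij, hpi, hpj⟩ q ⟨hq, -, hqi, hqj⟩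
  exact (hL hij).eq_of_mem_carrier hp hq hpi hpj hqi hqj

lemma exists_apply_mem_side [Finite ι] (hL : IsArranged L) (hI : I.Nonempty)
    (hne : (cell L I s).Nonempty) :
    ∃ i ∈ I, ∃ t, ∀ j ∈ I, j ≠ i → (L i).γ t ∈ (L j).side (s j) := by
  obtain ⟨q, hq, hqi, hqZ⟩ := exists_mem_frontier_cell_of_finite hI hne hL.finite_setOf_mem_carrier
  obtain ⟨i, hi, hqK⟩ := exists_mem_carrier_of_mem_frontier_cell hq
  obtain ⟨t, -, rfl⟩ := hqK.resolve_left hqi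
  exact ⟨i, hi, t, fun j hj hji => mem_side_of_mem_closure_cell hq.1 hj fun h =>
    hqZ ⟨i, j, hji.symm, (L i).apply_mem_carrier t, h⟩⟩

lemma mem_closure_cell_of_forall_mem_carrier [Finite ι] (hL : IsArranged L) (hI : I.Nonempty)
    {b : OnePoint ℂ} (hb : b ≠ ∞) (hbI : ∀ i ∈ I, b ∈ (L i).carrier)
    (hne : (cell L I s).Nonempty) :
    b ∈ closure (cell L I s) ∧ b ∈ closure (cell L I fun i => !s i) := by
  obtain ⟨i, hi, t, ht⟩ := hL.exists_apply_mem_side hI hne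
  obtain ⟨t₀, -, rfl⟩ := (hbI i hi).resolve_left hb
  have htendsto : Tendsto (fun x => (L i).γ (t₀ + x * (t - t₀))) (𝓝 0) (𝓝 ((L i).γ t₀)) := by
    have hcont : Continuous fun x => (L i).γ (t₀ + x * (t - t₀)) :=
      (L i).isCurve.continuous.comp (by fun_prop)
    simpa using hcont.tendsto 0
  have hside : ∀ j ∈ I, j ≠ i → ∀ x, _ := fun j hj hji =>
    (hL hji.symm).apply_mem_side_of_pos_of_neg (hbI j hj) (ht j hj hji)
  constructor
  · refine isClosed_closure.mem_of_tendsto (htendsto.mono_left (nhdsWithin_le_nhds (s := Ioi 0))) ?_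
    filter_upwards [self_mem_nhdsWithin] with x hx
    exact mem_closure_cell_of_mem_carrier ((L i).apply_mem_carrier _) fun j hj hji =>
      (hside j hj hji x).1 hx
  · refine isClosed_closure.mem_of_tendsto (htendsto.mono_left (nhdsWithin_le_nhds (s := Iio 0))) ?_
    filter_upwards [self_mem_nhdsWithin] with x hx
    exact mem_closure_cell_of_mem_carrier ((L i).apply_mem_carrier _) fun j hj hji =>
      (hside j hj hji x).2 hx

lemma cell_subset_side (hL : IsArranged L) (hI : I.Nonempty) {i : ι} {x : OnePoint ℂ} {b : Bool}
    (hmiss : ∀ t, (L i).γ t ∉ cell L I s) (hx : x ∈ cell L I s) (hxb : x ∈ (L i).side b) :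
    cell L I s ⊆ (L i).side b := by
  refine Pseudoline.subset_side_of_isPreconnected (hL.isPreconnected_cell I hI s) ?_ hx hxb
  rw [disjoint_left]
  rintro z hz (rfl | ⟨t, -, rfl⟩)
  exacts [infty_notMem_cell hI _ hz, hmiss t hz]

lemma exists_eventually_mem_side (hL : IsArranged L) (hI : I.Nonempty)
    (h : (cell L I s).Nonempty) (h' : (cell L I fun i => !s i).Nonempty) :
    ∃ i ∈ I, ∃ e, ∀ j ∈ I, j ≠ i → ∀ᶠ t in endFilter e, (L i).γ t ∈ (L j).side (s j) := by
  classical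
  induction hI using Finset.Nonempty.cons_induction with
  | singleton i =>
    exact ⟨i, by simp, true, fun j hj hji => absurd (Finset.mem_singleton.1 hj) hji⟩
  | cons τ I hτ hI ih =>
    rw [Finset.cons_eq_insert] at *
    rw [cell_insert] at h h'
    obtain ⟨x, hx, hxτ⟩ := h
    obtain ⟨y, hy, hyτ⟩ := h'
    obtain ⟨i, hi, e, he⟩ := ih ⟨x, hx⟩ ⟨y, hy⟩
    have hcross := hL (ne_of_mem_of_not_mem hi hτ)
    suffices (∀ᶠ t in endFilter e, (L i).γ t ∈ (L τ).side (s τ)) ∨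
        ∃ e, ∀ j ∈ I, ∀ᶠ t in endFilter e, (L τ).γ t ∈ (L j).side (s j) by
      rcases this with hev | ⟨e, hev⟩
      · refine ⟨i, Finset.mem_insert_of_mem hi, e, fun j hj hji => ?_⟩
        rcases Finset.mem_insert.1 hj with rfl | hjI
        exacts [hev, he j hjI hji]
      · exact ⟨τ, Finset.mem_insert_self _ _, e, fun j hj hjτ =>
          hev j (Finset.mem_of_mem_insert_of_ne hj hjτ)⟩
    by_cases hA : ∃ t₁, (L τ).γ t₁ ∈ cell L I s
    swap
    · exact Or.inl (hcross.eventually_mem_side_of_closure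
        (hL.cell_subset_side hI (not_exists.1 hA) hx hxτ) (eventually_mem_closure_cell he))
    by_cases hB : ∃ t₂, (L τ).γ t₂ ∈ cell L I fun i => !s i
    · obtain ⟨t₁, h₁⟩ := hA
      obtain ⟨t₂, h₂⟩ := hB
      exact Or.inr ⟨decide (t₂ < t₁), fun j hj =>
        (hL (ne_of_mem_of_not_mem hj hτ).symm).eventually_mem_side (h₁ j hj) (h₂ j hj)⟩
    · have hopp := hcross.eventually_mem_side_of_closure (e := !e)
        (hL.cell_subset_side hI (not_exists.1 hB) hy hyτ)
        (eventually_mem_closure_cell fun j hj hji =>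
          (hL hji.symm).eventually_mem_side_not (he j hj hji))
      exact Or.inl (by simpa using hcross.eventually_mem_side_not hopp)

end IsArranged

/-! ### Arcs crossing every curve at most once -/

/-- The arc `O` meets the sides `b` and `b'` of `P` and crosses `P` at most once, and not at all if
`b = b'`. -/
structure CrossesAtMostOnce (O : Set (OnePoint ℂ)) (P : Pseudoline) (b b' : Bool) : Prop where
  inter_left_nonempty : (O ∩ P.side b).Nonempty
  inter_right_nonempty : (O ∩ P.side b').Nonempty
  inter_carrier_subsingleton : (O ∩ P.carrier).Subsingleton
  subset_side : b = b' → O ⊆ P.side b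

namespace CrossesAtMostOnce

variable {O O₁ O₂ : Set (OnePoint ℂ)} {P : Pseudoline} {b b' c : Bool} {v : OnePoint ℂ}

lemma of_subset_side (h : O ⊆ P.side b) (hne : O.Nonempty) : CrossesAtMostOnce O P b b where
  inter_left_nonempty := by rwa [inter_eq_left.2 h]
  inter_right_nonempty := by rwa [inter_eq_left.2 h]
  inter_carrier_subsingleton _ hz :=
    absurd hz.2 (Pseudoline.notMem_carrier_of_mem_side (h hz.1))
  subset_side _ := h

lemma symm (h : CrossesAtMostOnce O P b b') : CrossesAtMostOnce O P b' b where
  inter_left_nonempty := h.inter_right_nonempty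
  inter_right_nonempty := h.inter_left_nonempty
  inter_carrier_subsingleton := h.inter_carrier_subsingleton
  subset_side hb := hb ▸ h.subset_side hb.symm

lemma union_of_ne (h₁ : CrossesAtMostOnce O₁ P b b) (h₂ : CrossesAtMostOnce O₂ P b' b')
    (hne : b ≠ b') : CrossesAtMostOnce (O₁ ∪ {v} ∪ O₂) P b b' where
  inter_left_nonempty := h₁.inter_left_nonempty.mono (by gcongr; grind)
  inter_right_nonempty := h₂.inter_left_nonempty.mono (by gcongr; grind)
  inter_carrier_subsingleton := by
    refine subsingleton_singleton (a := v) |>.anti ?_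
    rintro z ⟨(hz | hz) | hz, hzP⟩
    · exact absurd hzP (Pseudoline.notMem_carrier_of_mem_side (h₁.subset_side rfl hz))
    · exact hz
    · exact absurd hzP (Pseudoline.notMem_carrier_of_mem_side (h₂.subset_side rfl hz))
  subset_side h := absurd h hne

lemma union_left (h₁ : CrossesAtMostOnce O₁ P b b) (hv : v ∈ P.side b)
    (h₂ : CrossesAtMostOnce O₂ P b b') : CrossesAtMostOnce (O₁ ∪ {v} ∪ O₂) P b b' := by
  have hside : O₁ ∪ {v} ⊆ P.side b :=
    union_subset (h₁.subset_side rfl) (singleton_subset_iff.2 hv)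
  refine ⟨h₁.inter_left_nonempty.mono (by gcongr; grind),
    h₂.inter_right_nonempty.mono (by gcongr; grind),
    h₂.inter_carrier_subsingleton.anti ?_, fun h => union_subset hside (h₂.subset_side h)⟩
  rintro z ⟨hz | hz, hzP⟩
  · exact absurd hzP (Pseudoline.notMem_carrier_of_mem_side (hside hz))
  · exact ⟨hz, hzP⟩

lemma union_right (h₁ : CrossesAtMostOnce O₁ P b b') (hv : v ∈ P.side b')
    (h₂ : CrossesAtMostOnce O₂ P b' b') : CrossesAtMostOnce (O₁ ∪ {v} ∪ O₂) P b b' := by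
  have := (h₂.union_left hv h₁.symm).symm
  rwa [union_comm, union_comm O₂, ← union_assoc] at this

lemma union_not (h₁ : CrossesAtMostOnce O₁ P b c) (hv : v ∈ P.side c)
    (h₂ : CrossesAtMostOnce O₂ P c (!b)) : CrossesAtMostOnce (O₁ ∪ {v} ∪ O₂) P b (!b) := by
  rcases Bool.eq_or_eq_not c b with rfl | rfl
  · exact h₁.union_left hv h₂
  · exact h₁.union_right hv h₂

end CrossesAtMostOnce

lemma IsOpenArc.nonempty {u v : OnePoint ℂ} {O : Set (OnePoint ℂ)} (h : IsOpenArc u v O) :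
    O.Nonempty :=
  closure_nonempty_iff.1 ⟨u, h.left_mem_closure⟩

lemma Pseudoline.disjoint_of_subset_side {P : Pseudoline} {b : Bool} {A B : Set (OnePoint ℂ)}
    (hA : A ⊆ P.side b) (hB : B ⊆ P.side (!b)) : Disjoint A B :=
  disjoint_left.2 fun _ hz hz' => notMem_side_not (hA hz) (hB hz')

lemma IsOpenArc.union_of_subset_side {P : Pseudoline} {b : Bool} {u v w : OnePoint ℂ}
    {O₁ O₂ : Set (OnePoint ℂ)} (h₁ : IsOpenArc u v O₁) (h₂ : IsOpenArc v w O₂)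
    (hO₁ : O₁ ⊆ P.side b) (hO₂ : O₂ ⊆ P.side (!b)) (huw : u ≠ w) :
    IsOpenArc u w (O₁ ∪ {v} ∪ O₂) := by
  have hu : u ∉ P.side (!b) :=
    Pseudoline.notMem_side_not_of_mem_closure (closure_mono hO₁ h₁.left_mem_closure)
  have hw : w ∉ P.side (!!b) :=
    Pseudoline.notMem_side_not_of_mem_closure (closure_mono hO₂ h₂.right_mem_closure)
  rw [Bool.not_not] at hw
  exact h₁.union h₂ (Pseudoline.disjoint_of_subset_side hO₁ hO₂) (fun h => hu (hO₂ h))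
    (fun h => hw (hO₁ h)) huw

lemma IsArranged.isPreconnected_cell_sdiff_of_finite {ι : Type*} {L : ι → Pseudoline}
    (hL : IsArranged L) (I : Finset ι) (s : ι → Bool) {Z : Set (OnePoint ℂ)} (hZ : Z.Finite)
    (hinf : ∞ ∈ Z) : IsPreconnected (cell L I s \ Z) := by
  rw [← sdiff_union_of_subset (singleton_subset_iff.2 hinf), union_comm, ← sdiff_sdiff]
  refine isPreconnected_sdiff_of_finite ((isOpen_cell _ _).sdiff isClosed_singleton) ?_
    (fun h => h.2 rfl) hZ.sdiff
  rcases I.eq_empty_or_nonempty with rfl | h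
  · rw [cell_empty, ← compl_eq_univ_sdiff]
    exact isPreconnected_compl_infty
  · rw [sdiff_singleton_eq_self (infty_notMem_cell h s)]
    exact hL.isPreconnected_cell _ h s

lemma hammingDist_update_of_ne {ι : Type*} {β : ι → Type*} [Fintype ι] [DecidableEq ι]
    [∀ i, DecidableEq (β i)] {x y : ∀ i, β i} {i : ι} (h : x i ≠ y i) :
    hammingDist (Function.update x i (y i)) y + 1 = hammingDist x y := by
  have : ({j | Function.update x i (y i) j ≠ y j} : Finset ι) = Finset.erase {j | x j ≠ y j} i := by
    ext j
    rcases eq_or_ne j i with rfl | hj <;> simp [*]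
  rw [hammingDist, hammingDist, this, Finset.card_erase_add_one (by simpa using h)]

namespace IsArranged

variable {ι : Type*} [Fintype ι] {L : ι → Pseudoline} {s s' : ι → Bool} {u v : OnePoint ℂ}

/-- Delete from the cell of the curves on which `s` and `s'` agree all vertices as well as `u`, `v`
and `∞`. What is left is connected, so it contains a frontier point of the cell `s`, and that point
lies on one curve only. -/
lemma exists_mem_carrier_of_ne (hL : IsArranged L) (hne : s ≠ s')
    (hs : (cell L Finset.univ s).Nonempty) (hs' : (cell L Finset.univ s').Nonempty)
    (u v : OnePoint ℂ) :
    ∃ q i, q ≠ u ∧ q ≠ v ∧ s i ≠ s' i ∧ q ∈ (L i).carrier ∧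
      q ∈ closure (cell L Finset.univ s) ∧ ∀ j ≠ i, q ∈ (L j).side (s j) := by
  set I : Finset ι := {i | s i = s' i}
  obtain ⟨k, hk⟩ := Function.ne_iff.1 hne
  set Z : Set (OnePoint ℂ) :=
    {z | ∃ i j, i ≠ j ∧ z ∈ (L i).carrier ∧ z ∈ (L j).carrier} ∪ {u, v, ∞}
  have hZ : Z.Finite := hL.finite_setOf_mem_carrier.union (toFinite _)
  obtain ⟨x, hx, hxZ⟩ := nonempty_sdiff_of_finite (isOpen_cell Finset.univ s) hs hZ
  obtain ⟨y, hy, hyZ⟩ := nonempty_sdiff_of_finite (isOpen_cell Finset.univ s') hs' hZ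
  have hys : y ∈ cell L I s := fun i hi => by
    rw [(Finset.mem_filter.1 hi).2]
    exact hy i (Finset.mem_univ i)
  have hyks : y ∉ cell L Finset.univ s := fun h =>
    hk (Pseudoline.eq_of_mem_side (h k (Finset.mem_univ k)) (hy k (Finset.mem_univ k)))
  obtain ⟨q, ⟨hqI, hqZ⟩, hq⟩ := inter_frontier_nonempty
    (hL.isPreconnected_cell_sdiff_of_finite I s hZ (by simp [Z]))
    ⟨x, ⟨cell_anti (Finset.subset_univ _) s hx, hxZ⟩, hx⟩ ⟨y, ⟨hys, hyZ⟩, hyks⟩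
  obtain ⟨i, -, hqi⟩ := exists_mem_carrier_of_mem_frontier_cell hq
  have huv : q ≠ u ∧ q ≠ v := by grind
  refine ⟨q, i, huv.1, huv.2, fun hi => ?_, hqi, hq.1, fun j hji => ?_⟩
  · exact Pseudoline.notMem_carrier_of_mem_side
      (hqI i (Finset.mem_filter.2 ⟨Finset.mem_univ i, hi⟩)) hqi
  · exact mem_side_of_mem_closure_cell hq.1 (Finset.mem_univ j) fun h =>
      hqZ (.inl ⟨j, i, hji, h, hqi⟩)

variable [Nonempty ι]

/-- Induction on the number of curves separating the two cells: through the point of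
`exists_mem_carrier_of_ne` one passes into a cell separated from `s'` by one curve less. -/
lemma exists_isOpenArc_crossesAtMostOnce (hL : IsArranged L)
    (hu : u ∈ closure (cell L Finset.univ s)) (hv : v ∈ closure (cell L Finset.univ s'))
    (huv : u ≠ v) : ∃ O, IsOpenArc u v O ∧ ∀ i, CrossesAtMostOnce O (L i) (s i) (s' i) := by
  classical
  induction hn : hammingDist s s' generalizing s u with
  | zero =>
    obtain rfl := hammingDist_eq_zero.1 hn
    obtain ⟨O, hO, hOs⟩ := hL.exists_isOpenArc_subset_cell Finset.univ_nonempty hu hv huv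
    exact ⟨O, hO, fun i => .of_subset_side (fun z hz => hOs hz i (Finset.mem_univ i)) hO.nonempty⟩
  | succ n ih =>
    obtain ⟨q, i, hqu, hqv, hi, hqi, hqs, hqj⟩ := hL.exists_mem_carrier_of_ne
      (hammingDist_ne_zero.1 (by lia)) (closure_nonempty_iff.1 ⟨u, hu⟩)
      (closure_nonempty_iff.1 ⟨v, hv⟩) u v
    set s₁ := Function.update s i (s' i)
    have hs₁ : s₁ i = s' i := Function.update_self ..
    have hs₁_of_ne : ∀ j ≠ i, s₁ j = s j := fun j hj => Function.update_of_ne hj ..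
    have hcard : hammingDist s₁ s' = n := by
      have := hammingDist_update_of_ne hi
      lia
    obtain ⟨O₁, hO₁, hO₁s⟩ := hL.exists_isOpenArc_subset_cell Finset.univ_nonempty hu hqs hqu.symm
    have hO₁_cross : ∀ j, CrossesAtMostOnce O₁ (L j) (s j) (s j) := fun j =>
      .of_subset_side (fun z hz => hO₁s hz j (Finset.mem_univ j)) hO₁.nonempty
    obtain ⟨O₂, hO₂, hO₂_cross⟩ := ih (mem_closure_cell_of_mem_carrier hqi fun j _ hj => by
      rw [hs₁_of_ne j hj]; exact hqj j hj) hqv hcard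
    have hO₂i : CrossesAtMostOnce O₂ (L i) (s' i) (s' i) := hs₁ ▸ hO₂_cross i
    refine ⟨O₁ ∪ {q} ∪ O₂, hO₁.union_of_subset_side hO₂ ((hO₁_cross i).subset_side rfl)
      (Bool.eq_not.2 hi.symm ▸ hO₂i.subset_side rfl) huv, fun j => ?_⟩
    by_cases hj : j = i
    · subst hj
      exact (hO₁_cross j).union_of_ne hO₂i hi
    · have := hO₂_cross j
      rw [hs₁_of_ne j hj] at this
      exact (hO₁_cross j).union_left (hqj j hj) this

end IsArranged

/-! ### Closing arcs up to a curve -/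

lemma isCurve_comp_sigmoid {r : Path (∞ : OnePoint ℂ) ∞} (hinj : InjOn r (Ioo 0 1))
    (hne : ∀ t ∈ Ioo 0 1, r t ≠ ∞) : IsCurve (r ∘ unitInterval.sigmoid) where
  continuous := r.continuous.comp unitInterval.continuous_sigmoid
  injective _ _ h := unitInterval.sigmoid_injective <|
    hinj ⟨unitInterval.sigmoid_pos _, unitInterval.sigmoid_lt_one _⟩
      ⟨unitInterval.sigmoid_pos _, unitInterval.sigmoid_lt_one _⟩ h
  ne_infty t := hne _ ⟨unitInterval.sigmoid_pos t, unitInterval.sigmoid_lt_one t⟩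
  tendsto_atTop := by
    simpa using (r.continuous.tendsto 1).comp unitInterval.tendsto_sigmoid_atTop
  tendsto_atBot := by
    simpa using (r.continuous.tendsto 0).comp unitInterval.tendsto_sigmoid_atBot

section Loop

variable {X : Type*} [TopologicalSpace X] {u v : X} {p : Path u v} {q : Path v u}

lemma eq_zero_or_one_of_trans_apply_eq (hp : Function.Injective p) (hq : Function.Injective q)
    {t : unitInterval} (ht : p.trans q t = u) : t = 0 ∨ t = 1 := by
  rw [Path.trans_apply] at ht
  split_ifs at ht with h
  · have ht0 := congrArg Subtype.val (hp (ht.trans p.source.symm))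
    simp only [Icc.coe_zero] at ht0
    exact .inl (Subtype.ext (by linarith [Icc.coe_zero (R := ℝ)]))
  · have ht1 := congrArg Subtype.val (hq (ht.trans q.target.symm))
    simp only [Icc.coe_one] at ht1
    exact .inr (Subtype.ext (by linarith [Icc.coe_one (R := ℝ)]))

lemma image_trans_Ioo (hp : Function.Injective p) (hq : Function.Injective q) :
    p.trans q '' Ioo 0 1 = (range p ∪ range q) \ {u} := by
  rw [← Path.trans_range]
  refine Subset.antisymm ?_ ?_
  · rintro _ ⟨t, ht, rfl⟩
    exact ⟨⟨t, rfl⟩, fun h => (eq_zero_or_one_of_trans_apply_eq hp hq h).elim ht.1.ne' ht.2.ne⟩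
  · rintro _ ⟨⟨t, rfl⟩, ht⟩
    refine ⟨t, ⟨unitInterval.pos_iff_ne_zero.2 ?_, unitInterval.lt_one_iff_ne_one.2 ?_⟩, rfl⟩
    · rintro rfl
      exact ht (p.trans q).source
    · rintro rfl
      exact ht (p.trans q).target

end Loop

lemma IsOpenArc.exists_isCurve {v : OnePoint ℂ} {O₁ O₂ : Set (OnePoint ℂ)}
    (h₁ : IsOpenArc ∞ v O₁) (h₂ : IsOpenArc v ∞ O₂) (hdisj : Disjoint O₁ O₂) :
    ∃ γ, IsCurve γ ∧ range γ = O₁ ∪ {v} ∪ O₂ := by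
  obtain ⟨p, hp, rfl⟩ := h₁
  obtain ⟨q, hq, rfl⟩ := h₂
  have hv : ∞ ≠ v := fun h => zero_ne_one (hp (p.source.trans (h.trans p.target.symm)))
  rw [image_Ioo_eq_range_diff hp, image_Ioo_eq_range_diff hq] at *
  have hpq : range p ∩ range q ⊆ {∞, v} := by
    rintro x ⟨hxp, hxq⟩
    have hx : ¬(x ∈ range p \ {∞, v} ∧ x ∈ range q \ {v, ∞}) := fun h =>
      disjoint_left.1 hdisj h.1 h.2
    grind
  have hIoo : ∀ t ∈ Ioo 0 1, p.trans q t ≠ ∞ := fun t ht h =>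
    (eq_zero_or_one_of_trans_apply_eq hp hq h).elim ht.1.ne' ht.2.ne
  have hinj : InjOn (p.trans q) (Ioo 0 1) := fun s hs t _ hst =>
    (eq_or_mem_of_trans_apply_eq hp hq hst).resolve_right fun h =>
      (hpq h.1).elim (hIoo s hs) h.2
  have hvp : v ∈ range p := ⟨1, p.target⟩
  refine ⟨_, isCurve_comp_sigmoid hinj hIoo, ?_⟩
  rw [range_comp, unitInterval.range_sigmoid, image_trans_Ioo hp hq]
  ext x
  grind

/-! ### Crossing -/

namespace Pseudoline

variable {P Q : Pseudoline} {b b' : Bool}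

lemma apply_mem_side_of_ordConnected {J : Set ℝ} (hJ : OrdConnected J)
    (hQ : ∀ t ∈ J, P.γ t ∉ Q.carrier) {s t : ℝ} (hs : s ∈ J) (hsb : P.γ s ∈ Q.side b)
    (ht : t ∈ J) : P.γ t ∈ Q.side b :=
  subset_side_of_isPreconnected (hJ.isPreconnected.image _ P.isCurve.continuous.continuousOn)
    (disjoint_left.2 (forall_mem_image.2 hQ)) (mem_image_of_mem _ hs) hsb (mem_image_of_mem _ ht)

lemma exists_apply_mem_side_of_ne {t : ℝ} (huniq : ∀ s ≠ t, P.γ s ∉ Q.carrier) :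
    ∃ b b', (∀ s < t, P.γ s ∈ Q.side b) ∧ ∀ s > t, P.γ s ∈ Q.side b' := by
  obtain ⟨b, hb⟩ := exists_mem_side (huniq (t - 1) (by linarith))
  obtain ⟨b', hb'⟩ := exists_mem_side (huniq (t + 1) (by linarith))
  exact ⟨b, b', fun s hs => apply_mem_side_of_ordConnected ordConnected_Iio
      (fun r hr => huniq r (ne_of_lt hr)) (mem_Iio.2 (by linarith)) hb hs,
    fun s hs => apply_mem_side_of_ordConnected ordConnected_Ioi
      (fun r hr => huniq r (ne_of_gt hr)) (mem_Ioi.2 (by linarith)) hb' hs⟩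

lemma Crosses.of_crossesAtMostOnce (h : CrossesAtMostOnce (range P.γ) Q b (!b)) :
    P.Crosses Q := by
  obtain ⟨_, ⟨r, rfl⟩, hr⟩ := h.inter_left_nonempty
  obtain ⟨_, ⟨r', rfl⟩, hr'⟩ := h.inter_right_nonempty
  obtain ⟨t, ht⟩ : ∃ t, P.γ t ∈ Q.carrier := by
    by_contra! hno
    exact notMem_side_not (apply_mem_side_of_ordConnected ordConnected_univ
      (fun t _ => hno t) (mem_univ r) hr (mem_univ r')) hr'
  have huniq : ∀ s ≠ t, P.γ s ∉ Q.carrier := fun s hs hsQ =>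
    hs (P.isCurve.injective (h.inter_carrier_subsingleton ⟨⟨s, rfl⟩, hsQ⟩ ⟨⟨t, rfl⟩, ht⟩))
  obtain ⟨c, c', hc, hc'⟩ := exists_apply_mem_side_of_ne huniq
  suffices hne : c' ≠ c from ⟨t, c, hc, ht, Bool.eq_not.2 hne ▸ hc'⟩
  rintro rfl
  have hside : ∀ d s, P.γ s ∈ Q.side d → d = c' := by
    intro d s hs
    rcases lt_trichotomy s t with h | rfl | h
    · exact eq_of_mem_side hs (hc s h)
    · exact absurd ht (notMem_carrier_of_mem_side hs)
    · exact eq_of_mem_side hs (hc' s h)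
  exact absurd ((hside _ _ hr).trans (hside _ _ hr').symm) (by simp)

lemma Crosses.symm (h : P.Crosses Q) : Q.Crosses P := by
  obtain ⟨t, b, ht⟩ := h.exists_mem_iff
  obtain ⟨r, -, hr⟩ := ((ht t).2.1.2 rfl).resolve_left (P.isCurve.ne_infty t)
  have hrP : Q.γ r ∈ P.carrier := hr ▸ P.apply_mem_carrier t
  have huniq : ∀ s ≠ r, Q.γ s ∉ P.carrier := by
    rintro s hs (h | ⟨x, -, hx⟩)
    · exact Q.isCurve.ne_infty s h
    · obtain rfl := (ht x).2.1.1 (hx ▸ Q.apply_mem_carrier s)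
      exact hs (Q.isCurve.injective (hx.symm.trans hr.symm))
  obtain ⟨c, c', hc, hc'⟩ := exists_apply_mem_side_of_ne huniq
  suffices hne : c' ≠ c from ⟨r, c, hc, hrP, Bool.eq_not.2 hne ▸ hc'⟩
  rintro rfl
  have hdisj : Disjoint (P.side (!c')) Q.carrier := by
    refine disjoint_left.2 ?_
    rintro z hz (rfl | ⟨s, -, rfl⟩)
    · exact notMem_carrier_of_mem_side hz P.infty_mem_carrier
    · rcases lt_trichotomy s r with h | rfl | h
      · exact notMem_side_not (hc s h) hz
      · exact notMem_carrier_of_mem_side hz hrP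
      · exact notMem_side_not (hc' s h) hz
  obtain ⟨x, hx⟩ := P.nonempty_side (!c')
  obtain ⟨d, hxd⟩ := exists_mem_side (disjoint_left.1 hdisj hx)
  have hsub := subset_side_of_isPreconnected (P.isPreconnected_side _) hdisj hx hxd
  have hmiss : ∀ s, P.γ s ∉ Q.side (!d) := fun s =>
    notMem_side_not_of_mem_closure (closure_mono hsub (P.apply_mem_closure_side _ s))
  rcases Bool.eq_or_eq_not b d with rfl | rfl
  · exact hmiss (t + 1) ((ht _).2.2.2 (by linarith))
  · exact hmiss (t - 1) ((ht _).1.2 (by linarith))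

end Pseudoline

/-! ### Pseudolines through one or two given points -/

section SignAt

variable {P : Pseudoline} {a v w : OnePoint ℂ} {b c : Bool}

open scoped Classical in
/-- The side of `P` on which `a` lies; the side `b` is chosen if `a` lies on `P` itself. -/
def Pseudoline.signAt (P : Pseudoline) (a : OnePoint ℂ) (b : Bool) : Bool :=
  if a ∈ P.carrier then b else decide (a ∈ P.side true)

namespace Pseudoline

lemma signAt_of_mem_carrier (h : a ∈ P.carrier) (b : Bool) : P.signAt a b = b := if_pos h

lemma signAt_of_mem_side (h : a ∈ P.side c) (b : Bool) : P.signAt a b = c := by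
  rw [signAt, if_neg (notMem_carrier_of_mem_side h)]
  cases c
  · simpa using notMem_side_not h
  · simpa using h

lemma mem_side_signAt (h : a ∉ P.carrier) (b : Bool) : a ∈ P.side (P.signAt a b) := by
  obtain ⟨c, hc⟩ := exists_mem_side h
  rwa [signAt_of_mem_side hc]

lemma notMem_side_not_signAt : a ∉ P.side (!P.signAt a b) := by
  by_cases h : a ∈ P.carrier
  · exact fun h' => notMem_carrier_of_mem_side h' h
  · exact notMem_side_not (mem_side_signAt h b)

lemma signAt_not_signAt (hvw : v ∈ P.carrier → w ∉ P.carrier)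
    (hsep : ¬∃ c, v ∈ P.side c ∧ w ∈ P.side c) (b c : Bool) :
    P.signAt w (!P.signAt v b) = !P.signAt v (!P.signAt w c) := by
  by_cases hv : v ∈ P.carrier
  · obtain ⟨d, hd⟩ := exists_mem_side (hvw hv)
    simp [signAt_of_mem_carrier hv, signAt_of_mem_side hd]
  obtain ⟨d, hd⟩ := exists_mem_side hv
  by_cases hw : w ∈ P.carrier
  · simp [signAt_of_mem_carrier hw, signAt_of_mem_side hd]
  · have hwd : w ∉ P.side d := fun h => hsep ⟨d, hd, h⟩
    simp [signAt_of_mem_side hd, signAt_of_mem_side (mem_side_not hw hwd)]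

lemma mem_side_of_separates (hv : v ∉ P.carrier) (hw : w ∈ P.carrier)
    (hsep : (∃ c, v ∈ P.side c ∧ w ∈ P.side c) ∨ v ∉ P.side (!b) ∧ w ∉ P.side b) :
    v ∈ P.side b :=
  (mem_side_or_mem_side_not hv b).resolve_right
    (hsep.resolve_left fun ⟨_, _, h⟩ => notMem_carrier_of_mem_side h hw).1

lemma mem_side_not_of_separates (hv : v ∈ P.carrier) (hw : w ∉ P.carrier)
    (hsep : (∃ c, v ∈ P.side c ∧ w ∈ P.side c) ∨ v ∉ P.side (!b) ∧ w ∉ P.side b) :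
    w ∈ P.side (!b) :=
  mem_side_not hw (hsep.resolve_left fun ⟨_, h, _⟩ => notMem_carrier_of_mem_side h hv).2

end Pseudoline

namespace CrossesAtMostOnce

variable {O₁ O₂ O₃ : Set (OnePoint ℂ)}

lemma union_signAt (h₁ : CrossesAtMostOnce O₁ P b (P.signAt v b))
    (h₂ : CrossesAtMostOnce O₂ P (P.signAt v !b) (!b)) :
    CrossesAtMostOnce (O₁ ∪ {v} ∪ O₂) P b (!b) := by
  by_cases hv : v ∈ P.carrier
  · rw [Pseudoline.signAt_of_mem_carrier hv] at h₁ h₂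
    exact h₁.union_of_ne h₂ (by simp)
  · obtain ⟨c, hc⟩ := Pseudoline.exists_mem_side hv
    rw [Pseudoline.signAt_of_mem_side hc] at h₁ h₂
    exact h₁.union_not hc h₂

lemma union_union_signAt (h₁ : CrossesAtMostOnce O₁ P b (P.signAt v b))
    (h₂ : CrossesAtMostOnce O₂ P (P.signAt v !b) (P.signAt w b))
    (h₃ : CrossesAtMostOnce O₃ P (P.signAt w !b) (!b)) (hvw : v ∈ P.carrier → w ∉ P.carrier)
    (hb : (∃ c, v ∈ P.side c ∧ w ∈ P.side c) ∨ v ∉ P.side (!b) ∧ w ∉ P.side b) :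
    CrossesAtMostOnce (O₁ ∪ {v} ∪ O₂ ∪ {w} ∪ O₃) P b (!b) := by
  rcases hb with ⟨c, hv, hw⟩ | ⟨hv, hw⟩
  · simp only [Pseudoline.signAt_of_mem_side hv, Pseudoline.signAt_of_mem_side hw] at h₁ h₂ h₃
    exact (h₁.union_right hv h₂).union_not hw h₃
  by_cases hvP : v ∈ P.carrier
  · have hw := Pseudoline.mem_side_not (hvw hvP) hw
    simp only [Pseudoline.signAt_of_mem_carrier hvP, Pseudoline.signAt_of_mem_side hw] at h₁ h₂ h₃
    exact (h₁.union_of_ne h₂ (by simp)).union_right hw h₃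
  have hv := Pseudoline.mem_side_not hvP hv
  rw [Bool.not_not] at hv
  simp only [Pseudoline.signAt_of_mem_side hv] at h₁ h₂
  by_cases hwP : w ∈ P.carrier
  · simp only [Pseudoline.signAt_of_mem_carrier hwP] at h₂ h₃
    exact (h₁.union_left hv h₂).union_of_ne h₃ (by simp)
  · have hw := Pseudoline.mem_side_not hwP hw
    simp only [Pseudoline.signAt_of_mem_side hw] at h₂ h₃
    exact (h₁.union_left hv h₂).union_right hw h₃

end CrossesAtMostOnce

end SignAt

namespace IsArranged

variable {ι : Type*} {L : ι → Pseudoline} {a b : OnePoint ℂ}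

lemma mem_closure_cell_signAt [Finite ι] (hL : IsArranged L) (ha : a ≠ ∞) {G : ι → Bool}
    {z : OnePoint ℂ} (hz : ∀ i, a ∈ (L i).carrier → z ∈ (L i).side (G i)) (I : Finset ι) :
    a ∈ closure (cell L I fun i => (L i).signAt a (G i)) ∧
      a ∈ closure (cell L I fun i => (L i).signAt a (!G i)) := by
  classical
  set J : Finset ι := {i ∈ I | a ∈ (L i).carrier}
  have hJ : ∀ i ∈ J, a ∈ (L i).carrier := fun i hi => (Finset.mem_filter.1 hi).2
  have hIJ : ∀ i ∈ I, i ∉ J → a ∉ (L i).carrier := fun i hi hiJ h =>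
    hiJ (Finset.mem_filter.2 ⟨hi, h⟩)
  rcases J.eq_empty_or_nonempty with hJe | hJne
  · have hcell : ∀ G : ι → Bool, a ∈ cell L I fun i => (L i).signAt a (G i) := fun G i hi =>
      Pseudoline.mem_side_signAt (hIJ i hi (by simp [hJe])) _
    exact ⟨subset_closure (hcell _), subset_closure (hcell _)⟩
  have hcongr : ∀ G : ι → Bool, cell L J (fun i => (L i).signAt a (G i)) = cell L J G :=
    fun G => cell_congr fun i hi => Pseudoline.signAt_of_mem_carrier (hJ i hi) _
  obtain ⟨h, h'⟩ := hL.mem_closure_cell_of_forall_mem_carrier hJne ha hJ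
    ⟨z, fun i hi => hz i (hJ i hi)⟩
  constructor <;> refine mem_closure_cell_of_forall_mem_side (J := J) ?_ fun i hi hiJ =>
    Pseudoline.mem_side_signAt (hIJ i hi hiJ) _
  · rwa [hcongr]
  · rwa [hcongr]

lemma exists_signs_at_end (hL : IsArranged L) (i : ι) (e c : Bool) : ∃ G : ι → Bool, G i = c ∧
    (∀ j ≠ i, ∀ᶠ t in endFilter e, (L i).γ t ∈ (L j).side (G j)) ∧
    ∀ I, ∞ ∈ closure (cell L I G) ∧ ∞ ∈ closure (cell L I fun j => !G j) := by
  classical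
  have hend : ∀ j, ∃ b, j ≠ i → ∀ᶠ t in endFilter e, (L i).γ t ∈ (L j).side b := fun j => by
    rcases eq_or_ne j i with h | h
    · exact ⟨true, fun h' => absurd h h'⟩
    · obtain ⟨b, hb, -⟩ := (hL h.symm).exists_eventually_mem_side e
      exact ⟨b, fun _ => hb⟩
  choose G₀ hG₀ using hend
  set G := Function.update G₀ i c
  have hG : ∀ j ≠ i, ∀ᶠ t in endFilter e, (L i).γ t ∈ (L j).side (G j) := fun j hj => by
    simpa [G, hj] using hG₀ j hj
  exact ⟨G, by simp [G], hG, fun I => ⟨infty_mem_closure_cell fun j _ hj => hG j hj,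
    infty_mem_closure_cell (e := !e) fun j _ hj => (hL hj.symm).eventually_mem_side_not (hG j hj)⟩⟩

variable [Finite ι]

lemma exists_crosses_of_mem_carrier (hL : IsArranged L) (ha : a ≠ ∞) {k : ι}
    (hk : a ∈ (L k).carrier) : ∃ P : Pseudoline, a ∈ P.carrier ∧ ∀ i, P.Crosses (L i) := by
  cases nonempty_fintype ι
  have : Nonempty ι := ⟨k⟩
  obtain ⟨G, -, -, hG⟩ := hL.exists_signs_at_end k true true
  obtain ⟨hG, hG'⟩ := hG Finset.univ
  obtain ⟨z, hz⟩ := closure_nonempty_iff.1 ⟨_, hG⟩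
  obtain ⟨haG, haG'⟩ :=
    hL.mem_closure_cell_signAt ha (fun i _ => hz i (Finset.mem_univ i)) Finset.univ
  obtain ⟨O₁, hO₁, h₁⟩ := hL.exists_isOpenArc_crossesAtMostOnce hG haG ha.symm
  obtain ⟨O₂, hO₂, h₂⟩ := hL.exists_isOpenArc_crossesAtMostOnce haG' hG' ha
  have hdisj : Disjoint O₁ O₂ := by
    have h₁ := h₁ k
    have h₂ := h₂ k
    rw [Pseudoline.signAt_of_mem_carrier hk] at h₁ h₂
    exact Pseudoline.disjoint_of_subset_side (h₁.subset_side rfl) (h₂.subset_side rfl)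
  obtain ⟨γ, hγ, hrange⟩ := hO₁.exists_isCurve hO₂ hdisj
  obtain ⟨P, rfl⟩ := hγ.exists_pseudoline
  have haP : a ∈ range P.γ := by simp [hrange]
  exact ⟨P, P.range_subset_carrier haP, fun i => .of_crossesAtMostOnce (b := G i)
    (hrange ▸ (h₁ i).union_signAt (h₂ i))⟩

/-- Orient every curve that weakly separates `a` from `b` so that `a` is on its positive side. The
resulting cell and its opposite are nonempty, hence some curve runs to infinity along that cell,
and the signs of all curves at that end are the ones we look for. -/
lemma exists_signs_of_separates (hL : IsArranged L) (ha : a ≠ ∞) (hb : b ≠ ∞)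
    (hab : ∀ i, a ∈ (L i).carrier → b ∉ (L i).carrier) {k : ι} (hk : a ∈ (L k).carrier) :
    ∃ G : ι → Bool,
      (∀ I, ∞ ∈ closure (cell L I G) ∧ ∞ ∈ closure (cell L I fun j => !G j)) ∧
      ∀ i, (∃ c, a ∈ (L i).side c ∧ b ∈ (L i).side c) ∨
        a ∉ (L i).side (!G i) ∧ b ∉ (L i).side (G i) := by
  classical
  cases nonempty_fintype ι
  set I : Finset ι := {i | ¬∃ c, a ∈ (L i).side c ∧ b ∈ (L i).side c}
  set ε : ι → Bool := fun i => (L i).signAt a (!(L i).signAt b true)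
  have hε : ∀ i ∈ I, (L i).signAt b (!(L i).signAt a true) = !ε i := fun i hi =>
    Pseudoline.signAt_not_signAt (hab i) (Finset.mem_filter.1 hi).2 true true
  have haε : (cell L I ε).Nonempty := closure_nonempty_iff.1 ⟨a, (hL.mem_closure_cell_signAt ha
    (fun i hi => Pseudoline.mem_side_signAt (hab i hi) true) I).2⟩
  have hbε : (cell L I fun i => !ε i).Nonempty := by
    rw [← cell_congr hε]
    exact closure_nonempty_iff.1 ⟨b, (hL.mem_closure_cell_signAt hb
      (fun i hi => Pseudoline.mem_side_signAt (fun h => hab i h hi) true) I).2⟩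
  have hkI : k ∈ I := Finset.mem_filter.2 ⟨Finset.mem_univ k, fun ⟨_, h, _⟩ =>
    Pseudoline.notMem_carrier_of_mem_side h hk⟩
  obtain ⟨i, -, e, he⟩ := hL.exists_eventually_mem_side ⟨k, hkI⟩ haε hbε
  obtain ⟨G, hGi, hGe, hG⟩ := hL.exists_signs_at_end i e (ε i)
  refine ⟨G, hG, fun j => or_iff_not_imp_left.2 fun hj => ?_⟩
  have hjI : j ∈ I := Finset.mem_filter.2 ⟨Finset.mem_univ j, hj⟩
  have hGj : G j = ε j := by
    rcases eq_or_ne j i with rfl | hji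
    · exact hGi
    · obtain ⟨t, ht, ht'⟩ := ((hGe j hji).and (he j hjI hji)).exists
      exact Pseudoline.eq_of_mem_side ht ht'
  rw [hGj]
  refine ⟨Pseudoline.notMem_side_not_signAt, ?_⟩
  rw [← Bool.not_not (ε j), ← hε j hjI]
  exact Pseudoline.notMem_side_not_signAt

lemma exists_crosses_of_mem_carrier_of_mem_carrier (hL : IsArranged L) (ha : a ≠ ∞) (hb : b ≠ ∞)
    (hne : a ≠ b) (hab : ∀ i, a ∈ (L i).carrier → b ∉ (L i).carrier) {k l : ι}
    (hk : a ∈ (L k).carrier) (hl : b ∈ (L l).carrier) :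
    ∃ P : Pseudoline, a ∈ P.carrier ∧ b ∈ P.carrier ∧ ∀ i, P.Crosses (L i) := by
  cases nonempty_fintype ι
  have : Nonempty ι := ⟨k⟩
  obtain ⟨G, hG, hsep⟩ := hL.exists_signs_of_separates ha hb hab hk
  obtain ⟨hG, hG'⟩ := hG Finset.univ
  obtain ⟨z, hz⟩ := closure_nonempty_iff.1 ⟨_, hG⟩
  obtain ⟨haG, haG'⟩ :=
    hL.mem_closure_cell_signAt ha (fun i _ => hz i (Finset.mem_univ i)) Finset.univ
  obtain ⟨hbG, hbG'⟩ :=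
    hL.mem_closure_cell_signAt hb (fun i _ => hz i (Finset.mem_univ i)) Finset.univ
  obtain ⟨O₁, hO₁, h₁⟩ := hL.exists_isOpenArc_crossesAtMostOnce hG haG ha.symm
  obtain ⟨O₂, hO₂, h₂⟩ := hL.exists_isOpenArc_crossesAtMostOnce haG' hbG hne
  obtain ⟨O₃, hO₃, h₃⟩ := hL.exists_isOpenArc_crossesAtMostOnce hbG' hG' hb
  have hO₁₂ : IsOpenArc ∞ b (O₁ ∪ {a} ∪ O₂) := by
    have hbk := Pseudoline.mem_side_not_of_separates hk (hab k hk) (hsep k)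
    have h₁ := h₁ k
    have h₂ := h₂ k
    rw [Pseudoline.signAt_of_mem_carrier hk] at h₁ h₂
    rw [Pseudoline.signAt_of_mem_side hbk] at h₂
    exact hO₁.union_of_subset_side hO₂ (h₁.subset_side rfl) (h₂.subset_side rfl) hb.symm
  have hdisj : Disjoint (O₁ ∪ {a} ∪ O₂) O₃ := by
    have hal := Pseudoline.mem_side_of_separates (fun h => hab l h hl) hl (hsep l)
    have h₁ := h₁ l
    have h₂ := h₂ l
    have h₃ := h₃ l
    rw [Pseudoline.signAt_of_mem_side hal] at h₁ h₂
    rw [Pseudoline.signAt_of_mem_carrier hl] at h₂ h₃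
    exact Pseudoline.disjoint_of_subset_side ((h₁.union_left hal h₂).subset_side rfl)
      (h₃.subset_side rfl)
  obtain ⟨γ, hγ, hrange⟩ := hO₁₂.exists_isCurve hO₃ hdisj
  obtain ⟨P, rfl⟩ := hγ.exists_pseudoline
  have haP : a ∈ range P.γ := by simp [hrange]
  have hbP : b ∈ range P.γ := by simp [hrange]
  exact ⟨P, P.range_subset_carrier haP, P.range_subset_carrier hbP, fun i =>
    .of_crossesAtMostOnce (b := G i)
      (hrange ▸ (h₁ i).union_union_signAt (h₂ i) (h₃ i) (hab i) (hsep i))⟩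

end IsArranged

/-! ### Pseudolines through arbitrary points -/

section Homogeneity

variable {E : Type*} [NormedAddCommGroup E] [NormedSpace ℝ E] [CompleteSpace E]

/-- Adding to the identity the multiple of `w - c` by a tent function supported on the ball is a
perturbation with Lipschitz constant `‖w - c‖ / r < 1`. -/
lemma exists_homeomorph_apply_center_eq {c w : E} {r : ℝ} (hw : w ∈ Metric.ball c r) :
    ∃ h : E ≃ₜ E, h c = w ∧ ∀ z ∉ Metric.ball c r, h z = z := by
  have hr : 0 < r := Metric.pos_of_mem_ball hw
  let φ : E → ℝ := fun z => max (1 - dist z c / r) 0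
  let f : E → E := fun z => z + φ z • (w - c)
  let k : NNReal := ⟨dist w c / r, by positivity⟩
  have hφ : ∀ x y, |φ x - φ y| ≤ dist x y / r := fun x y =>
    calc |φ x - φ y| ≤ |1 - dist x c / r - (1 - dist y c / r)| := abs_max_sub_max_le_abs _ _ _
      _ = |dist x c - dist y c| / r := by
        rw [sub_sub_sub_cancel_left, ← sub_div, abs_div, abs_of_pos hr, abs_sub_comm]
      _ ≤ dist x y / r := by gcongr; exact abs_dist_sub_le x y c
  have hf : ApproximatesLinearOn f (ContinuousLinearEquiv.refl ℝ E : E →L[ℝ] E) univ k := by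
    intro x _ y _
    have hdiff : f x - f y - (x - y) = (φ x - φ y) • (w - c) := by
      simp only [f, sub_smul]; abel
    calc ‖f x - f y - (x - y)‖ = |φ x - φ y| * dist w c := by
          rw [hdiff, norm_smul, Real.norm_eq_abs, dist_eq_norm]
      _ ≤ dist x y / r * dist w c := by gcongr; exact hφ x y
      _ = dist w c / r * ‖x - y‖ := by rw [← dist_eq_norm]; ring
  have hk : Subsingleton E ∨
      k < ‖((ContinuousLinearEquiv.refl ℝ E).symm : E →L[ℝ] E)‖₊⁻¹ := by
    rcases subsingleton_or_nontrivial E with hE | hE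
    · exact Or.inl hE
    refine Or.inr ?_
    have : ‖((ContinuousLinearEquiv.refl ℝ E).symm : E →L[ℝ] E)‖₊ = 1 :=
      ContinuousLinearMap.nnnorm_id
    rw [this, inv_one, ← NNReal.coe_lt_coe]
    exact (div_lt_one hr).2 hw
  refine ⟨hf.toHomeomorph f hk, ?_, fun z hz => ?_⟩
  · change f c = w
    simp [f, φ]
  · change f z = z
    have : φ z = 0 := max_eq_right (sub_nonpos.2 ((one_le_div hr).2 (not_lt.1 hz)))
    simp [f, this]

lemma exists_homeomorph_apply_eq_of_isPreconnected {F : Set E} (hF : IsOpen F)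
    (hpre : IsPreconnected F) {x y : E} (hx : x ∈ F) (hy : y ∈ F) :
    ∃ h : E ≃ₜ E, h x = y ∧ ∀ z ∉ F, h z = z := by
  refine hpre.induction₂ (fun x y => ∃ h : E ≃ₜ E, h x = y ∧ ∀ z ∉ F, h z = z) ?_ ?_ ?_ hx hy
  · intro c hc
    obtain ⟨r, hr, hball⟩ := Metric.isOpen_iff.1 hF c hc
    filter_upwards [mem_nhdsWithin_of_mem_nhds (Metric.ball_mem_nhds c hr)] with w hw
    obtain ⟨h, hcw, hfix⟩ := exists_homeomorph_apply_center_eq hw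
    exact ⟨h, hcw, fun z hz => hfix z fun hz' => hz (hball hz')⟩
  · rintro x y z - - - ⟨g, rfl, hg⟩ ⟨h, rfl, hh⟩
    exact ⟨g.trans h, rfl, fun w hw => by simp [hg w hw, hh w hw]⟩
  · rintro x y - - ⟨h, rfl, hh⟩
    exact ⟨h.symm, h.symm_apply_apply x, fun z hz => (h.symm_apply_eq).2 (hh z hz).symm⟩

end Homogeneity

lemma exists_homeomorph_onePoint_apply_eq {F : Set (OnePoint ℂ)} (hF : IsOpen F)
    (hpre : IsPreconnected F) (hinf : ∞ ∉ F) {x y : OnePoint ℂ} (hx : x ∈ F) (hy : y ∈ F) :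
    ∃ h : OnePoint ℂ ≃ₜ OnePoint ℂ, h x = y ∧ ∀ z ∉ F, h z = z := by
  have hne : ∀ {z}, z ∈ F → z ≠ ∞ := fun hz => ne_of_mem_of_not_mem hz hinf
  obtain ⟨x, rfl⟩ := ne_infty_iff_exists.1 (hne hx)
  obtain ⟨y, rfl⟩ := ne_infty_iff_exists.1 (hne hy)
  have hpre' : IsPreconnected ((↑) ⁻¹' F : Set ℂ) :=
    hpre.preimage_of_isOpenMap coe_injective isOpenEmbedding_coe.isOpenMap
      fun z hz => ne_infty_iff_exists.1 (hne hz)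
  obtain ⟨h, hxy, hfix⟩ :=
    exists_homeomorph_apply_eq_of_isPreconnected (hF.preimage continuous_coe) hpre' hx hy
  refine ⟨h.onePointCongr, congrArg _ hxy, fun z hz => ?_⟩
  induction z using OnePoint.rec with
  | infty => rfl
  | coe z => exact congrArg _ (hfix z hz)

lemma IsCurve.homeomorph_comp {γ : ℝ → OnePoint ℂ} (hγ : IsCurve γ)
    (h : OnePoint ℂ ≃ₜ OnePoint ℂ) (hinf : h ∞ = ∞) : IsCurve (h ∘ γ) where
  continuous := h.continuous.comp hγ.continuous
  injective := h.injective.comp hγ.injective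
  ne_infty t := hinf ▸ h.injective.ne (hγ.ne_infty t)
  tendsto_atTop := hinf ▸ (h.continuous.tendsto ∞).comp hγ.tendsto_atTop
  tendsto_atBot := hinf ▸ (h.continuous.tendsto ∞).comp hγ.tendsto_atBot

lemma isCurve_coe_comp {g : ℝ → ℂ} (hg : IsClosedEmbedding g) :
    IsCurve fun t => (g t : OnePoint ℂ) := by
  have htendsto : Tendsto (fun t => (g t : OnePoint ℂ)) (cocompact ℝ) (𝓝 ∞) :=
    (coclosedCompact_eq_cocompact (X := ℂ) ▸ tendsto_coe_infty).comp hg.tendsto_cocompact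
  rw [cocompact_eq_atBot_atTop, tendsto_sup] at htendsto
  exact ⟨continuous_coe.comp hg.continuous, coe_injective.comp hg.injective,
    fun _ => coe_ne_infty _, htendsto.2, htendsto.1⟩

lemma exists_pseudoline_of_ne {a b : OnePoint ℂ} (ha : a ≠ ∞) (hb : b ≠ ∞) (hab : a ≠ b) :
    ∃ P : Pseudoline, a ∈ P.carrier ∧ b ∈ P.carrier := by
  obtain ⟨x, rfl⟩ := ne_infty_iff_exists.1 ha
  obtain ⟨y, rfl⟩ := ne_infty_iff_exists.1 hb
  have hxy : y - x ≠ 0 := sub_ne_zero.2 fun h => hab (congrArg _ h.symm)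
  have hline : IsClosedEmbedding fun t : ℝ => t • (y - x) + x :=
    (Homeomorph.addRight x).isClosedEmbedding.comp (isClosedEmbedding_smul_left hxy)
  obtain ⟨P, hP⟩ := (isCurve_coe_comp hline).exists_pseudoline
  refine ⟨P, P.range_subset_carrier ⟨0, ?_⟩, P.range_subset_carrier ⟨1, ?_⟩⟩ <;> simp [hP]

lemma Pseudoline.Crosses.apply_mem_closure_image {P Q : Pseudoline} (h : P.Crosses Q) {t : ℝ}
    (ht : P.γ t ∈ Q.carrier) (c : Bool) :
    P.γ t ∈ closure (P.γ '' (P.γ ⁻¹' Q.side c)) := by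
  refine image_closure_subset_closure_image P.isCurve.continuous (mem_image_of_mem P.γ ?_)
  obtain ⟨r, b, hr⟩ := h.exists_mem_iff
  obtain rfl := (hr t).2.1.1 ht
  rcases Bool.eq_or_eq_not c b with rfl | rfl
  · simp [(ext fun s => (hr s).1 : P.γ ⁻¹' Q.side c = Iio t)]
  · simp [(ext fun s => (hr s).2.2 : P.γ ⁻¹' Q.side (!b) = Ioi t)]

lemma Pseudoline.Crosses.of_mapsTo {P P' Q : Pseudoline} (h : P.Crosses Q)
    {f : OnePoint ℂ → OnePoint ℂ} (hP' : P'.γ = f ∘ P.γ)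
    (hside : ∀ b, MapsTo f (Q.side b) (Q.side b)) (hcarrier : MapsTo f Q.carrier Q.carrier) :
    P'.Crosses Q := by
  obtain ⟨t, b, hlt, heq, hgt⟩ := h
  rw [Crosses, hP']
  exact ⟨t, b, fun s hs => hside b (hlt s hs), hcarrier heq, fun s hs => hside _ (hgt s hs)⟩

lemma IsArranged.option_elim {ι : Type*} {L : ι → Pseudoline} (hL : IsArranged L) {P : Pseudoline}
    (hP : ∀ i, P.Crosses (L i)) :
    IsArranged fun o : Option ι => o.elim P L := by
  rintro (_ | i) (_ | j) hij
  · exact absurd rfl hij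
  · exact hP j
  · exact (hP i).symm
  · exact hL (ne_of_apply_ne Option.some hij)

namespace IsArranged

variable {ι : Type*} [Finite ι] {L : ι → Pseudoline} {I : Finset ι} {s : ι → Bool}
  {a b : OnePoint ℂ}

lemma exists_crosses_of_nonempty_cell (hL : IsArranged L) (hI : I.Nonempty)
    (hne : (cell L I s).Nonempty) :
    ∃ P : Pseudoline, (range P.γ ∩ cell L I s).Nonempty ∧ ∀ i, P.Crosses (L i) := by
  classical
  obtain ⟨i, hi, t, ht⟩ := hL.exists_apply_mem_side hI hne
  obtain ⟨P, hP, hPL⟩ := hL.exists_crosses_of_mem_carrier ((L i).isCurve.ne_infty t)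
    ((L i).apply_mem_carrier t)
  obtain ⟨t₀, -, ht₀⟩ := hP.resolve_left ((L i).isCurve.ne_infty t)
  have hmem : P.γ t₀ ∈ cell L (I.erase i) s := fun j hj =>
    ht₀ ▸ ht j (Finset.mem_of_mem_erase hj) (Finset.ne_of_mem_erase hj)
  have hcl : P.γ t₀ ∈ closure (P.γ '' (P.γ ⁻¹' (L i).side (s i))) :=
    (hPL i).apply_mem_closure_image (ht₀ ▸ (L i).apply_mem_carrier t) (s i)
  obtain ⟨_, hN, t, hti, rfl⟩ := mem_closure_iff.1 hcl _ (isOpen_cell _ s) hmem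
  refine ⟨P, ⟨P.γ t, mem_range_self t, fun j hj => ?_⟩, hPL⟩
  rcases eq_or_ne j i with rfl | hji
  exacts [hti, hN j (Finset.mem_erase.2 ⟨hji, hj⟩)]

/-- A homeomorphism supported in the cell of `a` maps every side to itself, so it carries a curve
through the cell to a curve through `a` without affecting crossings. -/
lemma exists_crosses_of_ne_infty [Nonempty ι] (hL : IsArranged L) (ha : a ≠ ∞) :
    ∃ P : Pseudoline, a ∈ P.carrier ∧ ∀ i, P.Crosses (L i) := by
  by_cases hk : ∃ k, a ∈ (L k).carrier
  · exact hL.exists_crosses_of_mem_carrier ha hk.choose_spec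
  push Not at hk
  cases nonempty_fintype ι
  choose s hs using fun i => Pseudoline.exists_mem_side (hk i)
  have haF : a ∈ cell L Finset.univ s := fun i _ => hs i
  have hinf : ∞ ∉ cell L Finset.univ s := infty_notMem_cell Finset.univ_nonempty s
  obtain ⟨P, ⟨_, ⟨t, rfl⟩, htF⟩, hP⟩ :=
    hL.exists_crosses_of_nonempty_cell Finset.univ_nonempty ⟨a, haF⟩
  obtain ⟨h, hta, hfix⟩ := exists_homeomorph_onePoint_apply_eq (isOpen_cell _ s)
    (hL.isPreconnected_cell _ Finset.univ_nonempty s) hinf htF haF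
  have hmaps : MapsTo h (cell L Finset.univ s) (cell L Finset.univ s) := fun z hz =>
    by_contra fun hhz => hhz ((h.injective (hfix _ hhz)).symm ▸ hz)
  obtain ⟨Q, hQ⟩ := (P.isCurve.homeomorph_comp h (hfix ∞ hinf)).exists_pseudoline
  refine ⟨Q, Q.range_subset_carrier ⟨t, hQ ▸ hta⟩, fun j => (hP j).of_mapsTo hQ ?_ ?_⟩
  · intro b z hz
    by_cases hzF : z ∈ cell L Finset.univ s
    · obtain rfl := Pseudoline.eq_of_mem_side hz (hzF j (Finset.mem_univ j))
      exact hmaps hzF j (Finset.mem_univ j)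
    · rwa [hfix z hzF]
  · intro z hz
    rwa [hfix z fun hzF => Pseudoline.notMem_carrier_of_mem_side (hzF j (Finset.mem_univ j)) hz]

lemma exists_crosses_of_mem_carrier_of_ne_infty (hL : IsArranged L) (ha : a ≠ ∞) (hb : b ≠ ∞)
    (hne : a ≠ b) (hab : ∀ i, a ∈ (L i).carrier → b ∉ (L i).carrier) {k : ι}
    (hk : a ∈ (L k).carrier) :
    ∃ P : Pseudoline, a ∈ P.carrier ∧ b ∈ P.carrier ∧ ∀ i, P.Crosses (L i) := by
  have : Nonempty ι := ⟨k⟩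
  obtain ⟨P, hbP, hP⟩ := hL.exists_crosses_of_ne_infty hb
  by_cases haP : a ∈ P.carrier
  · exact ⟨P, haP, hbP, hP⟩
  obtain ⟨Q, haQ, hbQ, hQ⟩ := (hL.option_elim hP).exists_crosses_of_mem_carrier_of_mem_carrier
    (k := Option.some k) (l := none) ha hb hne (Option.forall.2 ⟨fun h => absurd h haP, hab⟩) hk hbP
  exact ⟨Q, haQ, hbQ, fun i => hQ (Option.some i)⟩

theorem exists_crosses_of_forall_notMem_carrier (hL : IsArranged L) (ha : a ≠ ∞) (hb : b ≠ ∞)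
    (hne : a ≠ b) (hab : ∀ i, a ∈ (L i).carrier → b ∉ (L i).carrier) :
    ∃ P : Pseudoline, a ∈ P.carrier ∧ b ∈ P.carrier ∧ ∀ i, P.Crosses (L i) := by
  rcases isEmpty_or_nonempty ι with hι | hι
  · obtain ⟨P, haP, hbP⟩ := exists_pseudoline_of_ne ha hb hne
    exact ⟨P, haP, hbP, isEmptyElim⟩
  obtain ⟨P, haP, hP⟩ := hL.exists_crosses_of_ne_infty ha
  by_cases hbP : b ∈ P.carrier
  · exact ⟨P, haP, hbP, hP⟩
  obtain ⟨Q, haQ, hbQ, hQ⟩ := (hL.option_elim hP).exists_crosses_of_mem_carrier_of_ne_infty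
    (k := none) ha hb hne (Option.forall.2 ⟨fun _ => hbP, hab⟩) haP
  exact ⟨Q, haQ, hbQ, fun i => hQ (Option.some i)⟩

end IsArranged

/-! ### Back to the plane -/

lemma crossesAt_preimage_iff {X Y : Type*} [TopologicalSpace X] [TopologicalSpace Y] {f : X → Y}
    (hf : IsOpenEmbedding f) {σ τ : Set Y} {p : X} :
    CrossesAt (f ⁻¹' σ) (f ⁻¹' τ) p ↔ CrossesAt σ τ (f p) := by
  refine and_congr_right fun _ => and_congr_right fun _ => ⟨fun h U hU => ?_, fun h U hU => ?_⟩
  · obtain ⟨V, hV, hVU, C, C', hsdiff, hdisj, hC, hC', hτC, hτC'⟩ :=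
      h (f ⁻¹' U) (hf.continuous.continuousAt hU)
    have himage : ∀ {C}, (f ⁻¹' τ ∩ C).Nonempty → (τ ∩ f '' C).Nonempty :=
      fun ⟨x, hx, hxC⟩ => ⟨f x, hx, mem_image_of_mem f hxC⟩
    refine ⟨f '' V, hf.image_mem_nhds.2 hV, image_subset_iff.2 hVU, f '' C, f '' C', ?_,
      (disjoint_image_iff hf.injective).2 hdisj, hC.image f hf.continuous.continuousOn,
      hC'.image f hf.continuous.continuousOn, himage hτC, himage hτC'⟩
    rw [← image_union, ← hsdiff, image_sdiff_preimage]
  · obtain ⟨V, hV, hVU, C, C', hsdiff, hdisj, hC, hC', hτC, hτC'⟩ :=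
      h (f '' U) (hf.image_mem_nhds.2 hU)
    have hrange : C ⊆ range f ∧ C' ⊆ range f := union_subset_iff.1 <|
      hsdiff ▸ sdiff_subset.trans (hVU.trans (image_subset_range f U))
    have hpreimage : ∀ {C}, C ⊆ range f → (τ ∩ C).Nonempty → (f ⁻¹' τ ∩ f ⁻¹' C).Nonempty := by
      rintro C hC ⟨_, hy, hyC⟩
      obtain ⟨x, rfl⟩ := hC hyC
      exact ⟨x, hy, hyC⟩
    exact ⟨f ⁻¹' V, hf.continuous.continuousAt hV,
      (preimage_mono hVU).trans (preimage_image_eq U hf.injective).subset, f ⁻¹' C, f ⁻¹' C',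
      by rw [← preimage_sdiff, hsdiff, preimage_union], hdisj.preimage f,
      hC.preimage_of_isOpenMap hf.injective hf.isOpenMap hrange.1,
      hC'.preimage_of_isOpenMap hf.injective hf.isOpenMap hrange.2,
      hpreimage hrange.1 hτC, hpreimage hrange.2 hτC'⟩

lemma ConnectedImKleinenAt.exists_isPreconnected {X : Type*} [TopologicalSpace X] {W U : Set X}
    {u : X} (h : ConnectedImKleinenAt W u) (hU : U ∈ 𝓝 u) :
    ∃ C ⊆ U ∩ W, IsPreconnected C ∧ C ∈ 𝓝[W] u := by
  obtain ⟨V, hV, hVU, hconn⟩ := h U hU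
  rcases (V ∩ W).eq_empty_or_nonempty with hVW | ⟨x, hx⟩
  · exact ⟨∅, empty_subset _, isPreconnected_empty,
      hVW ▸ inter_mem (mem_nhdsWithin_of_mem_nhds hV) self_mem_nhdsWithin⟩
  · have hxU : x ∈ U ∩ W := ⟨hVU hx.1, hx.2⟩
    refine ⟨connectedComponentIn (U ∩ W) x, connectedComponentIn_subset _ _,
      isPreconnected_connectedComponentIn, ?_⟩
    refine mem_of_superset (inter_mem (mem_nhdsWithin_of_mem_nhds hV) self_mem_nhdsWithin) ?_
    exact fun y hy => (connectedIn_iff_mem_connectedComponentIn hxU).1 (hconn x hx y hy)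

namespace Pseudoline

variable {P Q : Pseudoline} {u : OnePoint ℂ}

lemma connectedImKleinenAt_side (P : Pseudoline) (b : Bool) (u : OnePoint ℂ) :
    ConnectedImKleinenAt (P.side b) u := by
  have hP : IsArranged fun _ : Unit => P := fun i j hij => absurd (Subsingleton.elim i j) hij
  simpa [cell] using hP.connectedImKleinenAt_cell {()} (fun _ => b) u

lemma Crosses.crossesAt (h : Q.Crosses P) (hP : u ∈ P.carrier) (hQ : u ∈ Q.carrier)
    (hu : u ≠ ∞) : CrossesAt P.carrier Q.carrier u := by
  refine ⟨hP, hQ, fun U hU => ?_⟩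
  obtain ⟨t, -, rfl⟩ := hQ.resolve_left hu
  have hlocal : ∀ b, ∃ C ⊆ U ∩ P.side b, IsPreconnected C ∧ C ∈ 𝓝[P.side b] Q.γ t := fun b =>
    (P.connectedImKleinenAt_side b _).exists_isPreconnected hU
  choose C hCU hC hCnhds using hlocal
  have hmeets : ∀ b, (Q.carrier ∩ C b).Nonempty := by
    intro b
    obtain ⟨N, hN, hNC⟩ := mem_nhdsWithin_iff_exists_mem_nhds_inter.1 (hCnhds b)
    obtain ⟨_, hzN, s, hs, rfl⟩ := mem_closure_iff_nhds.1 (h.apply_mem_closure_image hP b) N hN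
    exact ⟨Q.γ s, Q.apply_mem_carrier s, hNC ⟨hzN, hs⟩⟩
  have hdisj : ∀ b, Disjoint (C b) P.carrier := fun b =>
    disjoint_left.2 fun z hz => notMem_carrier_of_mem_side (hCU b hz).2
  refine ⟨C true ∪ C false ∪ U ∩ P.carrier, ?_, ?_, C true, C false, ?_, ?_, hC _, hC _, hmeets _,
    hmeets _⟩
  · filter_upwards [hU, mem_nhdsWithin_iff_eventually.1 (hCnhds true),
      mem_nhdsWithin_iff_eventually.1 (hCnhds false)] with z hzU htrue hfalse
    by_cases hz : z ∈ P.carrier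
    · exact Or.inr ⟨hzU, hz⟩
    · exact Or.inl ((mem_side_or_mem_side_not hz true).imp htrue hfalse)
  · exact union_subset (union_subset (fun _ h => (hCU _ h).1) fun _ h => (hCU _ h).1)
      inter_subset_left
  · rw [union_sdiff_distrib, sdiff_eq_empty.2 inter_subset_right, union_empty]
    exact ((hdisj true).union_left (hdisj false)).sdiff_eq_left
  · exact disjoint_left.2 fun z h h' => notMem_side_not (hCU true h).2 (hCU false h').2

lemma exists_inter_side_nonempty_of_crossesAt {τ : Set (OnePoint ℂ)}
    (h : CrossesAt P.carrier τ u) :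
    ∃ b, (τ ∩ P.side b).Nonempty ∧ (τ ∩ P.side (!b)).Nonempty := by
  obtain ⟨hu, -, h⟩ := h
  obtain ⟨V, hV, -, C, C', hsdiff, -, hC, hC', ⟨x, hxτ, hx⟩, y, hyτ, hy⟩ := h univ univ_mem
  obtain ⟨hdisj, hdisj'⟩ : Disjoint C P.carrier ∧ Disjoint C' P.carrier :=
    disjoint_union_left.1 (hsdiff ▸ disjoint_sdiff_left)
  obtain ⟨b, hb⟩ := exists_mem_side (disjoint_left.1 hdisj hx)
  refine ⟨b, ⟨x, hxτ, hb⟩, y, hyτ, mem_side_not (disjoint_left.1 hdisj' hy) fun hyb => ?_⟩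
  obtain ⟨z, hzV, hz⟩ := mem_closure_iff_nhds.1 (P.carrier_subset_closure_side (!b) hu) V hV
  have hside : V \ P.carrier ⊆ P.side b := hsdiff ▸ union_subset
    (subset_side_of_isPreconnected hC hdisj hx hb) (subset_side_of_isPreconnected hC' hdisj' hy hyb)
  exact notMem_side_not (hside ⟨hzV, notMem_carrier_of_mem_side hz⟩) hz

lemma Crosses.of_crossesAt (h : CrossesAt P.carrier Q.carrier u)
    (hinter : (range Q.γ ∩ P.carrier).Subsingleton) : Q.Crosses P := by
  have hrange : ∀ {c}, (Q.carrier ∩ P.side c).Nonempty → (range Q.γ ∩ P.side c).Nonempty := by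
    rintro c ⟨z, rfl | ⟨t, -, rfl⟩, hz⟩
    · exact absurd P.infty_mem_carrier (notMem_carrier_of_mem_side hz)
    · exact ⟨Q.γ t, mem_range_self t, hz⟩
  obtain ⟨b, hb, hb'⟩ := exists_inter_side_nonempty_of_crossesAt h
  exact .of_crossesAtMostOnce
    ⟨hrange hb, hrange hb', hinter, fun hbb => absurd hbb (Bool.self_ne_not b)⟩

end Pseudoline

/-- The plane identified with the complex numbers. -/
def planeHomeomorph : Plane ≃ₜ ℂ :=
  Complex.orthonormalBasisOneI.repr.symm.toHomeomorph

/-- The embedding of the plane in the sphere as the complement of `∞`. -/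
def toSphere (x : Plane) : OnePoint ℂ :=
  planeHomeomorph x

lemma isOpenEmbedding_toSphere : IsOpenEmbedding toSphere :=
  isOpenEmbedding_coe.comp planeHomeomorph.isOpenEmbedding

lemma toSphere_ne_infty (x : Plane) : toSphere x ≠ ∞ :=
  coe_ne_infty _

lemma exists_toSphere_eq {z : OnePoint ℂ} (hz : z ≠ ∞) : ∃ x, toSphere x = z := by
  obtain ⟨w, rfl⟩ := ne_infty_iff_exists.1 hz
  exact ⟨planeHomeomorph.symm w, by simp [toSphere]⟩

lemma comap_toSphere_nhds_infty : comap toSphere (𝓝 ∞) = cocompact Plane := by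
  rw [← planeHomeomorph.comap_cocompact, ← coclosedCompact_eq_cocompact, ← comap_coe_nhds_infty,
    comap_comap]
  rfl

lemma exists_isClosedEmbedding_toSphere_eq {γ : ℝ → OnePoint ℂ} (hγ : IsCurve γ) :
    ∃ g : ℝ → Plane, IsClosedEmbedding g ∧ ∀ t, toSphere (g t) = γ t := by
  choose g hg using fun t => exists_toSphere_eq (hγ.ne_infty t)
  have hcomp : toSphere ∘ g = γ := funext hg
  have hcont : Continuous g :=
    isOpenEmbedding_toSphere.isInducing.continuous_iff.2 (hcomp ▸ hγ.continuous)
  have hinj : Function.Injective g := .of_comp (f := toSphere) (hcomp ▸ hγ.injective)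
  have htendsto : Tendsto g (cocompact ℝ) (cocompact Plane) := by
    rw [← comap_toSphere_nhds_infty, tendsto_comap_iff, hcomp, cocompact_eq_atBot_atTop]
    exact hγ.tendsto_atBot.sup hγ.tendsto_atTop
  exact ⟨g, .of_continuous_injective_isClosedMap hcont hinj
    (isProperMap_iff_tendsto_cocompact.2 ⟨hcont, htendsto⟩).isClosedMap, hg⟩

namespace Pseudoline

variable {P Q : Pseudoline} {p : Plane}

/-- The part of a pseudoline on the sphere that lies in the plane. -/
def trace (P : Pseudoline) : Set Plane :=
  toSphere ⁻¹' P.carrier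

lemma mem_trace_iff : p ∈ P.trace ↔ ∃ t, P.γ t = toSphere p := by
  simp [trace, carrier, curveImage, toSphere_ne_infty]

lemma trace_eq_range {g : ℝ → Plane} (hg : ∀ t, toSphere (g t) = P.γ t) : P.trace = range g := by
  ext p
  simp only [mem_trace_iff, ← hg, isOpenEmbedding_toSphere.injective.eq_iff, mem_range]

lemma exists_trace_eq {σ : Set Plane} (hσ : IsPseudoline σ) : ∃ P : Pseudoline, P.trace = σ := by
  obtain ⟨hclosed, ⟨e⟩, -⟩ := hσ
  let g : ℝ → Plane := fun t => e.symm t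
  have hg : IsClosedEmbedding g :=
    hclosed.isClosedEmbedding_subtypeVal.comp e.symm.isClosedEmbedding
  obtain ⟨P, hP⟩ :=
    (isCurve_coe_comp (planeHomeomorph.isClosedEmbedding.comp hg)).exists_pseudoline
  refine ⟨P, (trace_eq_range fun t => (congrFun hP t).symm).trans ?_⟩
  exact (e.symm.surjective.range_comp Subtype.val).trans Subtype.range_val

lemma isPseudoline_trace (P : Pseudoline) : IsPseudoline P.trace := by
  obtain ⟨g, hg, hgP⟩ := exists_isClosedEmbedding_toSphere_eq P.isCurve
  refine ⟨?_, ?_, fun h => P.isCurve.not_isPreconnected_compl ?_⟩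
  · exact trace_eq_range hgP ▸ hg.isClosed_range
  · exact trace_eq_range hgP ▸ ⟨hg.isEmbedding.toHomeomorph.symm⟩
  · have himage : toSphere '' P.traceᶜ = P.carrierᶜ := image_preimage_eq_of_subset fun z hz =>
      exists_toSphere_eq (ne_infty_of_notMem_curveImage hz)
    exact himage ▸ h.image toSphere isOpenEmbedding_toSphere.continuous.continuousOn

lemma Crosses.exists_trace_inter_eq_singleton (h : P.Crosses Q) :
    ∃ p, P.trace ∩ Q.trace = {p} ∧ CrossesAt P.trace Q.trace p ∧ CrossesAt Q.trace P.trace p := by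
  obtain ⟨t, b, ht⟩ := h.exists_mem_iff
  obtain ⟨p, hp⟩ := exists_toSphere_eq (P.isCurve.ne_infty t)
  have hpP : toSphere p ∈ P.carrier := hp ▸ P.apply_mem_carrier t
  have hpQ : toSphere p ∈ Q.carrier := hp ▸ (ht t).2.1.2 rfl
  refine ⟨p, ?_,
    (crossesAt_preimage_iff isOpenEmbedding_toSphere).2
      (h.symm.crossesAt hpP hpQ (toSphere_ne_infty p)),
    (crossesAt_preimage_iff isOpenEmbedding_toSphere).2
      (h.crossesAt hpQ hpP (toSphere_ne_infty p))⟩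
  refine Subset.antisymm (fun q hq => ?_) (singleton_subset_iff.2 ⟨hpP, hpQ⟩)
  obtain ⟨s, hs⟩ := mem_trace_iff.1 hq.1
  obtain rfl := (ht s).2.1.1 (hs ▸ hq.2)
  exact isOpenEmbedding_toSphere.injective (hs.symm.trans hp.symm)

lemma Crosses.of_crossesAt_trace (hinter : (P.trace ∩ Q.trace).Subsingleton)
    (h : CrossesAt P.trace Q.trace p) : Q.Crosses P := by
  refine .of_crossesAt ((crossesAt_preimage_iff isOpenEmbedding_toSphere).1 h) ?_
  refine (hinter.image toSphere).anti ?_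
  rintro _ ⟨⟨t, rfl⟩, ht⟩
  obtain ⟨q, hq⟩ := exists_toSphere_eq (Q.isCurve.ne_infty t)
  exact ⟨q, ⟨mem_preimage.2 (hq ▸ ht), mem_trace_iff.2 ⟨t, hq.symm⟩⟩, hq⟩

end Pseudoline

lemma isArrangement_insert [DecidableEq (Set Plane)] {A : Finset (Set Plane)} {σ : Set Plane}
    (hA : IsArrangement A) (hσ : IsPseudoline σ)
    (h : ∀ τ ∈ A, ∃ p, σ ∩ τ = {p} ∧ CrossesAt σ τ p ∧ CrossesAt τ σ p) :
    IsArrangement (insert σ A) := by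
  have : Std.Symm fun σ τ : Set Plane =>
      ∃ p, σ ∩ τ = {p} ∧ CrossesAt σ τ p ∧ CrossesAt τ σ p :=
    ⟨fun σ τ ⟨p, hp, hστ, hτσ⟩ => ⟨p, inter_comm σ τ ▸ hp, hτσ, hστ⟩⟩
  refine ⟨(Finset.forall_mem_insert _ _ _).2 ⟨hσ, hA.1⟩, ?_⟩
  have hpairwise := pairwise_insert_of_symm.2 ⟨hA.2, fun τ hτ _ => h τ hτ⟩
  rwa [← Finset.coe_insert] at hpairwise

end Levi

open scoped Classical in
/-- **Levi's Enlargement Lemma.** Given an arrangement of pseudolines `A` and two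
distinct points `a`, `b` of the plane not both on any pseudoline of `A`, there is a
pseudoline through `a` and `b` extending `A` to an arrangement of pseudolines. -/
theorem levi_enlargement (A : Finset (Set Plane)) (hA : IsArrangement A)
    (a b : Plane) (hab : a ≠ b) (h : ∀ σ ∈ A, ¬(a ∈ σ ∧ b ∈ σ)) :
    ∃ σ₀ : Set Plane, a ∈ σ₀ ∧ b ∈ σ₀ ∧ IsArrangement (insert σ₀ A) := by
  choose L hL using fun σ : A => Levi.Pseudoline.exists_trace_eq (hA.1 σ σ.2)
  have harranged : Levi.IsArranged L := fun σ τ hne => by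
    obtain ⟨p, hp, hτσ, -⟩ := hA.2 τ τ.2 σ σ.2 (Subtype.coe_ne_coe.2 hne.symm)
    rw [← hL σ, ← hL τ] at hp hτσ
    exact .of_crossesAt_trace (hp ▸ subsingleton_singleton) hτσ
  have hnotMem : ∀ σ : A, a ∈ (L σ).trace → b ∉ (L σ).trace := fun σ ha hb =>
    h σ σ.2 (hL σ ▸ ⟨ha, hb⟩)
  obtain ⟨P, haP, hbP, hP⟩ := harranged.exists_crosses_of_forall_notMem_carrier
    (Levi.toSphere_ne_infty a) (Levi.toSphere_ne_infty b)
    (Levi.isOpenEmbedding_toSphere.injective.ne hab) hnotMem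
  refine ⟨P.trace, haP, hbP, Levi.isArrangement_insert hA P.isPseudoline_trace fun σ hσ => ?_⟩
  simpa only [hL] using (hP ⟨σ, hσ⟩).exists_trace_inter_eq_singleton

end
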